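/- Let 𝔞, 𝔟 be fractional ideals of F, let z = x + y j_F ∈ D_F with x ∈ F_ℝ and y ∈ F_ℝ^×, and set Λ := 𝔞z + 𝔟. Then for every s ∈ ℂ with Re(s) > 1: Ê(Λ, s) = ((N(𝔞)/N(𝔟))|N(y)|)^s · ξ_F(2s, 𝔟) + ((N(𝔞)/N(𝔟))|N(y)|)^{1−s} · ξ_F(2s−1, 𝔞) + V(𝔞)^s V(𝔟)^{s−1} |N(y)|^s · Σ_{(α,β*)} e^{2πi Tr_{F/ℚ}(x α β*)} · B_F(α y, β*, s − 1/2), where (α, β*) runs over a set of representatives of the pairs with α ∈ 𝔞∖{0}, β* ∈ 𝔟*∖{0}, modulo the equivalence (α, β*) ~ (α ε, β* ε^{−1}) for ε ∈ U_F, and the sum converges absolutely. -/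

import Mathlib

/-!
For `λ` of nonzero norm, `Γ_F(2s) ‖λ‖^{-2s} = ∫_{T_F} f(tλ) |N(t)|^{2s} d^×t` (`gamma_orbit`), so
`Ê(Λ, s)` is `V(Λ)^s` times the sum of these integrals over representatives `λ = αz + β` of the
unit orbits of `Λ`. The orbits split into those with `α = 0`, which give `ξ_F(2s, 𝔟)`, and those
with `α` in a set of representatives of `𝔞 ∖ {0}` modulo units and `β ∈ 𝔟` arbitrary
(`lattice_equiv`), because a unit fixing `α ≠ 0` is trivial.

For `α ≠ 0` the Gaussian separates: `f(t(αz + β)) = f(tαy) f(t(αx + β))` (`fD_orbit`). Poisson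
summation over `β ∈ 𝔟` (`ideal_poisson`), together with the self-duality of the Gaussian
(`fourier_fR`), replaces the sum over `β` by
`V(𝔟)⁻¹ |N(t)|⁻¹ ∑_{β* ∈ 𝔟*} exp(2πi Tr(αxβ*)) f(t⁻¹β*)`. Integrating termwise, `β* = 0` gives
`Γ_F(2s - 1) |N(αy)|^{1 - 2s}`, hence `ξ_F(2s - 1, 𝔞)`, and `β* ≠ 0` gives `B_F(αy, β*, s - 1/2)`.
Moving a pair `(α, β*)` by a unit does not change its term, so any set of representatives of the
pairs may be used (`pairs_equiv`, `fourierTerm_unit`).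

The interchange of sums and integrals rests on `tsum_Ker_lt_top`: by the inequality
`t² + w² ≥ t²/4 + |tw|` the product `f(t) f(t⁻¹c)` decays exponentially in `c`, so the sum over `β*`
is bounded by a sum over the lattice `𝔞𝔟*`, and the remaining sum over `α` is the partial zeta
function of `𝔞` at `2 Re(s) - 1 > 1`, which converges by the linear growth of the number of ideals
of bounded norm (`summable_norm`). Through Poisson summation for positive terms (`poisson_le`) the
same bound controls the sum over the lattice.

The constants come from `V(Λ) = V(𝔞) V(𝔟) |N(y)|` (`covolume`). The measure on `D_F` is compared
with the product measure on `F_ℝ²` by computing Gaussian integrals (`measD_eq_map`), both being Haar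
measures, and `(u, w) ↦ uz + w` differs from the standard coordinates by a shear of determinant
`N(y)`.
-/
noncomputable section
open NumberField MeasureTheory
open scoped nonZeroDivisors

set_option linter.unusedSectionVars false
set_option linter.unnecessarySeqFocus false

namespace Hecke

instance : MeasurableSpace (Quaternion ℝ) := borel _
instance : BorelSpace (Quaternion ℝ) := ⟨rfl⟩

/-- The Haar (Lebesgue) measure on Hamilton's quaternions `ℍ ≅ ℝ⁴`. -/
def volH : Measure (Quaternion ℝ) :=
  Measure.map (Quaternion.linearIsometryEquivTuple.symm) volume

instance : SigmaFinite volH := by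
  unfold volH
  exact (Quaternion.linearIsometryEquivTuple.symm.toHomeomorph.toMeasurableEquiv).sigmaFinite_map

noncomputable instance (F : Type) [Field F] [NumberField F] :
    Fintype {v : InfinitePlace F // v.IsReal} := by classical exact Subtype.fintype _

noncomputable instance (F : Type) [Field F] [NumberField F] :
    Fintype {v : InfinitePlace F // v.IsComplex} := by classical exact Subtype.fintype _

variable (F : Type) [Field F] [NumberField F]

/-- `F_ℝ = F ⊗_ℚ ℝ = ∏_v F_v`. -/
abbrev RS := ({v : InfinitePlace F // v.IsReal} → ℝ) × ({v : InfinitePlace F // v.IsComplex} → ℂ)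

/-- `D_F = ∏_v D_v` where `D_v = ℂ` for real `v` and `D_v = ℍ` for complex `v`. -/
abbrev DS := ({v : InfinitePlace F // v.IsReal} → ℂ) ×
  ({v : InfinitePlace F // v.IsComplex} → Quaternion ℝ)

/-- The Haar measure on `F_ℝ`: Lebesgue at real places, twice Lebesgue at complex places. -/
def measR : Measure (RS F) :=
  (Measure.pi fun _ => (volume : Measure ℝ)).prod (Measure.pi fun _ => (2 : ENNReal) • (volume : Measure ℂ))

/-- The Haar measure on `D_F`: Lebesgue at real places, 4 times Lebesgue at complex places. -/
def measD : Measure (DS F) :=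
  (Measure.pi fun _ => (volume : Measure ℂ)).prod (Measure.pi fun _ => (4 : ENNReal) • volH)

/-- `‖z‖ = ∏_{v real} |z_v| ∏_{v complex} |z_v|²` on `D_F`. -/
def normD (z : DS F) : ℝ := (∏ v, ‖z.1 v‖) * ∏ v, ‖z.2 v‖ ^ 2

/-- `|N(x)| = ∏_{v real} |x_v| ∏_{v complex} |x_v|²` on `F_ℝ`. -/
def normR (x : RS F) : ℝ := (∏ v, |x.1 v|) * ∏ v, ‖x.2 v‖ ^ 2


/-- The structure map `F_ℝ → D_F` (componentwise `ℝ ↪ ℂ` resp. `ℂ ↪ ℍ`). -/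
def structureMap : RS F →+* DS F :=
  RingHom.prod
    ((Pi.ringHom fun v => Complex.ofRealHom.comp (Pi.evalRingHom (fun _ => ℝ) v)).comp
      (RingHom.fst _ _))
    ((Pi.ringHom fun v => Quaternion.ofComplex.toRingHom.comp (Pi.evalRingHom (fun _ => ℂ) v)).comp
      (RingHom.snd _ _))

/-- The map `F → D_F`. -/
def FtoD : F →+* DS F := (structureMap F).comp (NumberField.mixedEmbedding F)

/-- The element `j_F = (j_v)_v ∈ D_F`. -/
def jF : DS F := (fun _ => Complex.I, fun _ => ⟨0, 0, 1, 0⟩)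

/-- The `x`-coordinate of `z = x + y j_F ∈ D_F` (`x ∈ F_ℝ`). -/
def projX (z : DS F) : RS F :=
  (fun v => (z.1 v).re, fun v => ⟨(z.2 v).re, (z.2 v).imI⟩)

/-- The `y`-coordinate of `z = x + y j_F ∈ D_F` (`y ∈ F_ℝ`). -/
def projY (z : DS F) : RS F :=
  (fun v => (z.1 v).im, fun v => ⟨(z.2 v).imJ, (z.2 v).imK⟩)

/-- The trace `Tr_{F/ℚ}` extended to `F_ℝ`. -/
def TrR (x : RS F) : ℝ := (∑ v, x.1 v) + ∑ v, 2 * (x.2 v).re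


/-- The character `ψ(x + y j_F) = exp(2πi Tr_{F/ℚ}(x))` on `D_F`. -/
def psiD (z : DS F) : ℂ := Complex.exp (2 * Real.pi * Complex.I * TrR F (projX F z))

lemma projX_add (z w : DS F) : projX F (z + w) = projX F z + projX F w := by
  unfold projX
  refine Prod.ext (funext fun v => ?_) (funext fun v => ?_)
  · simp
  · simp only [Prod.snd_add, Pi.add_apply, Prod.fst_add]
    exact Complex.ext (by simp) (by simp)

lemma TrR_add (x y : RS F) : TrR F (x + y) = TrR F x + TrR F y := by
  unfold TrR
  simp [Finset.sum_add_distrib, mul_add]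
  ring

lemma psiD_add (z w : DS F) : psiD F (z + w) = psiD F z * psiD F w := by
  unfold psiD
  rw [projX_add, TrR_add, ← Complex.exp_add]
  push_cast
  ring_nf

lemma psiD_zero : psiD F 0 = 1 := by
  have h0 : projX F (0 : DS F) = 0 := by
    unfold projX
    refine Prod.ext (funext fun v => ?_) (funext fun v => ?_) <;>
      simp <;> rfl
  unfold psiD
  rw [h0]
  simp [TrR]

/-- The dual lattice `Λ* = {w : ψ(λ w) = 1 for all λ ∈ Λ}`. -/
def dualLat (Λ : AddSubgroup (DS F)) : AddSubgroup (DS F) where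
  carrier := {w | ∀ l ∈ Λ, psiD F (l * w) = 1}
  zero_mem' := by
    intro l _
    rw [mul_zero, psiD_zero]
  add_mem' := by
    intro a b ha hb l hl
    rw [mul_add, psiD_add, ha l hl, hb l hl, mul_one]
  neg_mem' := by
    intro a ha l hl
    have := psiD_add F (l * a) (l * -a)
    rw [← mul_add, add_neg_cancel, mul_zero, psiD_zero, ha l hl, one_mul] at this
    exact this.symm


/-- An `O_F`-lattice in `D_F`: a discrete cocompact `O_F`-submodule. -/
def IsOFLattice (Λ : AddSubgroup (DS F)) : Prop :=
  (∀ c : 𝓞 F, ∀ z ∈ Λ, FtoD F (c : F) * z ∈ Λ) ∧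
    DiscreteTopology Λ ∧ CompactSpace (DS F ⧸ Λ)

/-- Non-degeneracy: no nonzero lattice point has `‖λ‖ = 0`. -/
def Nondeg (Λ : AddSubgroup (DS F)) : Prop :=
  ∀ l ∈ Λ, l ≠ 0 → normD F l ≠ 0

/-- `V(Λ) = V`: some fundamental domain of `Λ` in `D_F` has measure `V`. -/
def HasVol (Λ : AddSubgroup (DS F)) (V : ℝ) : Prop :=
  ∃ s : Set (DS F), IsAddFundamentalDomain Λ s (measD F) ∧ measD F s = ENNReal.ofReal V

/-- `R` is a set of representatives of the nonzero `U_F`-orbits in `Λ`. -/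
def IsRepr (Λ : AddSubgroup (DS F)) (R : Set (DS F)) : Prop :=
  (∀ r ∈ R, r ∈ Λ) ∧ (0 : DS F) ∉ R ∧
    ∀ l ∈ Λ, l ≠ 0 → ∃! r, r ∈ R ∧ ∃ ε : (𝓞 F)ˣ, FtoD F ((ε : 𝓞 F) : F) * r = l

/-- The Eisenstein series `E(Λ, s) = Σ_{λ ∈ Λ/U_F} V(Λ)^s / ‖λ‖^{2s}`, written in terms
of the covolume `V` of `Λ` and a set `R` of representatives of the nonzero `U_F`-orbits. -/
def Eis (V : ℝ) (R : Set (DS F)) (s : ℂ) : ℂ :=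
  ∑' r : R, (V : ℂ) ^ s / ((normD F (r : DS F) : ℂ)) ^ (2 * s)

/-- `T_F = F_ℝ^×`. -/
def TF : Set (RS F) := {x | IsUnit x}

/-- The multiplicative Haar measure `d^×t = ∏_v dt_v/|t_v|^{n_v}` on `F_ℝ`. -/
def measT : Measure (RS F) :=
  (measR F).withDensity fun t => ENNReal.ofReal (1 / normR F t)

/-- `f(z) = ∏_v exp(-n_v π |z_v|²)` on `D_F`. -/
def fD (z : DS F) : ℝ :=
  (∏ v, Real.exp (-(Real.pi) * ‖z.1 v‖ ^ 2)) * ∏ v, Real.exp (-(2 * Real.pi) * ‖z.2 v‖ ^ 2)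

/-- `f` restricted to `F_ℝ`. -/
def fR (x : RS F) : ℝ := fD F (structureMap F x)

/-- `Γ_F(s) = ∫_{T_F} f(t) |N(t)|^s d^×t`. -/
def GammaF (s : ℂ) : ℂ :=
  ∫ t in TF F, (fR F t : ℂ) * (normR F t : ℂ) ^ s ∂(measT F)

/-- The completed Eisenstein series `Ê(Λ, s) = Γ_F(2s) E(Λ, s)`. -/
def Ehat (V : ℝ) (R : Set (DS F)) (s : ℂ) : ℂ := GammaF F (2 * s) * Eis F V R s

/-- `D` is a (strict) fundamental domain for the multiplicative action of `U_F` on `T_F`. -/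
def IsUnitsFD (D : Set (RS F)) : Prop :=
  D ⊆ TF F ∧ ∀ t ∈ TF F, ∃! ε : (𝓞 F)ˣ,
    NumberField.mixedEmbedding F (((ε : 𝓞 F) : F)) * t ∈ D

/-- `d_F`, the absolute value of the discriminant. -/
def dF : ℕ := (NumberField.discr F).natAbs

/-- `R` is a set of representatives of the nonzero `U_F`-orbits in the fractional ideal `𝔞`. -/
def IsIdealRepr (a : FractionalIdeal (𝓞 F)⁰ F) (R : Set F) : Prop :=
  (∀ r ∈ R, r ∈ a) ∧ (0 : F) ∉ R ∧
    ∀ α ∈ a, α ≠ 0 → ∃! r, r ∈ R ∧ ∃ ε : (𝓞 F)ˣ, ((ε : 𝓞 F) : F) * r = α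

/-- The completed partial zeta function
`ξ_F(s, 𝔞) = d_F^{s/2} Γ_F(s) N(𝔞)^s Σ_{α ∈ 𝔞/U_F} |N(α)|^{-s}`, written in terms of a
set `R` of representatives of the nonzero `U_F`-orbits in `𝔞`. -/
def xiF (s : ℂ) (a : FractionalIdeal (𝓞 F)⁰ F) (R : Set F) : ℂ :=
  (dF F : ℂ) ^ (s / 2) * GammaF F s * (FractionalIdeal.absNorm a : ℂ) ^ s *
    ∑' r : R, ((|Algebra.norm ℚ (r : F)| : ℚ) : ℂ) ^ (-s)

/-- The constant `C_F = 2^{r₁} (2π)^{r₂} R_F / w_F`. -/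
def CF : ℝ :=
  2 ^ (Fintype.card {v : InfinitePlace F // v.IsReal}) *
    (2 * Real.pi) ^ (Fintype.card {v : InfinitePlace F // v.IsComplex}) *
    NumberField.Units.regulator F / (NumberField.Units.torsionOrder F : ℕ)

/-- The dual ideal `𝔟* = {x ∈ F : Tr_{F/ℚ}(βx) ∈ ℤ for all β ∈ 𝔟}`. -/
def dualIdealSet (b : FractionalIdeal (𝓞 F)⁰ F) : Set F :=
  {x | ∀ β ∈ b, ∃ n : ℤ, Algebra.trace ℚ F (β * x) = n}

/-- `B_F(a, b, s) = ∫_{T_F} f(ta) f(t⁻¹ b) |N(t)|^{2s} d^×t`. -/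
def BF (a b : RS F) (s : ℂ) : ℂ :=
  ∫ t in TF F, ((fR F (t * a) * fR F (Ring.inverse t * b) : ℝ) : ℂ) *
    (normR F t : ℂ) ^ (2 * s) ∂(measT F)

/-- The lattice `Λ = 𝔞 z + 𝔟`. -/
def latAB (a b : FractionalIdeal (𝓞 F)⁰ F) (z : DS F) : AddSubgroup (DS F) where
  carrier := {w | ∃ α ∈ a, ∃ β ∈ b, w = FtoD F α * z + FtoD F β}
  zero_mem' := ⟨0, Submodule.zero_mem _, 0, Submodule.zero_mem _, by simp⟩
  add_mem' := by
    rintro w₁ w₂ ⟨α₁, hα₁, β₁, hβ₁, rfl⟩ ⟨α₂, hα₂, β₂, hβ₂, rfl⟩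
    exact ⟨α₁ + α₂, Submodule.add_mem _ hα₁ hα₂, β₁ + β₂, Submodule.add_mem _ hβ₁ hβ₂, by
      rw [map_add, map_add, add_mul]; abel⟩
  neg_mem' := by
    rintro w ⟨α, hα, β, hβ, rfl⟩
    exact ⟨-α, Submodule.neg_mem _ hα, -β, Submodule.neg_mem _ hβ, by rw [map_neg, map_neg, neg_mul]; abel⟩

/-- `P` is a set of representatives of pairs `(α, β*) ∈ (𝔞∖{0}) × (𝔟*∖{0})` modulo
`(α, β*) ∼ (αε, β*ε⁻¹)`, `ε ∈ U_F`. -/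
def IsPairRepr (a b : FractionalIdeal (𝓞 F)⁰ F) (P : Set (F × F)) : Prop :=
  (∀ p ∈ P, p.1 ∈ a ∧ p.1 ≠ 0 ∧ p.2 ∈ dualIdealSet F b ∧ p.2 ≠ 0) ∧
    ∀ α, α ∈ a → α ≠ 0 → ∀ β, β ∈ dualIdealSet F b → β ≠ 0 →
      ∃! p, p ∈ P ∧ ∃ ε : (𝓞 F)ˣ,
        α = p.1 * ((ε : 𝓞 F) : F) ∧ β = p.2 * (((ε⁻¹ : (𝓞 F)ˣ) : 𝓞 F) : F)

/-- The function `h_F(z, 𝔞, 𝔟)`, defined through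
`(C_F/2) h_F = (N𝔞/N𝔟)|N(y)| ξ_F(2,𝔟) + V(𝔞)|N(y)| Σ e^{2πi Tr(xαβ*)} B_F(αy, β*, 1/2)`;
`Rb` is a set of representatives for `ξ_F(·, 𝔟)` and `P` one for the pair sum. -/
def hF (z : DS F) (a b : FractionalIdeal (𝓞 F)⁰ F) (Rb : Set F) (P : Set (F × F)) : ℂ :=
  (2 / CF F) *
    (((FractionalIdeal.absNorm a / FractionalIdeal.absNorm b : ℚ) : ℂ) *
        (normR F (projY F z) : ℂ) * xiF F 2 b Rb +
      ((Real.sqrt (dF F) * (FractionalIdeal.absNorm a : ℚ) * normR F (projY F z) : ℝ) : ℂ) *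
        ∑' p : P,
          Complex.exp (2 * Real.pi * Complex.I *
            (TrR F (projX F z * NumberField.mixedEmbedding F (p : F × F).1 *
              NumberField.mixedEmbedding F (p : F × F).2))) *
          BF F (projY F z * NumberField.mixedEmbedding F (p : F × F).1)
            (NumberField.mixedEmbedding F (p : F × F).2) (1 / 2))


section Quadratic

variable (K : Type) [Field K] [NumberField K] [Algebra F K]

/-- `U_{K/F} = T_{K/F} ∩ U_K`: the units `δ` of `K` with `N_{K/F}(δ) = δ · δ' = 1`,
where `x ↦ x'` is the nontrivial `F`-automorphism `τ` of `K`. -/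
def UKF (τ : K ≃ₐ[F] K) : Subgroup (𝓞 K)ˣ where
  carrier := {δ | ((δ : 𝓞 K) : K) * τ ((δ : 𝓞 K) : K) = 1}
  one_mem' := by simp
  mul_mem' := by
    intro a b ha hb
    have ha' : ((a : 𝓞 K) : K) * τ ((a : 𝓞 K) : K) = 1 := ha
    have hb' : ((b : 𝓞 K) : K) * τ ((b : 𝓞 K) : K) = 1 := hb
    show (((a * b : (𝓞 K)ˣ) : 𝓞 K) : K) * τ (((a * b : (𝓞 K)ˣ) : 𝓞 K) : K) = 1
    have hab : (((a * b : (𝓞 K)ˣ) : 𝓞 K) : K) = ((a : 𝓞 K) : K) * ((b : 𝓞 K) : K) := by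
      push_cast; ring
    rw [hab, map_mul]
    linear_combination (((b : 𝓞 K) : K) * τ ((b : 𝓞 K) : K)) * ha' + hb'
  inv_mem' := by
    intro a ha
    have ha : ((a : 𝓞 K) : K) * τ ((a : 𝓞 K) : K) = 1 := ha
    show (((a⁻¹ : (𝓞 K)ˣ) : 𝓞 K) : K) * τ (((a⁻¹ : (𝓞 K)ˣ) : 𝓞 K) : K) = 1
    have h1 : ((a : 𝓞 K) : K) * (((a⁻¹ : (𝓞 K)ˣ) : 𝓞 K) : K) = 1 := by
      rw [← map_mul, ← Units.val_mul, mul_inv_cancel, Units.val_one, map_one]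
    have h2 : τ ((a : 𝓞 K) : K) * τ (((a⁻¹ : (𝓞 K)ˣ) : 𝓞 K) : K) = 1 := by
      rw [← map_mul, h1, map_one]
    calc (((a⁻¹ : (𝓞 K)ˣ) : 𝓞 K) : K) * τ (((a⁻¹ : (𝓞 K)ˣ) : 𝓞 K) : K)
        = ((((a : 𝓞 K) : K)) * τ ((a : 𝓞 K) : K)) *
            ((((a⁻¹ : (𝓞 K)ˣ) : 𝓞 K) : K) * τ (((a⁻¹ : (𝓞 K)ˣ) : 𝓞 K) : K)) := by
          rw [ha, one_mul]
      _ = (((a : 𝓞 K) : K) * (((a⁻¹ : (𝓞 K)ˣ) : 𝓞 K) : K)) *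
            (τ ((a : 𝓞 K) : K) * τ (((a⁻¹ : (𝓞 K)ˣ) : 𝓞 K) : K)) := by ring
      _ = 1 := by rw [h1, h2, mul_one]

/-- `w_{K/F} = [U_K : U_F U_{K/F}]`. -/
def wKF (τ : K ≃ₐ[F] K) : ℕ :=
  ((Units.map (algebraMap (𝓞 F) (𝓞 K)).toMonoidHom).range ⊔ UKF F K τ).index

/-- `T_{K/F} = {u ∈ T_K : u σ(u) = 1}`, where `σ` is the extension to `K_ℝ`
of the nontrivial `F`-automorphism of `K`. -/
def TKF (σ : RS K →+* RS K) : Set (RS K) := {u | IsUnit u ∧ u * σ u = 1}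

/-- The `O_K`-lattice `u𝔄 ⊆ K_ℝ` for `u ∈ K_ℝ` and a fractional ideal `𝔄` of `K`. -/
def latIdeal (A : FractionalIdeal (𝓞 K)⁰ K) (u : RS K) : AddSubgroup (RS K) where
  carrier := {w | ∃ α ∈ A, w = u * NumberField.mixedEmbedding K α}
  zero_mem' := ⟨0, Submodule.zero_mem _, by simp⟩
  add_mem' := by
    rintro w₁ w₂ ⟨α₁, hα₁, rfl⟩ ⟨α₂, hα₂, rfl⟩
    exact ⟨α₁ + α₂, Submodule.add_mem _ hα₁ hα₂, by rw [map_add, mul_add]⟩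
  neg_mem' := by
    rintro w ⟨α, hα, rfl⟩
    exact ⟨-α, Submodule.neg_mem _ hα, by rw [map_neg, mul_neg]⟩

/-- The lattice `ρ(u𝔄) ⊆ D_F`. -/
def rhoLat (ρ : RS K ≃+ DS F) (A : FractionalIdeal (𝓞 K)⁰ K) (u : RS K) :
    AddSubgroup (DS F) :=
  (latIdeal K A u).map ρ.toAddMonoidHom


/-- The canonical map `ι : F_ℝ → K_ℝ`: the continuous ring homomorphism compatible with the
embeddings of `F` and `K`. -/
def IsIota (ι : RS F →+* RS K) : Prop :=
  Continuous ι ∧ ∀ x : F,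
    ι (NumberField.mixedEmbedding F x) = NumberField.mixedEmbedding K (algebraMap F K x)

/-- `σ : K_ℝ → K_ℝ` is the continuous extension of the nontrivial `F`-automorphism `τ` of `K`. -/
def IsSigma (τ : K ≃ₐ[F] K) (σ : RS K →+* RS K) : Prop :=
  Continuous σ ∧ ∀ x : K,
    σ (NumberField.mixedEmbedding K x) = NumberField.mixedEmbedding K (τ x)

/-- `ρ : K_ℝ → D_F` is an isomorphism of `F_ℝ`-modules preserving the Haar measures and
satisfying `g = f ∘ ρ`. -/
def IsRho (ι : RS F →+* RS K) (ρ : RS K ≃+ DS F) : Prop :=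
  (∀ (x : RS F) (w : RS K), ρ (ι x * w) = structureMap F x * ρ w) ∧
    MeasureTheory.MeasurePreserving ρ (measR K) (measD F) ∧
    ∀ w : RS K, fR K w = fD F (ρ w)

/-- `S` is a set of norm-one representatives for `T_K/T_F` and `ν` is (supported on `S`)
the quotient Haar measure, characterized by the Fubini-type property
`∫_{T_K} φ = ∫_{T_K/T_F} ∫_{T_F} φ(t·ũ) dt du`. -/
def IsQuotMeasureK (ι : RS F →+* RS K) (ν : Measure (RS K)) (S : Set (RS K)) : Prop :=
  (∀ u ∈ S, u ∈ TF K ∧ normR K u = 1) ∧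
    ∀ φ : RS K → ENNReal, Measurable φ →
      ∫⁻ t in TF K, φ t ∂(measT K) =
        ∫⁻ u in S, ∫⁻ t in TF F, φ (ι t * u) ∂(measT F) ∂ν

/-- `S₀ ⊆ S` is a fundamental domain for the action of (the image of) `U_K` on `T_K/T_F`,
the latter quotient being represented by the set `S`. -/
def IsFundDomK (ι : RS F →+* RS K) (S S₀ : Set (RS K)) : Prop :=
  S₀ ⊆ S ∧ ∀ u ∈ S, ∃! u₀, u₀ ∈ S₀ ∧ ∃ (ε : (𝓞 K)ˣ) (t : RS F), IsUnit t ∧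
    u = ι t * NumberField.mixedEmbedding K ((ε : 𝓞 K) : K) * u₀

/-- `L` is a section `T_{K/F} → T_K`, `u ↦ ũ`, with `ũ/ũ' = u` and `|N_{K/ℚ}(ũ)| = 1`,
and `ν` is the Haar measure `d^×u` on `T_{K/F}`, characterized by the Fubini-type property
`∫_{T_K} φ(t) d^×t = ∫_{T_{K/F}} ∫_{T_F} φ(t·ũ) d^×t d^×u`. -/
def IsQuotMeasureKF (σ : RS K →+* RS K) (ι : RS F →+* RS K) (L : RS K → RS K)
    (ν : Measure (RS K)) : Prop :=
  (∀ u ∈ TKF K σ, L u ∈ TF K ∧ normR K (L u) = 1 ∧ L u = u * σ (L u)) ∧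
    ∀ φ : RS K → ENNReal, Measurable φ →
      ∫⁻ t in TF K, φ t ∂(measT K) =
        ∫⁻ u in TKF K σ, ∫⁻ t in TF F, φ (ι t * L u) ∂(measT F) ∂ν

/-- `S₀` is a fundamental domain for the multiplicative action of `U_{K/F}²` on `T_{K/F}`. -/
def IsFundDomKF (τ : K ≃ₐ[F] K) (σ : RS K →+* RS K) (S₀ : Set (RS K)) : Prop :=
  S₀ ⊆ TKF K σ ∧ ∀ u ∈ TKF K σ, ∃! u₀, u₀ ∈ S₀ ∧ ∃ δ : (𝓞 K)ˣ, δ ∈ UKF F K τ ∧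
    u = NumberField.mixedEmbedding K ((((δ ^ 2 : (𝓞 K)ˣ) : 𝓞 K)) : K) * u₀

end Quadratic

/-! ### Poisson summation on `ℤ^ι` -/

/-- The point of `ℝ^ι` with integer coordinates `n`. -/
def intPt {ι : Type*} (n : ι → ℤ) : ι → ℝ := fun i => (n i : ℝ)

/-- The weight `(1 + ‖n‖)^(-r)` is summable over `ℤ^ι` as soon as `r > #ι`. -/
lemma summable_one_add_norm_intPt {ι : Type*} [Fintype ι] {r : ℝ} (hr : (Fintype.card ι : ℝ) < r) :
    Summable fun n : ι → ℤ => (1 + ‖intPt n‖) ^ (-r) := by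
  classical
  obtain ⟨L, hL, hD, hZ⟩ : ∃ L : Submodule ℤ (ι → ℝ),
      L = Submodule.span ℤ (Set.range (Pi.basisFun ℝ ι)) ∧ ∃ _ : DiscreteTopology L, IsZLattice ℝ L :=
    ⟨_, rfl, inferInstance, inferInstance⟩
  have hfr : Module.finrank ℤ L = Fintype.card ι := by
    rw [ZLattice.rank ℝ L, Module.finrank_fintype_fun_eq_card]
  have h1 : Summable fun z : L => ‖z‖ ^ (-r) :=
    ZLattice.summable_norm_rpow L (-r) (by rw [hfr]; linarith)
  have hmem (n : ι → ℤ) : intPt n ∈ L := by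
    rw [hL, Module.Basis.mem_span_iff_repr_mem]
    intro i
    exact ⟨n i, by simp [intPt]⟩
  let φ : (ι → ℤ) → L := fun n => ⟨intPt n, hmem n⟩
  have hφ : Function.Injective φ := by
    intro m n h
    funext i
    have := congrFun (congrArg Subtype.val h) i
    simpa [φ, intPt] using this
  have h2 : Summable fun n : ι → ℤ => ‖intPt n‖ ^ (-r) := by
    have := h1.comp_injective hφ
    exact this
  refine Summable.of_norm_bounded_eventually h2 ?_
  rw [Filter.eventually_cofinite]
  refine (Set.finite_singleton (0 : ι → ℤ)).subset ?_
  intro n hn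
  by_contra h0
  apply hn
  have hpos : 0 < ‖intPt n‖ := by
    rw [norm_pos_iff]
    intro h
    apply h0
    funext i
    have := congrFun h i
    simpa [intPt] using this
  rw [Real.norm_of_nonneg (by positivity)]
  refine Real.rpow_le_rpow_of_nonpos hpos (by linarith) ?_
  have : (0:ℝ) ≤ Fintype.card ι := by positivity
  linarith

/-- A polynomial weight changes at most by a constant factor under bounded translations. -/
lemma one_add_norm_rpow_le {E : Type*} [NormedAddCommGroup E] {A r : ℝ} (hr : 0 ≤ r) {u n : E}
    (hu : ‖u‖ ≤ A) : (1 + ‖u + n‖) ^ (-r) ≤ (1 + A) ^ r * (1 + ‖n‖) ^ (-r) := by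
  have hA : 0 ≤ A := (norm_nonneg u).trans hu
  have h1 : 1 + ‖n‖ ≤ (1 + A) * (1 + ‖u + n‖) := by
    have h2 : ‖n‖ ≤ ‖u + n‖ + ‖u‖ := by
      calc ‖n‖ = ‖(u + n) - u‖ := by rw [add_sub_cancel_left]
        _ ≤ _ := norm_sub_le _ _
    nlinarith [norm_nonneg (u + n)]
  have h3 : (1 + ‖n‖) ^ r ≤ (1 + A) ^ r * (1 + ‖u + n‖) ^ r := by
    rw [← Real.mul_rpow (by positivity) (by positivity)]
    exact Real.rpow_le_rpow (by positivity) h1 hr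
  rw [Real.rpow_neg (by positivity), Real.rpow_neg (by positivity), ← div_eq_mul_inv,
    inv_le_comm₀ (by positivity) (by positivity), inv_div, div_le_iff₀ (by positivity)]
  linarith

/-- The half-open unit cube translated by `n`. -/
def cube {ι : Type*} (n : ι → ℤ) : Set (ι → ℝ) := {x | ∀ i, x i ∈ Set.Ioc (n i : ℝ) (n i + 1)}

lemma measurableSet_cube {ι : Type*} [Fintype ι] (n : ι → ℤ) : MeasurableSet (cube n) :=
  MeasurableSet.univ_pi' fun _ => measurableSet_Ioc

/-- The integral over `ℝ^ι` is the sum over integral translates of the integrals over the unit cube. -/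
lemma hasSum_cube {ι : Type*} [Fintype ι] {g : (ι → ℝ) → ℂ} (hg : Integrable g) :
    HasSum (fun n : ι → ℤ => ∫ x in cube (0 : ι → ℤ), g (x + intPt n)) (∫ x, g x) := by
  have hU : (⋃ n : ι → ℤ, cube n) = Set.univ := by
    refine Set.eq_univ_of_forall fun x => Set.mem_iUnion.2 ⟨fun i => ⌈x i⌉ - 1, fun i => ?_⟩
    have h1 := Int.le_ceil (x i)
    have h2 := Int.ceil_lt_add_one (x i)
    constructor <;> push_cast <;> linarith
  have hD : Pairwise (Function.onFun Disjoint (cube : (ι → ℤ) → _)) := by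
    intro m n hmn
    rw [Function.onFun, Set.disjoint_left]
    intro x hx hx'
    apply hmn
    funext i
    have h1 := hx i
    have h2 := hx' i
    have h3 : (m i : ℝ) < n i + 1 := h1.1.trans_le h2.2
    have h4 : (n i : ℝ) < m i + 1 := h2.1.trans_le h1.2
    have h5 : m i < n i + 1 := by exact_mod_cast h3
    have h6 : n i < m i + 1 := by exact_mod_cast h4
    omega
  have h := hasSum_integral_iUnion (f := g) (μ := volume) (measurableSet_cube (ι := ι)) hD
    (by rw [hU]; exact hg.integrableOn)
  rw [hU, setIntegral_univ] at h
  convert! h using 2 with n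
  have hmp := measurePreserving_add_right (volume : Measure (ι → ℝ)) (intPt n)
  rw [← hmp.setIntegral_preimage_emb (MeasurableEquiv.addRight (intPt n)).measurableEmbedding g
    (cube n)]
  congr 2
  ext x
  simp only [cube, intPt, Set.mem_ofPred_eq, Set.mem_preimage, Pi.add_apply, Pi.zero_apply,
    Set.mem_Ioc]
  refine forall_congr' fun i => ?_
  push_cast
  constructor <;> rintro ⟨h1, h2⟩ <;> constructor <;> linarith

lemma mFourier_coe {ι : Type*} [Fintype ι] (k : ι → ℤ) (u : ι → ℝ) :
    UnitAddTorus.mFourier k (fun i => (u i : UnitAddCircle)) =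
      Complex.exp (2 * Real.pi * Complex.I * (∑ i, (k i : ℝ) * u i : ℝ)) := by
  simp only [UnitAddTorus.mFourier, ContinuousMap.coe_mk, fourier_coe_apply]
  rw [← Complex.exp_sum]
  push_cast
  rw [Finset.mul_sum]
  congr 1
  refine Finset.sum_congr rfl fun i _ => ?_
  ring

/-- Poisson summation on `ℤ^ι` for a continuous function of polynomial decay whose Fourier
transform is summable over `ℤ^ι`. -/
theorem poisson {ι : Type*} [Fintype ι] {g : (ι → ℝ) → ℂ} (hg : Continuous g) {C r : ℝ}
    (hr : (Fintype.card ι : ℝ) < r) (hd : ∀ u, ‖g u‖ ≤ C * (1 + ‖u‖) ^ (-r)) {c : (ι → ℤ) → ℂ}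
    (hc : ∀ k, c k = ∫ v, Complex.exp (-(2 * Real.pi * Complex.I * (∑ i, (k i : ℝ) * v i : ℝ))) * g v)
    (hcs : Summable c) (u : ι → ℝ) :
    ∑' n : ι → ℤ, g (u + intPt n) =
      ∑' k, c k * Complex.exp (2 * Real.pi * Complex.I * (∑ i, (k i : ℝ) * u i : ℝ)) := by
  classical
  have hr0 : 0 ≤ r := le_trans (by positivity) hr.le
  have hC : 0 ≤ C := by
    have := (norm_nonneg _).trans (hd 0)
    simpa using this
  have hsum := summable_one_add_norm_intPt (ι := ι) hr
  have hgint : Integrable g := by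
    refine Integrable.mono' ((integrable_one_add_norm (E := ι → ℝ) (μ := volume) (r := r)
      (by simpa using hr)).const_mul C) hg.aestronglyMeasurable (ae_of_all _ hd)
  let Gn : (ι → ℤ) → C((ι → ℝ), ℂ) := fun n => ⟨fun u => g (u + intPt n), by fun_prop⟩
  have hbd (A : ℝ) (n : ι → ℤ) (u : ι → ℝ) (hu : ‖u‖ ≤ A) :
      ‖g (u + intPt n)‖ ≤ C * ((1 + A) ^ r * (1 + ‖intPt n‖) ^ (-r)) :=
    (hd _).trans (mul_le_mul_of_nonneg_left (one_add_norm_rpow_le hr0 hu) hC)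
  have hloc : ∀ K : TopologicalSpace.Compacts (ι → ℝ), Summable fun n => ‖(Gn n).restrict K‖ := by
    intro K
    obtain ⟨A, hA⟩ := K.isCompact.isBounded.exists_norm_le
    refine Summable.of_nonneg_of_le (fun _ => norm_nonneg _) (fun n => ?_)
      ((hsum.mul_left ((1 + |A|) ^ r)).mul_left C)
    refine (ContinuousMap.norm_le _ (by positivity)).2 fun x => ?_
    exact hbd |A| n x ((hA x x.2).trans (le_abs_self _))
  -- The periodization converges locally uniformly, so it is continuous and periodic.
  have hGs := ContinuousMap.summable_of_locally_summable_norm hloc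
  let P : C((ι → ℝ), ℂ) := ∑' n, Gn n
  have hP (u) : P u = ∑' n, g (u + intPt n) := (ContinuousMap.tsum_apply hGs u).symm
  have hper (u : ι → ℝ) (m : ι → ℤ) : P (u + intPt m) = P u := by
    rw [hP, hP, ← (Equiv.addLeft m).tsum_eq fun n => g (u + intPt n)]
    refine tsum_congr fun n => ?_
    congr 1
    funext i
    simp [intPt]
    ring
  let π : (ι → ℝ) → UnitAddTorus ι := fun u i => (u i : UnitAddCircle)
  have hπ : Topology.IsQuotientMap π := by
    have : IsOpenQuotientMap π :=
      IsOpenQuotientMap.piMap (f := fun (_ : ι) (x : ℝ) => (x : UnitAddCircle))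
        fun _ => QuotientAddGroup.isOpenQuotientMap_mk
    exact this.isQuotientMap
  let σ : UnitAddTorus ι → (ι → ℝ) := fun x i => (AddCircle.equivIoc 1 0 (x i)).1
  have hπσ (x) : π (σ x) = x := by
    funext i
    exact (AddCircle.equivIoc (1:ℝ) 0).symm_apply_apply (x i)
  have hPσ (u) : P (σ (π u)) = P u := by
    have h1 : π (σ (π u)) = π u := hπσ _
    have h2 : ∀ i, ∃ n : ℤ, σ (π u) i = u i + n := by
      intro i
      have h3 := congrFun h1 i
      have h4 := (QuotientAddGroup.eq (s := AddSubgroup.zmultiples (1:ℝ))).1 h3.symm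
      obtain ⟨n, hn⟩ := AddSubgroup.mem_zmultiples_iff.1 h4
      refine ⟨n, ?_⟩
      simp at hn
      linarith
    choose n hn using h2
    rw [← hper u n]
    congr 1
    funext i
    exact hn i
  -- By periodicity `P` descends to a continuous function on the torus.
  let G : C(UnitAddTorus ι, ℂ) := ⟨fun x => P (σ x), by
    rw [hπ.continuous_iff]
    have : (fun x => P (σ x)) ∘ π = P := funext hPσ
    rw [this]
    exact P.continuous⟩
  have hGπ (u) : G (π u) = P u := hPσ u
  -- Summing over the translates of the unit cube unfolds the Fourier coefficients of `G` into the
  -- Fourier transform of `g`.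
  have hcoef (k : ι → ℤ) : UnitAddTorus.mFourierCoeff G k = c k := by
    rw [UnitAddTorus.mFourierCoeff_eq_integral _ _ 0, hc]
    have hcb : {x : ι → ℝ | ∀ i, x i ∈ Set.Ioc ((0 : ι → ℝ) i) ((0 : ι → ℝ) i + 1)}
        = cube (0 : ι → ℤ) := by
      simp [cube]
    rw [hcb]
    set e : (ι → ℝ) → ℂ := fun v =>
      Complex.exp (-(2 * Real.pi * Complex.I * (∑ i, (k i : ℝ) * v i : ℝ))) with he
    have hen (v) : ‖e v‖ = 1 := by
      rw [he]
      simp only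
      rw [show -(2 * (Real.pi : ℂ) * Complex.I * ((∑ i, (k i : ℝ) * v i : ℝ) : ℂ)) =
        ((-(2 * Real.pi * ∑ i, (k i : ℝ) * v i) : ℝ) : ℂ) * Complex.I by push_cast; ring]
      exact Complex.norm_exp_ofReal_mul_I _
    have hec : Continuous e := by
      rw [he]
      fun_prop
    have heper (v) (n : ι → ℤ) : e (v + intPt n) = e v := by
      simp only [he]
      rw [Complex.exp_eq_exp_iff_exists_int]
      refine ⟨-∑ i, k i * n i, ?_⟩
      simp only [intPt, Pi.add_apply, mul_add, Finset.sum_add_distrib]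
      push_cast
      ring
    have hei : Integrable fun v => e v * g v :=
      hgint.bdd_mul (c := 1) hec.aestronglyMeasurable (ae_of_all _ fun v => (hen v).le)
    rw [← (hasSum_cube hei).tsum_eq]
    have h1 : ∀ x : ι → ℝ, UnitAddTorus.mFourier (-k) (fun i => (x i : UnitAddCircle)) •
        G (fun i => (x i : UnitAddCircle)) = ∑' n, e (x + intPt n) * g (x + intPt n) := by
      intro x
      rw [mFourier_coe, smul_eq_mul]
      have : G (fun i => (x i : UnitAddCircle)) = P x := hGπ x
      rw [this, hP, ← tsum_mul_left]
      refine tsum_congr fun n => ?_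
      rw [heper]
      congr 1
      simp only [he]
      congr 1
      simp
    rw [integral_congr_ae (ae_of_all _ h1)]
    have hfin : IsFiniteMeasure (volume.restrict (cube (0 : ι → ℤ))) := by
      constructor
      rw [Measure.restrict_apply_univ]
      have hb : Bornology.IsBounded (cube (0 : ι → ℤ)) := by
        refine (Metric.isBounded_closedBall (x := (0 : ι → ℝ)) (r := 1)).subset ?_
        intro x hx
        rw [mem_closedBall_zero_iff, pi_norm_le_iff_of_nonneg zero_le_one]
        intro i
        have := hx i
        simp at this
        rw [Real.norm_eq_abs, abs_le]
        constructor <;> linarith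
      exact hb.measure_lt_top
    have hbc : ∀ n : ι → ℤ, ∀ᵐ x ∂(volume.restrict (cube (0 : ι → ℤ))),
        ‖e (x + intPt n) * g (x + intPt n)‖ ≤ C * ((1 + 1) ^ r * (1 + ‖intPt n‖) ^ (-r)) := by
      intro n
      refine (ae_restrict_iff' (measurableSet_cube _)).2 (ae_of_all _ fun x hx => ?_)
      rw [norm_mul, hen, one_mul]
      refine hbd 1 n x ?_
      rw [pi_norm_le_iff_of_nonneg zero_le_one]
      intro i
      have := hx i
      simp at this
      rw [Real.norm_eq_abs, abs_le]
      constructor <;> linarith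
    have hmeas : ∀ n : ι → ℤ, Continuous fun x => e (x + intPt n) * g (x + intPt n) := by
      intro n
      fun_prop
    refine (integral_tsum_of_summable_integral_norm (fun n => ?_) ?_).symm
    · exact Integrable.of_bound (hmeas n).aestronglyMeasurable _ (hbc n)
    · refine Summable.of_nonneg_of_le (fun n => by positivity) (fun n => ?_)
        (((hsum.mul_left ((1 + 1) ^ r)).mul_left C).mul_left
          ((volume.restrict (cube (0 : ι → ℤ))).real Set.univ))
      calc _ ≤ ∫ x in cube (0 : ι → ℤ), C * ((1 + 1) ^ r * (1 + ‖intPt n‖) ^ (-r)) :=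
            integral_mono_of_nonneg (ae_of_all _ fun _ => norm_nonneg _) (integrable_const _) (hbc n)
        _ = _ := by rw [integral_const, smul_eq_mul]
  -- The Fourier series is summable, so it converges pointwise to the continuous function `G`.
  have hfin := UnitAddTorus.hasSum_mFourier_series_apply_of_summable (f := G)
    (by simpa only [funext hcoef] using! hcs) (π u)
  rw [← hP, ← hGπ, ← hfin.tsum_eq]
  refine tsum_congr fun k => ?_
  rw [hcoef, smul_eq_mul, mFourier_coe]

/-! ### The Gaussian and the norm on `F_ℝ` -/

lemma structureMap_fst (x : RS F) (v) : (structureMap F x).1 v = (x.1 v : ℂ) := rfl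

lemma structureMap_snd (x : RS F) (v) : (structureMap F x).2 v = Quaternion.ofComplex (x.2 v) := rfl

lemma norm_ofComplex (z : ℂ) : ‖(Quaternion.ofComplex z : Quaternion ℝ)‖ = ‖z‖ := by
  have h : ‖(Quaternion.ofComplex z : Quaternion ℝ)‖ ^ 2 = ‖z‖ ^ 2 := by
    rw [sq, ← Quaternion.normSq_eq_norm_mul_self, Quaternion.normSq_def', Complex.sq_norm,
      Complex.normSq_apply]
    show (z : Quaternion ℝ).re ^ 2 + (z : Quaternion ℝ).imI ^ 2 + (z : Quaternion ℝ).imJ ^ 2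
      + (z : Quaternion ℝ).imK ^ 2 = _
    simp
    ring
  exact (sq_eq_sq₀ (norm_nonneg _) (norm_nonneg _)).1 h

lemma fR_eq (x : RS F) : fR F x =
    (∏ v, Real.exp (-Real.pi * x.1 v ^ 2)) * ∏ v, Real.exp (-(2 * Real.pi) * ‖x.2 v‖ ^ 2) := by
  simp only [fR, fD, structureMap_fst, structureMap_snd, norm_ofComplex, Complex.norm_real,
    Real.norm_eq_abs, sq_abs]

lemma fR_eq_exp (x : RS F) : fR F x =
    Real.exp (-Real.pi * ((∑ v, x.1 v ^ 2) + ∑ v, 2 * ‖x.2 v‖ ^ 2)) := by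
  rw [fR_eq, ← Real.exp_sum, ← Real.exp_sum, ← Real.exp_add, mul_add, Finset.mul_sum, Finset.mul_sum]
  congr 2
  refine Finset.sum_congr rfl fun v _ => ?_
  ring

lemma fR_pos (x : RS F) : 0 < fR F x := by
  rw [fR_eq_exp]; positivity

lemma fR_zero : fR F 0 = 1 := by simp [fR_eq_exp]

lemma continuous_fR : Continuous (fR F) := by
  simp only [funext (fR_eq_exp F)]
  fun_prop

lemma continuous_normR : Continuous (normR F) := by
  unfold normR
  fun_prop

lemma normR_nonneg (x : RS F) : 0 ≤ normR F x := by
  unfold normR; positivity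

lemma normR_one : normR F 1 = 1 := by simp [normR]

lemma normR_mul (x y : RS F) : normR F (x * y) = normR F x * normR F y := by
  simp only [normR, Prod.fst_mul, Prod.snd_mul, Pi.mul_apply, abs_mul, norm_mul, mul_pow,
    Finset.prod_mul_distrib]
  ring

lemma isUnit_iff_comp (t : RS F) : IsUnit t ↔ (∀ v, t.1 v ≠ 0) ∧ ∀ v, t.2 v ≠ 0 := by
  rw [Prod.isUnit_iff, Pi.isUnit_iff, Pi.isUnit_iff]
  simp only [isUnit_iff_ne_zero]

lemma isUnit_iff_normR (t : RS F) : IsUnit t ↔ normR F t ≠ 0 := by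
  rw [isUnit_iff_comp, normR, mul_ne_zero_iff, Finset.prod_ne_zero_iff, Finset.prod_ne_zero_iff]
  simp

lemma normR_pos {t : RS F} (ht : IsUnit t) : 0 < normR F t :=
  lt_of_le_of_ne (normR_nonneg F t) ((isUnit_iff_normR F t).1 ht).symm

lemma normR_mixedEmbedding (x : F) :
    normR F (mixedEmbedding F x) = ((|Algebra.norm ℚ x| : ℚ) : ℝ) := by
  classical
  rw [← mixedEmbedding.norm_eq_norm, mixedEmbedding.norm_apply, normR,
    ← Fintype.prod_subtype_mul_prod_subtype (fun v : InfinitePlace F => v.IsReal)]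
  congr 1
  · refine Fintype.prod_equiv (Equiv.refl _) _ _ fun v => ?_
    simp only [Equiv.refl_apply]
    rw [mixedEmbedding.normAtPlace_apply_of_isReal v.2, InfinitePlace.mult, if_pos v.2]
    simp
  · refine Fintype.prod_equiv (Equiv.subtypeEquivRight fun v =>
      InfinitePlace.not_isReal_iff_isComplex.symm) _ _ fun v => ?_
    have hv := v.2
    simp only [Equiv.subtypeEquivRight_apply_coe]
    rw [mixedEmbedding.normAtPlace_apply_of_isComplex v.2, InfinitePlace.mult,
      if_neg (InfinitePlace.not_isReal_iff_isComplex.2 v.2)]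

lemma isUnit_mixedEmbedding {x : F} (hx : x ≠ 0) : IsUnit (mixedEmbedding F x) :=
  (isUnit_iff_ne_zero.2 hx).map _

lemma normR_unit (ε : (𝓞 F)ˣ) : normR F (mixedEmbedding F ((ε : 𝓞 F) : F)) = 1 := by
  rw [← mixedEmbedding.norm_unit ε, mixedEmbedding.norm_eq_norm, normR_mixedEmbedding]

/-- `TrR` extends `Tr_{F/ℚ}`: the embeddings of `F` group into the real ones and the pairs of complex
conjugate ones. -/
lemma TrR_mixedEmbedding (x : F) : TrR F (mixedEmbedding F x) = ((Algebra.trace ℚ F x : ℚ) : ℝ) := by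
  have h1 : ((Algebra.trace ℚ F x : ℚ) : ℂ) = ∑ φ : F →+* ℂ, φ x := by
    have := trace_eq_sum_embeddings (K := ℚ) (L := F) ℂ (x := x)
    rw [eq_ratCast] at this
    rw [this]
    exact Fintype.sum_equiv (RingHom.equivRatAlgHom F ℂ).symm _ _ fun _ => rfl
  have h2 : ∑ φ : F →+* ℂ, φ x = ((TrR F (mixedEmbedding F x) : ℝ) : ℂ) := by
    classical
    have hfib (w : InfinitePlace F) : ∑ φ : F →+* ℂ with InfinitePlace.mk φ = w, φ x =
        if w.IsReal then w.embedding x else w.embedding x + (starRingEnd ℂ) (w.embedding x) := by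
      have hS : (Finset.univ.filter fun φ : F →+* ℂ => InfinitePlace.mk φ = w) =
          {w.embedding, ComplexEmbedding.conjugate w.embedding} := by
        ext φ
        conv_lhs => rw [← InfinitePlace.mk_embedding w]
        simp only [Finset.mem_filter, Finset.mem_univ, true_and, InfinitePlace.mk_eq_iff,
          Finset.mem_insert, Finset.mem_singleton]
        refine or_congr Iff.rfl ?_
        constructor
        · intro h; rw [← h]; simp
        · intro h; rw [h]; simp
      rw [hS]
      split_ifs with hw
      · have hc : ComplexEmbedding.conjugate w.embedding = w.embedding :=
          ComplexEmbedding.isReal_iff.1 (InfinitePlace.isReal_iff.1 hw)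
        rw [hc]
        simp
      · have hc : w.embedding ≠ ComplexEmbedding.conjugate w.embedding := fun h =>
          hw (InfinitePlace.isReal_iff.2 (ComplexEmbedding.isReal_iff.2 h.symm))
        rw [Finset.sum_pair hc]
        rfl
    rw [← Finset.sum_fiberwise (s := Finset.univ) (g := fun φ : F →+* ℂ => InfinitePlace.mk φ)]
    simp only [hfib]
    rw [← Fintype.sum_subtype_add_sum_subtype (fun w : InfinitePlace F => w.IsReal), TrR]
    push_cast
    congr 1
    · refine Fintype.sum_equiv (Equiv.refl _) _ _ fun v => ?_
      rw [if_pos v.2]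
      simp [mixedEmbedding.mixedEmbedding_apply_isReal]
    · refine Fintype.sum_equiv (Equiv.subtypeEquivRight fun v =>
        InfinitePlace.not_isReal_iff_isComplex) _ _ fun v => ?_
      rw [if_neg v.2, mixedEmbedding.mixedEmbedding_apply_isComplex, Complex.add_conj]
      simp
  rw [h2] at h1
  exact_mod_cast h1.symm

lemma dF_eq : (dF F : ℝ) = |(discr F : ℝ)| := by
  rw [dF, Nat.cast_natAbs]; push_cast; rfl

lemma dF_pos : (0:ℝ) < dF F := by
  rw [dF_eq]; exact abs_pos.2 (by exact_mod_cast discr_ne_zero F)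

/-! ### Self-duality of the Gaussian -/

/-- Fourier transform of a dilated Gaussian at a real place. -/
lemma fourier_real {t : ℝ} (ht : t ≠ 0) (b : ℝ) :
    ∫ w : ℝ, Complex.exp (-(2 * Real.pi * Complex.I * (w * b : ℝ))) *
      (Real.exp (-Real.pi * (t * w) ^ 2) : ℂ) =
      ((|t|⁻¹ * Real.exp (-Real.pi * (t⁻¹ * b) ^ 2) : ℝ) : ℂ) := by
  have hb : 0 < ((Real.pi * t ^ 2 : ℝ) : ℂ).re := by
    rw [Complex.ofReal_re]; positivity
  have h := GaussianFourier.integral_cexp_neg_mul_sq_norm_add (V := ℝ) hb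
    (-(2 * Real.pi * Complex.I)) b
  convert! h using 1
  · congr 1
    ext w
    rw [Complex.ofReal_exp, ← Complex.exp_add]
    congr 1
    have h1 : ((‖w‖ : ℝ) : ℂ) ^ 2 = (w : ℂ) ^ 2 := by
      rw [← Complex.ofReal_pow, Real.norm_eq_abs, sq_abs]; push_cast; rfl
    rw [h1]
    simp
    ring
  · have h2 : ((Real.pi : ℂ) / ((Real.pi * t ^ 2 : ℝ) : ℂ)) = ((t⁻¹ ^ 2 : ℝ) : ℂ) := by
      have : (t : ℂ) ≠ 0 := by exact_mod_cast ht
      have : (Real.pi : ℂ) ≠ 0 := by exact_mod_cast Real.pi_ne_zero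
      push_cast
      field_simp
    have h3 : ((Module.finrank ℝ ℝ : ℂ) / 2) = ((1 / 2 : ℝ) : ℂ) := by simp
    rw [h2, h3, ← Complex.ofReal_cpow (by positivity), ← Real.sqrt_eq_rpow, Real.sqrt_sq_eq_abs,
      abs_inv, Complex.ofReal_mul]
    congr 1
    rw [Complex.ofReal_exp]
    congr 1
    have h1 : ((‖b‖ : ℝ) : ℂ) ^ 2 = (b : ℂ) ^ 2 := by
      rw [← Complex.ofReal_pow, Real.norm_eq_abs, sq_abs]; push_cast; rfl
    rw [h1]
    have : (t : ℂ) ≠ 0 := by exact_mod_cast ht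
    have : (Real.pi : ℂ) ≠ 0 := by exact_mod_cast Real.pi_ne_zero
    push_cast
    field_simp
    rw [Complex.I_sq]
    ring

/-- Fourier transform of a dilated Gaussian at a complex place, for twice the Lebesgue measure and
the character `w ↦ exp(2πi · 2 Re w)`; with this normalization `exp(-2π|w|²)` is self-dual. -/
lemma fourier_complex {t : ℂ} (ht : t ≠ 0) (b : ℂ) :
    ∫ w : ℂ, Complex.exp (-(2 * Real.pi * Complex.I * (2 * (w * b).re : ℝ))) *
      (Real.exp (-(2 * Real.pi) * ‖t * w‖ ^ 2) : ℂ) ∂((2 : ENNReal) • volume) =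
      (((‖t‖ ^ 2)⁻¹ * Real.exp (-(2 * Real.pi) * ‖t⁻¹ * b‖ ^ 2) : ℝ) : ℂ) := by
  have ht' : 0 < ‖t‖ := norm_pos_iff.2 ht
  have hb : 0 < ((2 * Real.pi * ‖t‖ ^ 2 : ℝ) : ℂ).re := by
    rw [Complex.ofReal_re]; positivity
  have h := GaussianFourier.integral_cexp_neg_mul_sq_norm_add (V := ℂ) hb
    (-(2 * 2 * Real.pi * Complex.I)) ((starRingEnd ℂ) b)
  rw [integral_smul_measure]
  have htc : ((‖t‖ : ℝ) : ℂ) ≠ 0 := by exact_mod_cast ht'.ne'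
  have hpc : (Real.pi : ℂ) ≠ 0 := by exact_mod_cast Real.pi_ne_zero
  have hL : (∫ w : ℂ, Complex.exp (-(2 * Real.pi * Complex.I * (2 * (w * b).re : ℝ))) *
      (Real.exp (-(2 * Real.pi) * ‖t * w‖ ^ 2) : ℂ)) =
      ∫ w : ℂ, Complex.exp (-((2 * Real.pi * ‖t‖ ^ 2 : ℝ) : ℂ) * ‖w‖ ^ 2 +
        -(2 * 2 * Real.pi * Complex.I) * (inner ℝ ((starRingEnd ℂ) b) w : ℝ)) := by
    congr 1
    ext w
    rw [Complex.ofReal_exp, ← Complex.exp_add]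
    congr 1
    rw [Complex.inner, norm_mul, starRingEnd_self_apply]
    push_cast
    ring
  rw [hL, h, Complex.finrank_real_complex]
  have h3 : (((2 : ℕ) : ℂ) / 2) = 1 := by norm_num
  rw [h3, Complex.cpow_one, RCLike.norm_conj, norm_mul, norm_inv]
  have h4 : Complex.exp ((-(2 * 2 * (Real.pi : ℂ) * Complex.I)) ^ 2 * (‖b‖ : ℂ) ^ 2 /
      (4 * ((2 * Real.pi * ‖t‖ ^ 2 : ℝ) : ℂ))) =
      ((Real.exp (-(2 * Real.pi) * (‖t‖⁻¹ * ‖b‖) ^ 2) : ℝ) : ℂ) := by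
    rw [Complex.ofReal_exp]
    congr 1
    push_cast
    field_simp
    rw [Complex.I_sq]
    ring
  rw [h4, ENNReal.toReal_ofNat, Complex.real_smul, Complex.ofReal_mul, ← mul_assoc]
  push_cast
  field_simp

instance isAddHaar_two_smul : ((2 : ENNReal) • (volume : Measure ℂ)).IsAddHaarMeasure :=
  Measure.IsAddHaarMeasure.smul _ two_ne_zero ENNReal.ofNat_ne_top

lemma inverse_fst {t : RS F} (ht : IsUnit t) (v) : (Ring.inverse t).1 v = (t.1 v)⁻¹ := by
  have h := congrArg (fun x : RS F => x.1 v) (Ring.mul_inverse_cancel t ht)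
  simp only [Prod.fst_mul, Pi.mul_apply, Prod.fst_one, Pi.one_apply] at h
  exact eq_inv_of_mul_eq_one_right h

lemma inverse_snd {t : RS F} (ht : IsUnit t) (v) : (Ring.inverse t).2 v = (t.2 v)⁻¹ := by
  have h := congrArg (fun x : RS F => x.2 v) (Ring.mul_inverse_cancel t ht)
  simp only [Prod.snd_mul, Pi.mul_apply, Prod.snd_one, Pi.one_apply] at h
  exact eq_inv_of_mul_eq_one_right h

/-- The Gaussian `fR` is self-dual with respect to the character `exp(2πi TrR)` and `measR`. -/
lemma fourier_fR {t : RS F} (ht : IsUnit t) (b : RS F) :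
    ∫ w, Complex.exp (-(2 * Real.pi * Complex.I * TrR F (w * b))) * (fR F (t * w) : ℂ) ∂(measR F) =
      (((normR F t)⁻¹ * fR F (Ring.inverse t * b) : ℝ) : ℂ) := by
  have h0 := (isUnit_iff_comp F t).1 ht
  have hpt (w : RS F) : Complex.exp (-(2 * Real.pi * Complex.I * TrR F (w * b))) *
      (fR F (t * w) : ℂ) =
      (∏ v, (Complex.exp (-(2 * Real.pi * Complex.I * (w.1 v * b.1 v : ℝ))) *
        (Real.exp (-Real.pi * (t.1 v * w.1 v) ^ 2) : ℂ))) *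
      ∏ v, (Complex.exp (-(2 * Real.pi * Complex.I * (2 * (w.2 v * b.2 v).re : ℝ))) *
        (Real.exp (-(2 * Real.pi) * ‖t.2 v * w.2 v‖ ^ 2) : ℂ)) := by
    rw [fR_eq, TrR, Finset.prod_mul_distrib, Finset.prod_mul_distrib, ← Complex.exp_sum,
      ← Complex.exp_sum, mul_mul_mul_comm, ← Complex.exp_add, Complex.ofReal_mul,
      Complex.ofReal_prod, Complex.ofReal_prod]
    congr 2
    simp only [Complex.ofReal_add, Complex.ofReal_sum, Finset.mul_sum, mul_add, neg_add,
      Prod.fst_mul, Prod.snd_mul, Pi.mul_apply, Finset.sum_neg_distrib]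
  simp only [hpt]
  rw [measR, integral_prod_mul
    (f := fun w1 : {v : InfinitePlace F // v.IsReal} → ℝ =>
      ∏ v, (Complex.exp (-(2 * Real.pi * Complex.I * (w1 v * b.1 v : ℝ))) *
        (Real.exp (-Real.pi * (t.1 v * w1 v) ^ 2) : ℂ)))
    (g := fun w2 : {v : InfinitePlace F // v.IsComplex} → ℂ =>
      ∏ v, (Complex.exp (-(2 * Real.pi * Complex.I * (2 * (w2 v * b.2 v).re : ℝ))) *
        (Real.exp (-(2 * Real.pi) * ‖t.2 v * w2 v‖ ^ 2) : ℂ))),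
    integral_fintype_prod_eq_prod
      (f := fun v (w : ℝ) => (Complex.exp (-(2 * Real.pi * Complex.I * (w * b.1 v : ℝ))) *
        (Real.exp (-Real.pi * (t.1 v * w) ^ 2) : ℂ))),
    integral_fintype_prod_eq_prod
      (f := fun v (w : ℂ) => (Complex.exp (-(2 * Real.pi * Complex.I * (2 * (w * b.2 v).re : ℝ))) *
        (Real.exp (-(2 * Real.pi) * ‖t.2 v * w‖ ^ 2) : ℂ)))]
  rw [Finset.prod_congr rfl fun v _ => fourier_real (h0.1 v) (b.1 v),
    Finset.prod_congr rfl fun v _ => fourier_complex (h0.2 v) (b.2 v), ← Complex.ofReal_prod,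
    ← Complex.ofReal_prod, ← Complex.ofReal_mul, Finset.prod_mul_distrib, Finset.prod_mul_distrib,
    mul_mul_mul_comm, Finset.prod_inv_distrib, Finset.prod_inv_distrib, ← mul_inv]
  congr 2
  rw [fR_eq]
  simp only [Prod.fst_mul, Prod.snd_mul, Pi.mul_apply, inverse_fst F ht, inverse_snd F ht]

/-! ### Ideal lattices and their duals -/

instance isAddHaar_measR : (measR F).IsAddHaarMeasure := by
  unfold measR
  have h : (Measure.pi fun _ : {v : InfinitePlace F // v.IsComplex} =>
      (2 : ENNReal) • (volume : Measure ℂ)).IsAddHaarMeasure :=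
    MeasureTheory.Measure.pi.isAddHaarMeasure _
  have h' : (Measure.pi fun _ : {v : InfinitePlace F // v.IsReal} =>
      (volume : Measure ℝ)).IsAddHaarMeasure :=
    MeasureTheory.Measure.pi.isAddHaarMeasure _
  exact MeasureTheory.Measure.prod.instIsAddHaarMeasure _ _

/-- The measure `measR` is `2^{r₂}` times the volume used by Mathlib on the mixed space. -/
lemma measR_eq : measR F = (2 : ENNReal) ^ InfinitePlace.nrComplexPlaces F • (volume : Measure (RS F)) := by
  have h : (Measure.pi fun _ : {v : InfinitePlace F // v.IsComplex} =>
      (2 : ENNReal) • (volume : Measure ℂ)) =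
      (2 : ENNReal) ^ InfinitePlace.nrComplexPlaces F • Measure.pi fun _ => (volume : Measure ℂ) := by
    refine Measure.pi_eq fun s hs => ?_
    rw [Measure.smul_apply, Measure.pi_pi]
    simp only [Measure.smul_apply, smul_eq_mul, Finset.prod_mul_distrib, Finset.prod_const]
    congr 2
  rw [measR, h, Measure.prod_smul_right]
  rfl

/-- The covolume of an ideal in `measR` is `√d_F · N(I)`: the factor `2^{-r₂}` in the covolume for
the Mathlib volume cancels. -/
lemma volume_ideal (I : (FractionalIdeal (𝓞 F)⁰ F)ˣ) :
    measR F (ZSpan.fundamentalDomain (mixedEmbedding.fractionalIdealLatticeBasis F I)) =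
      ENNReal.ofReal (Real.sqrt (dF F) * (FractionalIdeal.absNorm I.1 : ℚ)) := by
  have h := mixedEmbedding.volume_fundamentalDomain_fractionalIdealLatticeBasis F I
  rw [mixedEmbedding.volume_fundamentalDomain_latticeBasis] at h
  rw [measR_eq, Measure.smul_apply, smul_eq_mul]
  have h2 : (volume : Measure (RS F)) (ZSpan.fundamentalDomain (mixedEmbedding.fractionalIdealLatticeBasis F I)) =
      ENNReal.ofReal (FractionalIdeal.absNorm I.1 : ℚ) *
        ((2 : ENNReal)⁻¹ ^ InfinitePlace.nrComplexPlaces F * (NNReal.sqrt ‖discr F‖₊ : ENNReal)) := by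
    convert! h
  rw [h2, mul_comm (ENNReal.ofReal _), mul_assoc, ← mul_assoc, ← mul_pow,
    ENNReal.mul_inv_cancel two_ne_zero ENNReal.ofNat_ne_top, one_pow, one_mul,
    ENNReal.ofReal_mul (Real.sqrt_nonneg _)]
  congr 1
  rw [dF_eq, ENNReal.ofReal, ENNReal.coe_inj]
  ext
  rw [Real.coe_toNNReal _ (Real.sqrt_nonneg _)]
  simp [Int.norm_eq_abs]

/-- A `ℤ`-basis of the ideal `b` identifies `b` and its trace dual with `ℤ^ι` and
`F_ℝ` with `ℝ^ι`, the trace pairing becoming the dot product; the covolume of `b` is the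
Jacobian of this identification. -/
lemma exists_chart (b : FractionalIdeal (𝓞 F)⁰ F) (hb : b ≠ 0) :
    ∃ (ι : Type) (_ : Fintype ι) (L : (ι → ℝ) ≃L[ℝ] RS F) (e : (ι → ℤ) ≃ {x : F // x ∈ b})
      (d : (ι → ℤ) ≃ dualIdealSet F b),
      (∀ n, L (intPt n) = mixedEmbedding F (e n : F)) ∧
      (∀ k v, TrR F (mixedEmbedding F (d k : F) * L v) = ∑ i, (k i : ℝ) * v i) ∧
      measR F = ENNReal.ofReal (Real.sqrt (dF F) * (FractionalIdeal.absNorm b : ℚ)) •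
        Measure.map L volume := by
  classical
  set I : (FractionalIdeal (𝓞 F)⁰ F)ˣ := Units.mk0 b hb with hI
  let ι := Module.Free.ChooseBasisIndex ℤ I
  let B := mixedEmbedding.fractionalIdealLatticeBasis F I
  let β : Module.Basis ι ℚ F := basisOfFractionalIdeal F I
  -- The basis dual to `β` for the trace form is a `ℤ`-basis of the dual ideal.
  let δ : Module.Basis ι ℚ F := β.traceDual
  let L : (ι → ℝ) ≃L[ℝ] RS F := B.equivFun.symm.toContinuousLinearEquiv
  have hL (v : ι → ℝ) : L v = ∑ i, v i • mixedEmbedding F (β i) := by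
    show B.equivFun.symm v = _
    rw [Module.Basis.equivFun_symm_apply]
    simp only [B, mixedEmbedding.fractionalIdealLatticeBasis_apply, β]
    rfl
  have hmem (x : F) : x ∈ b ↔ ∃ n : ι → ℤ, ∑ i, n i • β i = x := by
    rw [← Submodule.mem_span_range_iff_exists_fun]
    exact (mem_span_basisOfFractionalIdeal F (I := I)).symm
  have hinj (γ : Module.Basis ι ℚ F) (n m : ι → ℤ) (h : ∑ i, n i • γ i = ∑ i, m i • γ i) :
      n = m := by
    simp only [← Int.cast_smul_eq_zsmul ℚ] at h
    have := congrArg (fun x => γ.equivFun x) h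
    simp only [Module.Basis.equivFun_apply, Module.Basis.repr_sum_self] at this
    funext i
    exact_mod_cast congrFun this i
  have htr (i j : ι) : Algebra.trace ℚ F (β i * δ j) = if i = j then 1 else 0 :=
    β.trace_mul_traceDual i j
  have htr2 (n k : ι → ℤ) : Algebra.trace ℚ F ((∑ i, n i • β i) * ∑ i, k i • δ i) =
      ∑ i, (n i * k i : ℤ) := by
    rw [Finset.sum_mul_sum, map_sum, Int.cast_sum]
    refine Finset.sum_congr rfl fun i _ => ?_
    rw [map_sum, Finset.sum_eq_single i]
    · rw [smul_mul_smul_comm, map_zsmul, htr]; simp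
    · intro j _ hj
      rw [smul_mul_smul_comm, map_zsmul, htr, if_neg (Ne.symm hj), smul_zero]
    · simp
  let e : (ι → ℤ) ≃ {x : F // x ∈ b} := Equiv.ofBijective
    (fun n => ⟨∑ i, n i • β i, (hmem _).2 ⟨n, rfl⟩⟩) ⟨fun n m h => hinj β n m (congrArg Subtype.val h),
      fun ⟨x, hx⟩ => by
        obtain ⟨n, hn⟩ := (hmem x).1 hx
        exact ⟨n, Subtype.ext hn⟩⟩
  let d : (ι → ℤ) ≃ dualIdealSet F b := Equiv.ofBijective
    (fun k => ⟨∑ i, k i • δ i, fun x hx => by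
      obtain ⟨n, rfl⟩ := (hmem x).1 hx
      exact ⟨_, htr2 n k⟩⟩) ⟨fun n m h => hinj δ n m (congrArg Subtype.val h), by
        rintro ⟨x, hx⟩
        have hβ (i : ι) : β i ∈ b := (hmem _).2 ⟨Pi.single i 1, by simp [Pi.single_apply]⟩
        choose k hk using fun i => hx (β i) (hβ i)
        refine ⟨k, Subtype.ext ?_⟩
        show ∑ i, k i • δ i = x
        refine Eq.trans ?_ (δ.sum_repr x)
        refine Finset.sum_congr rfl fun i _ => ?_
        rw [show δ.repr x i = _ from Module.Basis.traceDual_repr_apply _ _ _, Algebra.traceForm_apply, mul_comm, hk,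
          Int.cast_smul_eq_zsmul]⟩
  refine ⟨ι, inferInstance, L, e, d, fun n => ?_, fun k v => ?_, ?_⟩
  · rw [hL]
    show _ = mixedEmbedding F (∑ i, n i • β i)
    rw [map_sum]
    refine Finset.sum_congr rfl fun i _ => ?_
    rw [map_zsmul]
    exact Int.cast_smul_eq_zsmul ℝ _ _
  · have hlin (c : ℝ) (u : RS F) : TrR F (c • u) = c * TrR F u := by
      simp only [TrR, Prod.smul_fst, Prod.smul_snd, Pi.smul_apply, smul_eq_mul, mul_add,
        Finset.mul_sum, Complex.smul_re, mul_left_comm]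
    let T : RS F →ₗ[ℝ] ℝ := ⟨⟨TrR F, TrR_add F⟩, hlin⟩
    show T _ = _
    rw [hL, Finset.mul_sum, map_sum]
    refine Finset.sum_congr rfl fun i _ => ?_
    rw [mul_smul_comm, map_smul, ← map_mul, mul_comm (d k : F), smul_eq_mul, mul_comm]
    congr 1
    show TrR F (mixedEmbedding F (β i * ∑ i, k i • δ i)) = _
    rw [TrR_mixedEmbedding]
    have := htr2 (Pi.single i 1) k
    simp only [Pi.single_apply, ite_smul, one_smul, zero_smul, Finset.sum_ite_eq', Finset.mem_univ,
      if_true, ite_mul, one_mul, zero_mul] at this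
    rw [this]; norm_cast
  · have : (Measure.map L (volume : Measure (ι → ℝ))).IsAddHaarMeasure :=
      L.isAddHaarMeasure_map volume
    -- Two Haar measures are proportional; the factor is read off on a fundamental domain of `b`.
    have h1 := Measure.isAddLeftInvariant_eq_smul (measR F) (Measure.map L (volume : Measure (ι → ℝ)))
    set κ := Measure.addHaarScalarFactor (measR F) (Measure.map L (volume : Measure (ι → ℝ)))
    have h2 := volume_ideal F I
    rw [h1, Measure.smul_apply, show Measure.map L (volume : Measure (ι → ℝ)) _ = _ from
      L.toHomeomorph.toMeasurableEquiv.map_apply _] at h2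
    have h3 : L.toHomeomorph.toMeasurableEquiv ⁻¹' (ZSpan.fundamentalDomain B) =
        ZSpan.fundamentalDomain (Pi.basisFun ℝ ι) := by
      ext v
      simp only [Set.mem_preimage, ZSpan.mem_fundamentalDomain]
      refine forall_congr' fun i => ?_
      have : B.repr (L v) i = v i := by
        show B.equivFun (B.equivFun.symm v) i = v i
        rw [LinearEquiv.apply_symm_apply]
      rw [show B.repr (L.toHomeomorph.toMeasurableEquiv v) i = v i from this]
      simp
    have h4 : (volume : Measure (ι → ℝ)) (ZSpan.fundamentalDomain (Pi.basisFun ℝ ι)) = 1 := by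
      rw [ZSpan.volume_fundamentalDomain, ← Pi.basisFun_det_apply,
        Module.Basis.det_self]
      simp
    have h5 : (κ : ENNReal) = ENNReal.ofReal (Real.sqrt (dF F) * (FractionalIdeal.absNorm b : ℚ)) := by
      rw [show b = I.1 from rfl, ← h2]
      erw [h3, h4]
      simp [ENNReal.smul_def]
    rw [h1, ← h5]
    rfl

/-! ### Poisson summation over ideal lattices -/

/-- The weighted `ℓ¹`-norm `∑_v n_v |x_v|` on `F_ℝ`. -/
def oneN (x : RS F) : ℝ := (∑ v, |x.1 v|) + ∑ v, 2 * ‖x.2 v‖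

lemma norm_le_oneN (x : RS F) : ‖x‖ ≤ oneN F x := by
  have h1 : 0 ≤ ∑ v, |x.1 v| := Finset.sum_nonneg fun _ _ => abs_nonneg _
  have h2 : 0 ≤ ∑ v, 2 * ‖x.2 v‖ := Finset.sum_nonneg fun _ _ => by positivity
  have h0 : 0 ≤ oneN F x := add_nonneg h1 h2
  rw [Prod.norm_def, max_le_iff]
  constructor
  · refine (pi_norm_le_iff_of_nonneg h0).2 fun v => ?_
    have := Finset.single_le_sum (f := fun v => |x.1 v|) (fun _ _ => abs_nonneg _)
      (Finset.mem_univ v)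
    rw [Real.norm_eq_abs, oneN]
    linarith
  · refine (pi_norm_le_iff_of_nonneg h0).2 fun v => ?_
    have := Finset.single_le_sum (f := fun v => 2 * ‖x.2 v‖) (fun _ _ => by positivity)
      (Finset.mem_univ v)
    have h3 := norm_nonneg (x.2 v)
    rw [oneN]
    linarith

lemma exp_decay {a : ℝ} (ha : 0 < a) (m : ℕ) :
    ∃ C, 0 ≤ C ∧ ∀ y : ℝ, 0 ≤ y → Real.exp (-(a * y)) ≤ C * (1 + y) ^ (-(m : ℝ)) := by
  refine ⟨m.factorial * Real.exp a / a ^ m, by positivity, fun y hy => ?_⟩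
  have h := Real.pow_div_factorial_le_exp (x := a * (1 + y)) (by positivity) m
  have h1 : 0 < (1 + y) ^ m := by positivity
  rw [Real.rpow_neg (by positivity), Real.rpow_natCast, ← div_eq_mul_inv, le_div_iff₀ h1,
    le_div_iff₀ (by positivity)]
  rw [mul_pow, div_le_iff₀ (by positivity), mul_add, mul_one, Real.exp_add] at h
  have h2 : Real.exp (-(a * y)) * Real.exp (a * y) = 1 := by
    rw [← Real.exp_add, neg_add_cancel, Real.exp_zero]
  calc Real.exp (-(a * y)) * (1 + y) ^ m * a ^ m = Real.exp (-(a * y)) * (a ^ m * (1 + y) ^ m) := by ring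
    _ ≤ Real.exp (-(a * y)) * (Real.exp a * Real.exp (a * y) * m.factorial) := by gcongr
    _ = (Real.exp (-(a * y)) * Real.exp (a * y)) * (m.factorial * Real.exp a) := by ring
    _ = _ := by rw [h2, one_mul]

/-- Exponential decay in `oneN` is faster than any power of the norm, in any linear coordinates. -/
lemma oneN_decay {ι : Type} [Fintype ι] (M : (ι → ℝ) ≃L[ℝ] RS F) {a : ℝ} (ha : 0 < a) (m : ℕ) :
    ∃ C, 0 ≤ C ∧ ∀ u, Real.exp (-(a * oneN F (M u))) ≤ C * (1 + ‖u‖) ^ (-(m : ℝ)) := by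
  set K : ℝ := ‖(M.symm : RS F →L[ℝ] (ι → ℝ))‖ + 1 with hK
  have hK0 : 0 < K := by positivity
  have hu (u : ι → ℝ) : ‖u‖ / K ≤ oneN F (M u) := by
    refine le_trans ?_ (norm_le_oneN F _)
    rw [div_le_iff₀ hK0, mul_comm]
    have h := (M.symm : RS F →L[ℝ] (ι → ℝ)).le_opNorm (M u)
    have h2 : (M.symm : RS F →L[ℝ] (ι → ℝ)) (M u) = u := M.symm_apply_apply u
    rw [h2] at h
    refine h.trans ?_
    gcongr
    linarith
  obtain ⟨C, hC0, hC⟩ := exp_decay (a := a / K) (by positivity) m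
  refine ⟨C, hC0, fun u => le_trans (Real.exp_le_exp.2 ?_) (hC ‖u‖ (norm_nonneg _))⟩
  have := mul_le_mul_of_nonneg_left (hu u) ha.le
  rw [neg_le_neg_iff, div_mul_eq_mul_div, ← mul_div_assoc] at *
  exact this

/-- Multiplication by a unit of `F_ℝ`. -/
def mulE {t : RS F} (ht : IsUnit t) : RS F ≃L[ℝ] RS F :=
  (LinearEquiv.ofLinearMap (LinearMap.mulLeft ℝ t) (LinearMap.mulLeft ℝ (Ring.inverse t))
    (LinearMap.ext fun x => by
      rw [LinearMap.comp_apply, LinearMap.mulLeft_apply, LinearMap.mulLeft_apply, ← mul_assoc,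
        Ring.mul_inverse_cancel t ht, one_mul]; rfl)
    (LinearMap.ext fun x => by
      rw [LinearMap.comp_apply, LinearMap.mulLeft_apply, LinearMap.mulLeft_apply, ← mul_assoc,
        Ring.inverse_mul_cancel t ht, one_mul]; rfl)).toContinuousLinearEquiv

lemma mulE_apply {t : RS F} (ht : IsUnit t) (x) : mulE F ht x = t * x := rfl

/-- Exponentially decaying functions are summable over ideal lattices. -/
lemma summable_oneN (b : FractionalIdeal (𝓞 F)⁰ F) (hb : b ≠ 0) {t : RS F} (ht : IsUnit t)
    {a : ℝ} (ha : 0 < a) :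
    Summable fun β : {x : F // x ∈ b} => Real.exp (-(a * oneN F (t * mixedEmbedding F (β : F)))) := by
  obtain ⟨ι, _, L, e, d, h1, h2, h3⟩ := exists_chart F b hb
  obtain ⟨C, hC0, hC⟩ := oneN_decay F (L.trans (mulE F ht)) ha (Fintype.card ι + 1)
  rw [← e.summable_iff]
  refine Summable.of_nonneg_of_le (fun _ => (Real.exp_pos _).le) (fun n => ?_)
    ((summable_one_add_norm_intPt (ι := ι) (r := ((Fintype.card ι + 1 : ℕ) : ℝ))
      (by push_cast; linarith)).mul_left C)
  have := hC (intPt n)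
  rwa [ContinuousLinearEquiv.trans_apply, mulE_apply, h1] at this

/-- The Gaussian decays exponentially, since `x² ≥ |x| - 1`. -/
lemma fR_le_oneN : ∃ C, 0 ≤ C ∧ ∀ x, fR F x ≤ C * Real.exp (-(Real.pi * oneN F x)) := by
  refine ⟨Real.exp (Real.pi * ((∑ _v : {v : InfinitePlace F // v.IsReal}, (1 : ℝ)) +
    ∑ _v : {v : InfinitePlace F // v.IsComplex}, 2)), (Real.exp_pos _).le, fun x => ?_⟩
  rw [fR_eq_exp, ← Real.exp_add, Real.exp_le_exp, oneN]
  have h1 : (∑ v, |x.1 v|) ≤ (∑ v, x.1 v ^ 2) + ∑ _v : {v : InfinitePlace F // v.IsReal}, (1 : ℝ) := by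
    rw [← Finset.sum_add_distrib]
    refine Finset.sum_le_sum fun v _ => ?_
    rw [← sq_abs]
    nlinarith [sq_nonneg (|x.1 v| - 1), abs_nonneg (x.1 v)]
  have h2 : (∑ v, 2 * ‖x.2 v‖) ≤ (∑ v, 2 * ‖x.2 v‖ ^ 2) +
      ∑ _v : {v : InfinitePlace F // v.IsComplex}, (2 : ℝ) := by
    rw [← Finset.sum_add_distrib]
    refine Finset.sum_le_sum fun v _ => ?_
    nlinarith [sq_nonneg (‖x.2 v‖ - 1), norm_nonneg (x.2 v)]
  nlinarith [Real.pi_pos]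

/-- The trace dual of `b` as a fractional ideal. -/
lemma exists_dual (b : FractionalIdeal (𝓞 F)⁰ F) (hb : b ≠ 0) :
    ∃ b' : FractionalIdeal (𝓞 F)⁰ F, b' ≠ 0 ∧ ∀ x, x ∈ b' ↔ x ∈ dualIdealSet F b := by
  refine ⟨FractionalIdeal.dual ℤ ℚ b, FractionalIdeal.dual_ne_zero ℤ ℚ hb, fun x => ?_⟩
  rw [FractionalIdeal.mem_dual hb]
  refine forall₂_congr fun β hβ => ?_
  rw [Algebra.traceForm_apply, mul_comm]
  simp [eq_comm]

/-- The Gaussian is summable over the dual of an ideal, which is itself an ideal lattice. -/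
lemma summable_dual (b : FractionalIdeal (𝓞 F)⁰ F) (hb : b ≠ 0) {t : RS F} (ht : IsUnit t) :
    Summable fun β : dualIdealSet F b => fR F (t * mixedEmbedding F (β : F)) := by
  obtain ⟨b', hb', h⟩ := exists_dual F b hb
  obtain ⟨C, hC0, hC⟩ := fR_le_oneN F
  rw [← (Equiv.subtypeEquivRight h).summable_iff]
  exact Summable.of_nonneg_of_le (fun _ => (fR_pos F _).le) (fun n => hC _)
    ((summable_oneN F b' hb' ht Real.pi_pos).mul_left C)

/-- Change of variables along a linear chart of Jacobian `V`. -/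
lemma integral_chart {ι : Type} [Fintype ι] (L : (ι → ℝ) ≃L[ℝ] RS F) {V : ℝ} (hV : 0 < V)
    (h : measR F = ENNReal.ofReal V • Measure.map L volume) (φ : RS F → ℂ) :
    ∫ v, φ (L v) = V⁻¹ * ∫ x, φ x ∂(measR F) := by
  rw [h, integral_smul_measure, ENNReal.toReal_ofReal hV.le,
    show ∫ x, φ x ∂(Measure.map L volume) = _ from
      integral_map_equiv L.toHomeomorph.toMeasurableEquiv φ, Complex.real_smul, ← mul_assoc]
  have : (V : ℂ) ≠ 0 := by exact_mod_cast hV.ne'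
  rw [Complex.ofReal_inv, inv_mul_cancel₀ this, one_mul]
  rfl

/-- The covolume `V(b)` of an ideal in `F_ℝ`. -/
def VI (b : FractionalIdeal (𝓞 F)⁰ F) : ℝ := Real.sqrt (dF F) * (FractionalIdeal.absNorm b : ℚ)

lemma absNorm_pos {b : FractionalIdeal (𝓞 F)⁰ F} (hb : b ≠ 0) :
    (0:ℝ) < (FractionalIdeal.absNorm b : ℚ) := by
  have h1 := FractionalIdeal.absNorm_nonneg b
  have h2 : FractionalIdeal.absNorm b ≠ 0 := fun h => hb (FractionalIdeal.absNorm_eq_zero_iff.1 h)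
  exact_mod_cast lt_of_le_of_ne h1 h2.symm

lemma VI_pos {b : FractionalIdeal (𝓞 F)⁰ F} (hb : b ≠ 0) : 0 < VI F b :=
  mul_pos (Real.sqrt_pos.2 (dF_pos F)) (absNorm_pos F hb)

/-- Poisson summation for the Gaussian over a translate of an ideal lattice. -/
lemma ideal_poisson (b : FractionalIdeal (𝓞 F)⁰ F) (hb : b ≠ 0) {t : RS F} (ht : IsUnit t)
    (c : RS F) :
    (∑' β : {x : F // x ∈ b}, (fR F (t * (c + mixedEmbedding F (β : F))) : ℂ)) =
      (((VI F b)⁻¹ * (normR F t)⁻¹ : ℝ) : ℂ) * ∑' β : dualIdealSet F b,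
        Complex.exp (2 * Real.pi * Complex.I * TrR F (c * mixedEmbedding F (β : F))) *
          (fR F (Ring.inverse t * mixedEmbedding F (β : F)) : ℂ) := by
  obtain ⟨ι, _, L, e, d, h1, h2, h3⟩ := exists_chart F b hb
  obtain ⟨C, hC0, hC⟩ := oneN_decay F (L.trans (mulE F ht)) Real.pi_pos (Fintype.card ι + 1)
  obtain ⟨C', hC0', hC'⟩ := fR_le_oneN F
  have hP := poisson (ι := ι) (g := fun u => (fR F (t * L u) : ℂ)) (C := C' * C)
    (r := ((Fintype.card ι + 1 : ℕ) : ℝ))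
    (c := fun k => (((VI F b)⁻¹ * (normR F t)⁻¹ : ℝ) : ℂ) *
      (fR F (Ring.inverse t * mixedEmbedding F (d k : F)) : ℂ))
    (Complex.continuous_ofReal.comp ((continuous_fR F).comp (by fun_prop)))
    (by push_cast; linarith)
    (fun u => by
      rw [Complex.norm_real, Real.norm_eq_abs, abs_of_pos (fR_pos F _)]
      refine (hC' _).trans ?_
      rw [mul_assoc]
      exact mul_le_mul_of_nonneg_left (hC u) hC0')
    (fun k => by
      have := integral_chart F L (VI_pos F hb) h3 (fun x =>
        Complex.exp (-(2 * Real.pi * Complex.I * TrR F (x * mixedEmbedding F (d k : F)))) *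
          (fR F (t * x) : ℂ))
      rw [fourier_fR F ht] at this
      simp only [mul_comm _ (mixedEmbedding F (d k : F)), h2] at this
      rw [this]
      push_cast
      ring_nf)
    (by
      refine Summable.mul_left _ ?_
      have := (summable_dual F b hb (IsUnit.ringInverse ht))
      rw [← d.summable_iff] at this
      exact Complex.ofRealCLM.summable this)
    (L.symm c)
  rw [← e.tsum_eq, ← d.tsum_eq, ← tsum_mul_left]
  refine Eq.trans (tsum_congr fun n => ?_) (hP.trans (tsum_congr fun k => ?_))
  · rw [map_add, h1, ContinuousLinearEquiv.apply_symm_apply]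
  · rw [← h2, ContinuousLinearEquiv.apply_symm_apply, mul_comm (mixedEmbedding F _) c]
    ring

/-! ### The multiplicative measure and Mellin transforms -/

lemma measurableSet_TF : MeasurableSet (TF F) := by
  have h : TF F = normR F ⁻¹' {0}ᶜ := by
    ext t
    exact isUnit_iff_normR F t
  rw [h]
  exact (continuous_normR F).measurable (measurableSet_singleton 0).compl

/-- The Haar measure of the multiplicative group `T_F`, as a measure on `F_ℝ`. -/
def muT : Measure (RS F) := (measT F).restrict (TF F)

lemma measurable_dens : Measurable fun t => ENNReal.ofReal (1 / normR F t) :=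
  ENNReal.measurable_ofReal.comp (measurable_const.div (continuous_normR F).measurable)

lemma lintegral_muT {φ : RS F → ENNReal} (hφ : Measurable φ) :
    ∫⁻ t, φ t ∂(muT F) = ∫⁻ t in TF F, ENNReal.ofReal (1 / normR F t) * φ t ∂(measR F) := by
  rw [muT, measT, setLIntegral_withDensity_eq_setLIntegral_mul _ (measurable_dens F) hφ
    (measurableSet_TF F)]
  rfl

/-- Multiplication by `u` on `F_ℝ` scales volumes by `|N(u)|`. -/
lemma det_mulLeft (u : RS F) : |LinearMap.det (LinearMap.mulLeft ℝ u)| = normR F u := by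
  have h : LinearMap.mulLeft ℝ u = LinearMap.prodMap
      (LinearMap.pi fun v => (LinearMap.mulLeft ℝ (u.1 v)) ∘ₗ LinearMap.proj v)
      (LinearMap.pi fun v => (LinearMap.mulLeft ℝ (u.2 v)) ∘ₗ LinearMap.proj v) :=
    LinearMap.ext fun x => rfl
  rw [h, LinearMap.det_prodMap, LinearMap.det_pi, LinearMap.det_pi, abs_mul, Finset.abs_prod,
    Finset.abs_prod, normR]
  congr 1
  · refine Finset.prod_congr rfl fun v _ => ?_
    rw [LinearMap.det_ring, LinearMap.mulLeft_apply, mul_one]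
  · refine Finset.prod_congr rfl fun v _ => ?_
    have : LinearMap.det (LinearMap.mulLeft ℝ (u.2 v)) = Algebra.norm ℝ (u.2 v) := rfl
    rw [this, Algebra.norm_complex_apply, Complex.normSq_eq_norm_sq, abs_of_nonneg (by positivity)]

lemma map_mul_measR {u : RS F} (hu : IsUnit u) :
    Measure.map (fun t => t * u) (measR F) = ENNReal.ofReal (normR F u)⁻¹ • measR F := by
  have h := det_mulLeft F u
  have h0 : LinearMap.det (LinearMap.mulLeft ℝ u) ≠ 0 := by
    intro h1
    rw [h1, abs_zero] at h
    exact (normR_pos F hu).ne h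
  have h2 := Measure.map_linearMap_addHaar_eq_smul_addHaar (measR F) h0
  rw [abs_inv, h] at h2
  rw [← h2]
  congr 1
  funext t
  exact mul_comm _ _

lemma measurable_mul_right (u : RS F) : Measurable fun t : RS F => t * u :=
  (continuous_id.mul continuous_const).measurable

/-- The measure `d^×t` is invariant under multiplication by units of `F_ℝ`. -/
lemma mp_mul {u : RS F} (hu : IsUnit u) :
    MeasurePreserving (fun t => t * u) (muT F) (muT F) := by
  refine ⟨measurable_mul_right F u, ?_⟩
  refine Measure.ext_of_lintegral _ fun φ hφ => ?_
  have hm := measurable_mul_right F u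
  have hN := normR_pos F hu
  have h0 : ∫⁻ t, φ (t * u) ∂(muT F) =
      ∫⁻ t in TF F, ENNReal.ofReal (1 / normR F t) * φ (t * u) ∂(measR F) :=
    lintegral_muT F (hφ.comp hm)
  rw [lintegral_map hφ hm, lintegral_muT F hφ, h0]
  set ψ : RS F → ENNReal := (TF F).indicator fun t => ENNReal.ofReal (1 / normR F t) * φ t with hψ
  have hψm : Measurable ψ := ((measurable_dens F).mul hφ).indicator (measurableSet_TF F)
  have h1 : ∫⁻ t, ψ (t * u) ∂(measR F) = ENNReal.ofReal (normR F u)⁻¹ * ∫⁻ t, ψ t ∂(measR F) := by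
    rw [← lintegral_map hψm hm, map_mul_measR F hu, lintegral_smul_measure, smul_eq_mul]
  rw [← lintegral_indicator (measurableSet_TF F), ← lintegral_indicator (measurableSet_TF F)]
  have h2 : (TF F).indicator (fun t => ENNReal.ofReal (1 / normR F t) * φ (t * u)) =
      fun t => ENNReal.ofReal (normR F u) * ψ (t * u) := by
    funext t
    by_cases ht : t ∈ TF F
    · have ht' : t * u ∈ TF F := IsUnit.mul ht hu
      rw [Set.indicator_of_mem ht, hψ, Set.indicator_of_mem ht', ← mul_assoc,
        ← ENNReal.ofReal_mul hN.le, normR_mul]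
      congr 2
      have := normR_pos F ht
      field_simp
    · have ht' : t * u ∉ TF F := fun h => ht (isUnit_of_mul_isUnit_left h)
      rw [Set.indicator_of_notMem ht, hψ, Set.indicator_of_notMem ht', mul_zero]
  have h3 : ∫⁻ t, ENNReal.ofReal (normR F u) * ψ (t * u) ∂(measR F) =
      ENNReal.ofReal (normR F u) * ∫⁻ t, ψ (t * u) ∂(measR F) :=
    lintegral_const_mul _ (hψm.comp hm)
  rw [h2, h3, h1, ← mul_assoc, ← ENNReal.ofReal_mul hN.le,
    mul_inv_cancel₀ hN.ne', ENNReal.ofReal_one, one_mul]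

lemma measurableEmbedding_mul {u : RS F} (hu : IsUnit u) :
    MeasurableEmbedding (fun t : RS F => t * u) := by
  have : (fun t : RS F => t * u) = mulE F hu := by
    funext t; rw [mulE_apply, mul_comm]
  rw [this]
  exact (mulE F hu).toHomeomorph.measurableEmbedding

lemma integral_mul_right {u : RS F} (hu : IsUnit u) (φ : RS F → ℂ) :
    ∫ t, φ (t * u) ∂(muT F) = ∫ t, φ t ∂(muT F) :=
  (mp_mul F hu).integral_comp (measurableEmbedding_mul F hu) φ

lemma lintegral_mul_right {u : RS F} (hu : IsUnit u) (φ : RS F → ENNReal) :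
    ∫⁻ t, φ (t * u) ∂(muT F) = ∫⁻ t, φ t ∂(muT F) :=
  (mp_mul F hu).lintegral_comp_emb (measurableEmbedding_mul F hu) φ

lemma ae_muT {p : RS F → Prop} (h : ∀ t, IsUnit t → p t) : ∀ᵐ t ∂(muT F), p t :=
  (ae_restrict_mem (measurableSet_TF F)).mono fun t ht => h t ht

/-- Convergence at `0` and at infinity of the local Gamma integrals. -/
lemma integrable_radial {E : Type*} [NormedAddCommGroup E] [NormedSpace ℝ E] [MeasurableSpace E]
    [BorelSpace E] [FiniteDimensional ℝ E] [Nontrivial E] (μ : Measure E) [μ.IsAddHaarMeasure]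
    {c q : ℝ} (hc : 0 < c) (hq : 0 < Module.finrank ℝ E + q) :
    Integrable (fun x : E => ‖x‖ ^ q * Real.exp (-c * ‖x‖ ^ 2)) μ := by
  have hd : 1 ≤ Module.finrank ℝ E := Module.finrank_pos
  rw [integrable_fun_norm_addHaar μ (f := fun y => y ^ q * Real.exp (-c * y ^ 2))]
  have h := integrableOn_rpow_mul_exp_neg_mul_sq hc
    (s := ((Module.finrank ℝ E - 1 : ℕ) : ℝ) + q) (by push_cast [hd]; linarith)
  refine h.congr_fun (fun y hy => ?_) measurableSet_Ioi
  simp only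
  rw [Real.rpow_add hy, Real.rpow_natCast, smul_eq_mul, mul_assoc]

/-- The Gamma integral converges for positive real exponents. -/
lemma gamma_finite {σ : ℝ} (hσ : 0 < σ) :
    ∫⁻ t, ENNReal.ofReal (fR F t * normR F t ^ σ) ∂(muT F) < ⊤ := by
  have h1 : Integrable (fun w : {v : InfinitePlace F // v.IsReal} → ℝ =>
      ∏ v, (‖w v‖ ^ (σ - 1) * Real.exp (-Real.pi * ‖w v‖ ^ 2))) (Measure.pi fun _ => volume) :=
    Integrable.fintype_prod (f := fun _ x => ‖x‖ ^ (σ - 1) * Real.exp (-Real.pi * ‖x‖ ^ 2)) fun v =>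
      integrable_radial volume Real.pi_pos (by simp [hσ])
  have h2 : Integrable (fun w : {v : InfinitePlace F // v.IsComplex} → ℂ =>
      ∏ v, (‖w v‖ ^ (2 * (σ - 1)) * Real.exp (-(2 * Real.pi) * ‖w v‖ ^ 2)))
        (Measure.pi fun _ => (2 : ENNReal) • volume) :=
    Integrable.fintype_prod (f := fun _ x => ‖x‖ ^ (2 * (σ - 1)) *
      Real.exp (-(2 * Real.pi) * ‖x‖ ^ 2)) fun v =>
      integrable_radial _ Real.two_pi_pos (by rw [Complex.finrank_real_complex]; push_cast; linarith)
  have h3 := (h1.mul_prod h2)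
  have hm : Measurable fun t => ENNReal.ofReal (fR F t * normR F t ^ σ) :=
    ENNReal.measurable_ofReal.comp ((continuous_fR F).measurable.mul
      ((continuous_normR F).measurable.pow_const σ))
  rw [lintegral_muT F hm]
  refine lt_of_le_of_lt ?_ h3.2
  refine (setLIntegral_mono' (measurableSet_TF F) fun t ht => ?_).trans (setLIntegral_le_lintegral _ _)
  have hN := normR_pos F ht
  rw [← ENNReal.ofReal_mul (by positivity), ← ofReal_norm]
  refine ENNReal.ofReal_le_ofReal ?_
  rw [Real.norm_eq_abs, abs_of_nonneg (by positivity)]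
  apply le_of_eq
  calc 1 / normR F t * (fR F t * normR F t ^ σ) = fR F t * normR F t ^ (σ - 1) := by
        rw [Real.rpow_sub_one hN.ne']; field_simp
    _ = _ := by
        rw [normR, Real.mul_rpow (by positivity) (by positivity),
          ← Real.finsetProd_rpow _ _ (fun _ _ => abs_nonneg _),
          ← Real.finsetProd_rpow _ _ (fun _ _ => by positivity), fR_eq, mul_mul_mul_comm,
          ← Finset.prod_mul_distrib, ← Finset.prod_mul_distrib]
        congr 1
        · refine Finset.prod_congr rfl fun v _ => ?_
          rw [mul_comm, Real.norm_eq_abs, sq_abs]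
        · refine Finset.prod_congr rfl fun v _ => ?_
          rw [mul_comm, ← Real.rpow_natCast, ← Real.rpow_mul (norm_nonneg _)]
          norm_num

lemma GammaF_eq (s : ℂ) : GammaF F s = ∫ t, (fR F t : ℂ) * (normR F t : ℂ) ^ s ∂(muT F) := rfl

lemma cpow_mul_normR (t u : RS F) (s : ℂ) :
    (normR F (t * u) : ℂ) ^ s = (normR F t : ℂ) ^ s * (normR F u : ℂ) ^ s := by
  rw [normR_mul, Complex.ofReal_mul,
    Complex.mul_cpow_ofReal_nonneg (normR_nonneg F t) (normR_nonneg F u)]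

lemma cpow_normR_ne {u : RS F} (hu : IsUnit u) (s : ℂ) : (normR F u : ℂ) ^ s ≠ 0 := by
  rw [Complex.cpow_ne_zero_iff]
  left
  exact_mod_cast (normR_pos F hu).ne'

/-- Mellin transform of a dilated Gaussian. -/
lemma gamma_dilate {u : RS F} (hu : IsUnit u) (s : ℂ) :
    ∫ t, (fR F (t * u) : ℂ) * (normR F t : ℂ) ^ s ∂(muT F) =
      GammaF F s * (normR F u : ℂ) ^ (-s) := by
  have h := integral_mul_right F hu (fun t => (fR F t : ℂ) * (normR F t : ℂ) ^ s)
  rw [← GammaF_eq] at h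
  rw [← h, ← integral_mul_const]
  refine integral_congr_ae (Filter.Eventually.of_forall fun t => ?_)
  simp only
  rw [cpow_mul_normR, Complex.cpow_neg]
  have := cpow_normR_ne F hu s
  field_simp

lemma BF_eq (a b : RS F) (s : ℂ) : BF F a b s =
    ∫ t, ((fR F (t * a) * fR F (Ring.inverse t * b) : ℝ) : ℂ) * (normR F t : ℂ) ^ (2 * s) ∂(muT F) := rfl

/-- For `b = 0` the function `B_F` degenerates to a Gamma factor. -/
lemma BF_zero {u : RS F} (hu : IsUnit u) (s : ℂ) :
    BF F u 0 s = GammaF F (2 * s) * (normR F u : ℂ) ^ (-(2 * s)) := by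
  rw [← gamma_dilate F hu, BF_eq]
  simp only [mul_zero, fR_zero, mul_one]

/-- `B_F(ua, u⁻¹b, s) = B_F(a, b, s)` when `|N(u)| = 1`. -/
lemma BF_unit {u : RS F} (hu : IsUnit u) (h1 : normR F u = 1) (a b : RS F) (s : ℂ) :
    BF F (u * a) (Ring.inverse u * b) s = BF F a b s := by
  rw [BF_eq, BF_eq, ← integral_mul_right F hu (fun t =>
    ((fR F (t * a) * fR F (Ring.inverse t * b) : ℝ) : ℂ) * (normR F t : ℂ) ^ (2 * s))]
  refine integral_congr_ae (ae_muT F fun t ht => ?_)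
  simp only
  rw [cpow_mul_normR, h1, Ring.mul_inverse_rev t u]
  have e1 : t * u * a = t * (u * a) := mul_assoc _ _ _
  have e2 : Ring.inverse u * Ring.inverse t * b = Ring.inverse t * (Ring.inverse u * b) := by ring
  rw [e1, e2]
  simp

/-! ### Convergence of partial zeta functions -/

/-- The Dedekind zeta series converges absolutely for `ρ > 1`, as a sum over integral ideals. -/
lemma summable_ideals {ρ : ℝ} (hρ : 1 < ρ) :
    Summable fun I : Ideal (𝓞 F) => ((Ideal.absNorm I : ℕ) : ℝ) ^ (-ρ) := by
  -- The number of ideals of norm at most `n` is `O(n)`.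
  have hO : (fun n : ℕ => ∑ k ∈ Finset.Icc 1 n,
      ((Nat.card {I : Ideal (𝓞 F) // Ideal.absNorm I = k} : ℕ) : ℝ)) =O[Filter.atTop]
        fun n => (n : ℝ) ^ (1 : ℝ) := by
    have h := (NumberField.Ideal.tendsto_norm_le_div_atTop₀ F).comp tendsto_natCast_atTop_atTop
    have h2 := h.isBigO_one ℝ
    have h3 := h2.mul (Asymptotics.isBigO_refl (fun n : ℕ => (n : ℝ)) Filter.atTop)
    refine (h3.congr' ?_ ?_)
    · filter_upwards [Filter.eventually_gt_atTop 0] with n hn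
      have hn' : (n : ℝ) ≠ 0 := by exact_mod_cast hn.ne'
      simp only [Function.comp_apply, Nat.cast_le]
      rw [div_mul_cancel₀ _ hn', ← Nat.cast_sum]
      congr
      rw [← add_left_inj 1, ← Ideal.card_norm_le_eq_card_norm_le_add_one,
        show Finset.Icc 1 n = Finset.Ioc 0 n from Finset.Icc_succ_left_eq_Ioc _ _,
        show 1 = Nat.card {I : Ideal (𝓞 F) // Ideal.absNorm I = 0} by
          simp [Ideal.absNorm_eq_zero_iff],
        Finset.sum_Ioc_add_eq_sum_Icc (n.zero_le),
        ← Finset.card_preimage_eq_sum_card_image_eq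
          (fun k _ ↦ Ideal.finite_setOfPred_absNorm_eq k)]
      simp [Set.coe_eq_subtype]
    · filter_upwards with n
      simp
  have hL := LSeriesSummable_of_sum_norm_bigO_and_nonneg hO (fun _ => Nat.cast_nonneg _)
    zero_le_one (s := (ρ : ℂ)) (by simpa using hρ)
  rw [← (Equiv.sigmaFiberEquiv fun I : Ideal (𝓞 F) => Ideal.absNorm I).summable_iff]
  have hfin : ∀ n : ℕ, Finite {I : Ideal (𝓞 F) // Ideal.absNorm I = n} := fun n =>
    (Ideal.finite_setOfPred_absNorm_eq n).to_subtype
  have hval : ∀ (n : ℕ) (I : {I : Ideal (𝓞 F) // Ideal.absNorm I = n}),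
      ((fun I : Ideal (𝓞 F) => ((Ideal.absNorm I : ℕ) : ℝ) ^ (-ρ)) ∘
        (Equiv.sigmaFiberEquiv fun I : Ideal (𝓞 F) => Ideal.absNorm I)) ⟨n, I⟩ =
        (n : ℝ) ^ (-ρ) := by
    intro n I
    have := I.2
    simp only [Function.comp_apply, Equiv.sigmaFiberEquiv_apply]
    rw [this]
  rw [summable_sigma_of_nonneg (fun x => by simp only [Function.comp_apply]; positivity)]
  refine ⟨fun n => Summable.of_finite, ?_⟩
  refine (hL.norm).congr fun n => ?_
  rw [tsum_congr (hval n), tsum_const, nsmul_eq_mul, LSeries.norm_term_eq]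
  split_ifs with h
  · rw [h, Nat.cast_zero, Real.zero_rpow (by linarith), mul_zero]
  · rw [Complex.ofReal_re, Complex.norm_real, Real.norm_eq_abs, abs_of_nonneg (Nat.cast_nonneg _),
      Real.rpow_neg (Nat.cast_nonneg _), div_eq_mul_inv]

/-- The ideal `(α) a⁻¹` attached to `α ∈ a`. -/
lemma exists_ideal {a : FractionalIdeal (𝓞 F)⁰ F} (ha : a ≠ 0) {α : F} (hα : α ∈ a) :
    ∃ I : Ideal (𝓞 F), (I : FractionalIdeal (𝓞 F)⁰ F) * a = FractionalIdeal.spanSingleton _ α := by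
  have h : FractionalIdeal.spanSingleton (𝓞 F)⁰ α * a⁻¹ ≤ 1 := by
    rw [← mul_inv_cancel₀ ha]
    exact mul_le_mul_left ((FractionalIdeal.spanSingleton_le_iff_mem).2 hα) _
  obtain ⟨I, hI⟩ := FractionalIdeal.le_one_iff_exists_coeIdeal.1 h
  exact ⟨I, by rw [hI, mul_assoc, inv_mul_cancel₀ ha, mul_one]⟩

/-- Absolute convergence of the partial zeta function of `a` for `ρ > 1`. -/
lemma summable_norm {a : FractionalIdeal (𝓞 F)⁰ F} (ha : a ≠ 0) {Ra : Set F}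
    (hRa : IsIdealRepr F a Ra) {ρ : ℝ} (hρ : 1 < ρ) :
    Summable fun r : Ra => normR F (mixedEmbedding F (r : F)) ^ (-ρ) := by
  choose I hI using fun r : Ra => exists_ideal F ha (hRa.1 r r.2)
  -- Generators of the same ideal differ by a unit, so distinct representatives give distinct ideals.
  have hinj : Function.Injective I := by
    intro r r' h
    have h1 : FractionalIdeal.spanSingleton (𝓞 F)⁰ (r : F) = FractionalIdeal.spanSingleton _ (r' : F) := by
      rw [← hI, ← hI, h]
    have h0 : (r' : F) ≠ 0 := fun h => hRa.2.1 (h ▸ r'.2)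
    have h2 := congrArg (fun J : FractionalIdeal (𝓞 F)⁰ F => (J : Submodule (𝓞 F) F)) h1
    simp only [FractionalIdeal.coe_spanSingleton] at h2
    obtain ⟨ε, hε⟩ := Submodule.span_singleton_eq_span_singleton.1 h2
    obtain ⟨q, -, hq⟩ := hRa.2.2 r' (hRa.1 r' r'.2) h0
    have e1 := hq r ⟨r.2, ε, by rw [← hε, Units.smul_def, Algebra.smul_def]⟩
    have e2 := hq r' ⟨r'.2, 1, by simp⟩
    exact Subtype.ext (e1.trans e2.symm)
  have h2 := ((summable_ideals F hρ).comp_injective hinj).mul_left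
    (((FractionalIdeal.absNorm a : ℚ) : ℝ) ^ (-ρ))
  refine h2.congr fun r => ?_
  have h3 := congrArg FractionalIdeal.absNorm (hI r)
  rw [map_mul, FractionalIdeal.coeIdeal_absNorm, FractionalIdeal.absNorm_span_singleton] at h3
  have hna : (0 : ℝ) ≤ (FractionalIdeal.absNorm a : ℚ) := by
    exact_mod_cast FractionalIdeal.absNorm_nonneg a
  rw [normR_mixedEmbedding, ← h3, mul_comm, Function.comp_apply,
    ← Real.mul_rpow (Nat.cast_nonneg _) hna]
  push_cast
  rfl

/-! ### The covolume of `𝔞z + 𝔟` -/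

lemma ofC (z : ℂ) : (Quaternion.ofComplex.toRingHom : ℂ →+* Quaternion ℝ) z = ⟨z.re, z.im, 0, 0⟩ := rfl

/-- The decomposition `F_ℝ × F_ℝ ≃ D_F`, `(u, w) ↦ w + u j_F`. -/
def Psi : (RS F × RS F) ≃ₗ[ℝ] DS F where
  toFun p := (fun v => ⟨p.2.1 v, p.1.1 v⟩,
    fun v => ⟨(p.2.2 v).re, (p.2.2 v).im, (p.1.2 v).re, (p.1.2 v).im⟩)
  invFun z := (projY F z, projX F z)
  map_add' p q := by
    refine Prod.ext (funext fun v => ?_) (funext fun v => ?_)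
    · exact Complex.ext rfl rfl
    · exact QuaternionAlgebra.ext rfl rfl rfl rfl
  map_smul' c p := by
    refine Prod.ext (funext fun v => ?_) (funext fun v => ?_)
    · exact Complex.ext (by simp) (by simp)
    · refine QuaternionAlgebra.ext ?_ ?_ ?_ ?_ <;> simp <;> rfl
  left_inv p := rfl
  right_inv z := rfl

lemma Psi_apply (u w : RS F) : Psi F (u, w) = structureMap F w + structureMap F u * jF F := by
  refine Prod.ext (funext fun v => ?_) (funext fun v => ?_)
  · show (⟨w.1 v, u.1 v⟩ : ℂ) = (w.1 v : ℂ) + (u.1 v : ℂ) * Complex.I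
    exact Complex.ext (by simp) (by simp)
  · have h : ∀ p q r : Quaternion ℝ, p = ⟨(w.2 v).re, (w.2 v).im, 0, 0⟩ →
        q = ⟨(u.2 v).re, (u.2 v).im, 0, 0⟩ → r = ⟨0, 0, 1, 0⟩ → (Psi F (u, w)).2 v = p + q * r := by
      intro p q r hp hq hr
      refine QuaternionAlgebra.ext ?_ ?_ ?_ ?_
      · rw [Quaternion.re_add, Quaternion.re_mul, hp, hq, hr]; simp; rfl
      · rw [Quaternion.imI_add, Quaternion.imI_mul, hp, hq, hr]; simp; rfl
      · rw [Quaternion.imJ_add, Quaternion.imJ_mul, hp, hq, hr]; simp; rfl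
      · rw [Quaternion.imK_add, Quaternion.imK_mul, hp, hq, hr]; simp; rfl
    exact h _ _ _ rfl rfl rfl

/-- The Gaussian of `D_F` is the product of the Gaussians of the two coordinates. -/
lemma fD_Psi (u w : RS F) : fD F (Psi F (u, w)) = fR F u * fR F w := by
  rw [fR_eq, fR_eq, fD, mul_mul_mul_comm, ← Finset.prod_mul_distrib, ← Finset.prod_mul_distrib]
  congr 1
  · refine Finset.prod_congr rfl fun v _ => ?_
    rw [← Real.exp_add]
    congr 1
    show _ * ‖(⟨w.1 v, u.1 v⟩ : ℂ)‖ ^ 2 = _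
    rw [← Complex.normSq_eq_norm_sq, Complex.normSq_mk]
    ring
  · refine Finset.prod_congr rfl fun v _ => ?_
    rw [← Real.exp_add]
    congr 1
    rw [show ‖(Psi F (u, w)).2 v‖ ^ 2 = (w.2 v).re ^ 2 + (w.2 v).im ^ 2 + (u.2 v).re ^ 2 +
      (u.2 v).im ^ 2 by
        rw [sq, ← Quaternion.normSq_eq_norm_mul_self, Quaternion.normSq_def']; rfl, ← Complex.normSq_eq_norm_sq,
      ← Complex.normSq_eq_norm_sq, Complex.normSq_apply, Complex.normSq_apply]
    ring

instance isAddHaar_volH : volH.IsAddHaarMeasure :=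
  Quaternion.linearIsometryEquivTuple.symm.toContinuousLinearEquiv.isAddHaarMeasure_map volume

instance isAddHaar_four_volH : ((4 : ENNReal) • volH).IsAddHaarMeasure :=
  Measure.IsAddHaarMeasure.smul _ (by simp) (by simp)

instance isAddHaar_measD : (measD F).IsAddHaarMeasure := by
  unfold measD
  have h : (Measure.pi fun _ : {v : InfinitePlace F // v.IsComplex} =>
      (4 : ENNReal) • volH).IsAddHaarMeasure :=
    MeasureTheory.Measure.pi.isAddHaarMeasure _
  have h' : (Measure.pi fun _ : {v : InfinitePlace F // v.IsReal} =>
      (volume : Measure ℂ)).IsAddHaarMeasure :=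
    MeasureTheory.Measure.pi.isAddHaarMeasure _
  exact MeasureTheory.Measure.prod.instIsAddHaarMeasure _ _

lemma integral_gauss_real : ∫ x : ℝ, Real.exp (-Real.pi * x ^ 2) = 1 := by
  rw [integral_gaussian, div_self Real.pi_ne_zero, Real.sqrt_one]

lemma integral_gauss_complex (c : ℝ) (hc : 0 < c) :
    ∫ x : ℂ, Real.exp (-c * ‖x‖ ^ 2) = Real.pi / c := by
  have h := GaussianFourier.integral_rexp_neg_mul_sq_norm (V := ℂ) hc
  rw [h]; simp

/-- The Gaussian integral over the quaternions; the factor `1/4` is compensated by the factor `4`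
in the measure of `D_v`. -/
lemma integral_gauss_volH :
    ∫ x, Real.exp (-(2 * Real.pi) * ‖x‖ ^ 2) ∂volH = 1 / 4 := by
  have e : volH = Measure.map Quaternion.linearIsometryEquivTuple.symm.toHomeomorph.toMeasurableEquiv
    volume := rfl
  rw [e, integral_map_equiv]
  have h := GaussianFourier.integral_rexp_neg_mul_sq_norm (V := EuclideanSpace ℝ (Fin 4))
    Real.two_pi_pos
  refine Eq.trans ?_ (h.trans ?_)
  · refine integral_congr_ae (Filter.Eventually.of_forall fun x => ?_)
    show Real.exp (-(2 * Real.pi) * ‖Quaternion.linearIsometryEquivTuple.symm x‖ ^ 2) = _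
    rw [LinearIsometryEquiv.norm_map]
  · have : Real.pi / (2 * Real.pi) = 1 / 2 := by field_simp
    rw [this, finrank_euclideanSpace]
    norm_num

/-- The Gaussian of `F_ℝ` has total mass one. -/
lemma integral_fR : ∫ x, fR F x ∂(measR F) = 1 := by
  simp only [fR_eq, measR]
  rw [integral_prod_mul (fun w : {v : InfinitePlace F // v.IsReal} → ℝ =>
    ∏ v, Real.exp (-Real.pi * w v ^ 2))
    (fun w : {v : InfinitePlace F // v.IsComplex} → ℂ => ∏ v, Real.exp (-(2 * Real.pi) * ‖w v‖ ^ 2)), integral_fintype_prod_eq_prod (fun _ x => Real.exp (-Real.pi * x ^ 2)),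
    integral_fintype_prod_eq_prod (fun _ (x : ℂ) => Real.exp (-(2 * Real.pi) * ‖x‖ ^ 2))]
  simp only [integral_gauss_real, integral_smul_measure, integral_gauss_complex _ Real.two_pi_pos]
  have : 2 * (Real.pi / (2 * Real.pi)) = 1 := by
    field_simp
  simp [this]

/-- The Gaussian of `D_F` has total mass one. -/
lemma integral_fD : ∫ x, fD F x ∂(measD F) = 1 := by
  simp only [fD, measD]
  rw [integral_prod_mul (fun w : {v : InfinitePlace F // v.IsReal} → ℂ =>
    ∏ v, Real.exp (-Real.pi * ‖w v‖ ^ 2))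
    (fun w : {v : InfinitePlace F // v.IsComplex} → Quaternion ℝ =>
      ∏ v, Real.exp (-(2 * Real.pi) * ‖w v‖ ^ 2)), integral_fintype_prod_eq_prod (fun _ (x : ℂ) => Real.exp (-Real.pi * ‖x‖ ^ 2)),
    integral_fintype_prod_eq_prod (fun _ (x : Quaternion ℝ) => Real.exp (-(2 * Real.pi) * ‖x‖ ^ 2))]
  simp only [integral_gauss_volH, integral_smul_measure, integral_gauss_complex _ Real.pi_pos]
  simp

/-- The decomposition `D_F = F_ℝ ⊕ F_ℝ j_F` preserves the measures: both sides are Haar measures,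
and the Gaussian has integral one for both. -/
lemma measD_eq_map : measD F = Measure.map (Psi F).toContinuousLinearEquiv ((measR F).prod (measR F)) := by
  have hP : ((measR F).prod (measR F)).IsAddHaarMeasure :=
    MeasureTheory.Measure.prod.instIsAddHaarMeasure _ _
  have hH : (Measure.map (Psi F).toContinuousLinearEquiv ((measR F).prod (measR F))).IsAddHaarMeasure :=
    (Psi F).toContinuousLinearEquiv.isAddHaarMeasure_map _
  have h1 := Measure.isAddLeftInvariant_eq_smul (measD F)
    (Measure.map (Psi F).toContinuousLinearEquiv ((measR F).prod (measR F)))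
  set κ := Measure.addHaarScalarFactor (measD F)
    (Measure.map (Psi F).toContinuousLinearEquiv ((measR F).prod (measR F)))
  -- The proportionality factor of the two Haar measures is found by integrating the Gaussian.
  have h2 := integral_fD F
  rw [h1, integral_smul_nnreal_measure, show ∫ x, fD F x ∂(Measure.map (Psi F).toContinuousLinearEquiv
    ((measR F).prod (measR F))) = _ from integral_map_equiv
      (Psi F).toContinuousLinearEquiv.toHomeomorph.toMeasurableEquiv (fD F)] at h2
  have h3 : ∀ p : RS F × RS F, fD F ((Psi F).toContinuousLinearEquiv.toHomeomorph.toMeasurableEquiv p)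
      = fR F p.1 * fR F p.2 := fun p => fD_Psi F p.1 p.2
  simp only [h3] at h2
  rw [integral_prod_mul, integral_fR, mul_one] at h2
  have : κ = 1 := by
    have : (κ : ℝ) = 1 := by simpa [NNReal.smul_def] using h2
    exact_mod_cast this
  rw [h1, this, one_smul]

/-- The coordinates `(u, w) ↦ u z + w` on `D_F`, for `z = x + y j_F`, pulled back to
`F_ℝ × F_ℝ`. -/
def shear (x : RS F) {y : RS F} (hy : IsUnit y) : (RS F × RS F) ≃ₗ[ℝ] (RS F × RS F) where
  toFun p := (p.1 * y, p.1 * x + p.2)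
  invFun p := (p.1 * Ring.inverse y, p.2 - p.1 * Ring.inverse y * x)
  map_add' p q := by
    refine Prod.ext ?_ ?_
    · exact add_mul _ _ _
    · show (p.1 + q.1) * x + (p.2 + q.2) = (p.1 * x + p.2) + (q.1 * x + q.2)
      ring
  map_smul' c p := by
    refine Prod.ext ?_ ?_
    · exact smul_mul_assoc _ _ _
    · show (c • p.1) * x + c • p.2 = c • (p.1 * x + p.2)
      rw [smul_add, smul_mul_assoc]
  left_inv p := by
    have h := Ring.mul_inverse_cancel y hy
    refine Prod.ext ?_ ?_
    · show p.1 * y * Ring.inverse y = p.1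
      rw [mul_assoc, h, mul_one]
    · show p.1 * x + p.2 - p.1 * y * Ring.inverse y * x = p.2
      rw [mul_assoc p.1, h, mul_one, add_sub_cancel_left]
  right_inv p := by
    have h := Ring.inverse_mul_cancel y hy
    refine Prod.ext ?_ ?_
    · show p.1 * Ring.inverse y * y = p.1
      rw [mul_assoc, h, mul_one]
    · show p.1 * Ring.inverse y * x + (p.2 - p.1 * Ring.inverse y * x) = p.2
      ring

lemma shear_apply (x : RS F) {y : RS F} (hy : IsUnit y) (u w : RS F) :
    shear F x hy (u, w) = (u * y, u * x + w) := rfl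

/-- The shear `(u, w) ↦ (uy, ux + w)` scales volumes by `|N(y)|`. -/
lemma map_shear (x : RS F) {y : RS F} (hy : IsUnit y) :
    Measure.map (shear F x hy).toContinuousLinearEquiv ((measR F).prod (measR F)) =
      ENNReal.ofReal (normR F y)⁻¹ • (measR F).prod (measR F) := by
  have h : MeasurePreserving (fun p : RS F × RS F => (p.1 * y, p.1 * x + p.2))
      ((measR F).prod (measR F)) ((ENNReal.ofReal (normR F y)⁻¹ • measR F).prod (measR F)) := by
    have h1 : MeasurePreserving (fun t => t * y) (measR F)
        (ENNReal.ofReal (normR F y)⁻¹ • measR F) := ⟨measurable_mul_right F y, map_mul_measR F hy⟩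
    refine h1.skew_product (g := fun u w => u * x + w) ?_ ?_
    · exact Continuous.measurable (by unfold Function.uncurry; fun_prop)
    · exact Filter.Eventually.of_forall fun u => map_add_left_eq_self _ _
  rw [← Measure.prod_smul_left, ← h.map_eq]
  rfl

/-- In the coordinates of `D_F` the shear is `(u, w) ↦ uz + w`, where `z = x + y j_F`. -/
lemma Psi_shear (x : RS F) {y : RS F} (hy : IsUnit y) {z : DS F}
    (hz : z = structureMap F x + structureMap F y * jF F) (u w : RS F) :
    Psi F (shear F x hy (u, w)) = structureMap F u * z + structureMap F w := by
  rw [shear_apply, Psi_apply, hz, map_add, map_mul, map_mul, mul_add, mul_assoc]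
  abel

/-- The covolume of `𝔞z + 𝔟` is `V(𝔞) V(𝔟) |N(y)|`. -/
lemma covolume {a b : FractionalIdeal (𝓞 F)⁰ F} (ha : a ≠ 0) (hb : b ≠ 0)
    {x y : RS F} (hy : IsUnit y) {z : DS F}
    (hz : z = structureMap F x + structureMap F y * jF F)
    {V : ℝ} (hV0 : 0 ≤ V) (hV : HasVol F (latAB F a b z) V) :
    V = VI F a * VI F b * normR F y := by
  set Ia := Units.mk0 a ha
  set Ib := Units.mk0 b hb
  set Ba := mixedEmbedding.fractionalIdealLatticeBasis F Ia with hBa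
  set Bb := mixedEmbedding.fractionalIdealLatticeBasis F Ib with hBb
  have hP : ((measR F).prod (measR F)).IsAddHaarMeasure :=
    MeasureTheory.Measure.prod.instIsAddHaarMeasure _ _
  set Φ := (shear F x hy).trans (Psi F) with hΦ
  have hΦa : ∀ u w, Φ (u, w) = structureMap F u * z + structureMap F w := Psi_shear F x hy hz
  set B := (Ba.prod Bb).map Φ with hB
  -- Bases of `𝔞` and `𝔟` combine to a `ℤ`-basis of the lattice.
  have hlat : latAB F a b z = (Submodule.span ℤ (Set.range B)).toAddSubgroup := by
    have e1 : Set.range B = Φ.toLinearMap.restrictScalars ℤ '' ((LinearMap.inl ℤ (RS F) (RS F) '' Set.range Ba) ∪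
        (LinearMap.inr ℤ (RS F) (RS F) '' Set.range Bb)) := by
      rw [← Set.range_comp, ← Set.range_comp, ← Set.Sum.elim_range, ← Set.range_comp]
      congr 1
      funext i
      rcases i with i | i <;> simp [hB]
    rw [e1, Submodule.span_image, Submodule.span_union, Submodule.span_image, Submodule.span_image]
    ext l
    rw [Submodule.mem_toAddSubgroup, Submodule.mem_map]
    constructor
    · rintro ⟨α, hα, β, hβ, rfl⟩
      refine ⟨(mixedEmbedding F α, mixedEmbedding F β), ?_, hΦa _ _⟩
      refine Submodule.mem_sup.2 ⟨(mixedEmbedding F α, 0), ?_, (0, mixedEmbedding F β), ?_, by simp⟩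
      · exact ⟨_, (mixedEmbedding.mem_span_fractionalIdealLatticeBasis F Ia).2 ⟨α, hα, rfl⟩, rfl⟩
      · exact ⟨_, (mixedEmbedding.mem_span_fractionalIdealLatticeBasis F Ib).2 ⟨β, hβ, rfl⟩, rfl⟩
    · rintro ⟨p, hp, rfl⟩
      obtain ⟨_, ⟨u, hu, rfl⟩, _, ⟨w, hw, rfl⟩, rfl⟩ := Submodule.mem_sup.1 hp
      obtain ⟨α, hα, rfl⟩ := (mixedEmbedding.mem_span_fractionalIdealLatticeBasis F Ia).1 hu
      obtain ⟨β, hβ, rfl⟩ := (mixedEmbedding.mem_span_fractionalIdealLatticeBasis F Ib).1 hw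
      refine ⟨α, hα, β, hβ, ?_⟩
      have e : LinearMap.inl ℤ (RS F) (RS F) (mixedEmbedding F α) +
        LinearMap.inr ℤ (RS F) (RS F) (mixedEmbedding F β) = (mixedEmbedding F α, mixedEmbedding F β) := by
        simp
      rw [e]
      exact hΦa _ _
  obtain ⟨S, hS, hSV⟩ := hV
  rw [hlat] at hS
  have hfd := ZSpan.isAddFundamentalDomain' B (measD F)
  have hc : Countable (Submodule.span ℤ (Set.range B)).toAddSubgroup :=
    inferInstanceAs (Countable (Submodule.span ℤ (Set.range B)))
  have hm := hS.measure_eq hfd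
  rw [hSV] at hm
  have hmeas : measD F = ENNReal.ofReal (normR F y) •
      Measure.map Φ.toContinuousLinearEquiv ((measR F).prod (measR F)) := by
    have e1 : Measure.map Φ.toContinuousLinearEquiv ((measR F).prod (measR F)) =
        Measure.map (Psi F).toContinuousLinearEquiv
          (Measure.map (shear F x hy).toContinuousLinearEquiv ((measR F).prod (measR F))) := by
      rw [Measure.map_map]
      · rfl
      · exact (Psi F).toContinuousLinearEquiv.continuous.measurable
      · exact (shear F x hy).toContinuousLinearEquiv.continuous.measurable
    rw [e1, map_shear, Measure.map_smul, ← measD_eq_map, smul_smul,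
      ← ENNReal.ofReal_mul (normR_nonneg F y), mul_inv_cancel₀ (normR_pos F hy).ne',
      ENNReal.ofReal_one, one_smul]
  -- The fundamental parallelepiped pulls back to the product of those of `𝔞` and `𝔟`.
  have hpre : Φ.toContinuousLinearEquiv.toHomeomorph.toMeasurableEquiv ⁻¹' (ZSpan.fundamentalDomain B) =
      ZSpan.fundamentalDomain Ba ×ˢ ZSpan.fundamentalDomain Bb := by
    ext p
    have e : Φ.toContinuousLinearEquiv.toHomeomorph.toMeasurableEquiv p = Φ p := rfl
    rw [Set.mem_preimage, e, ZSpan.mem_fundamentalDomain, Set.mem_prod, ZSpan.mem_fundamentalDomain,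
      ZSpan.mem_fundamentalDomain, Sum.forall]
    simp [hB]
  rw [hmeas, Measure.smul_apply, show Measure.map Φ.toContinuousLinearEquiv
    ((measR F).prod (measR F)) _ = _ from
      Φ.toContinuousLinearEquiv.toHomeomorph.toMeasurableEquiv.map_apply _, hpre,
    Measure.prod_prod, volume_ideal, volume_ideal, smul_eq_mul] at hm
  have h1 := VI_pos F ha
  have h2 := VI_pos F hb
  have h3 := normR_pos F hy
  replace hm : ENNReal.ofReal V = ENNReal.ofReal (normR F y) *
      (ENNReal.ofReal (VI F a) * ENNReal.ofReal (VI F b)) := hm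
  rw [← ENNReal.ofReal_mul h1.le, ← ENNReal.ofReal_mul h3.le,
    ENNReal.ofReal_eq_ofReal_iff hV0 (by positivity)] at hm
  rw [hm]
  ring

/-! ### Representatives of unit orbits -/

/-- Two sets of representatives of the same equivalence relation are in bijection, compatibly
with the relation. The second one is given as a family. -/
lemma exists_equiv_repr {X ι : Type*} (rel : X → X → Prop) (hrel : Equivalence rel) (S : Set X)
    (R : Set X) (g : ι → X) (hRS : ∀ r ∈ R, r ∈ S) (hgS : ∀ i, g i ∈ S)
    (hR : ∀ l ∈ S, ∃! r, r ∈ R ∧ rel r l) (hg : ∀ l ∈ S, ∃ i, rel (g i) l)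
    (hg' : ∀ i j, rel (g i) (g j) → i = j) :
    ∃ e : ι ≃ R, ∀ i, rel (g i) (e i) := by
  choose r hr hr' using fun i => hR (g i) (hgS i)
  refine ⟨Equiv.ofBijective (fun i => (⟨r i, (hr i).1⟩ : R)) ⟨fun i j h => ?_, fun q => ?_⟩,
    fun i => hrel.symm (hr i).2⟩
  · have h' : r i = r j := congrArg Subtype.val h
    exact hg' i j (hrel.trans (hrel.symm (hr i).2) (h' ▸ (hr j).2))
  · obtain ⟨i, hi⟩ := hg q (hRS q q.2)
    refine ⟨i, Subtype.ext ?_⟩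
    exact (hr' i q ⟨q.2, hrel.symm hi⟩).symm

lemma FtoD_apply (x : F) : FtoD F x = structureMap F (mixedEmbedding F x) := rfl

lemma FtoD_injective : Function.Injective (FtoD F) := by
  intro β β' h
  have h1 : Psi F (0, mixedEmbedding F β) = Psi F (0, mixedEmbedding F β') := by
    rw [Psi_apply, Psi_apply, ← FtoD_apply, ← FtoD_apply, h]
  have h2 := (Psi F).injective h1
  rw [Prod.mk.injEq] at h2
  exact mixedEmbedding_injective F h2.2

lemma unit_mul_inv (ε : (𝓞 F)ˣ) : ((ε : 𝓞 F) : F) * (((ε⁻¹ : (𝓞 F)ˣ) : 𝓞 F) : F) = 1 := by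
  rw [← map_mul, ← Units.val_mul, mul_inv_cancel, Units.val_one, map_one]

lemma unit_ne_zero (ε : (𝓞 F)ˣ) : ((ε : 𝓞 F) : F) ≠ 0 :=
  left_ne_zero_of_mul_eq_one (unit_mul_inv F ε)

lemma unit_mul_mem {a : FractionalIdeal (𝓞 F)⁰ F} (ε : (𝓞 F)ˣ) {α : F} (hα : α ∈ a) :
    ((ε : 𝓞 F) : F) * α ∈ a := by
  have := Submodule.smul_mem (a : Submodule (𝓞 F) F) (ε : 𝓞 F) hα
  rwa [Algebra.smul_def] at this

lemma unit_mul_mem_dual {b : FractionalIdeal (𝓞 F)⁰ F} (ε : (𝓞 F)ˣ) {β : F}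
    (hβ : β ∈ dualIdealSet F b) : β * ((ε : 𝓞 F) : F) ∈ dualIdealSet F b := by
  intro γ hγ
  obtain ⟨n, hn⟩ := hβ _ (unit_mul_mem F ε hγ)
  exact ⟨n, by rw [← hn]; congr 1; ring⟩

lemma equivalence_units : Equivalence fun r l : DS F =>
    ∃ ε : (𝓞 F)ˣ, FtoD F ((ε : 𝓞 F) : F) * r = l where
  refl r := ⟨1, by simp⟩
  symm := by
    rintro r l ⟨ε, rfl⟩
    refine ⟨ε⁻¹, ?_⟩
    rw [← mul_assoc, ← map_mul, mul_comm (((ε⁻¹ : (𝓞 F)ˣ) : 𝓞 F) : F), unit_mul_inv, map_one,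
      one_mul]
  trans := by
    rintro r l q ⟨ε, rfl⟩ ⟨δ, rfl⟩
    exact ⟨δ * ε, by rw [← mul_assoc, ← map_mul]; simp⟩

lemma equivalence_pairs : Equivalence fun p q : F × F =>
    ∃ ε : (𝓞 F)ˣ, q.1 = p.1 * ((ε : 𝓞 F) : F) ∧ q.2 = p.2 * (((ε⁻¹ : (𝓞 F)ˣ) : 𝓞 F) : F) where
  refl r := ⟨1, by simp⟩
  symm := by
    rintro p q ⟨ε, h1, h2⟩
    refine ⟨ε⁻¹, ?_, ?_⟩
    · rw [h1, mul_assoc, unit_mul_inv, mul_one]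
    · rw [h2, mul_assoc, unit_mul_inv, mul_one]
  trans := by
    rintro p q r ⟨ε, h1, h2⟩ ⟨δ, h3, h4⟩
    refine ⟨ε * δ, ?_, ?_⟩
    · rw [h3, h1]; push_cast; ring
    · rw [h4, h2, mul_inv]; push_cast; ring

/-- The nonzero elements of the dual ideal. -/
def dual0 (b : FractionalIdeal (𝓞 F)⁰ F) : Set F := {β | β ∈ dualIdealSet F b ∧ β ≠ 0}

/-- Each pair `(α, β*)` can be moved by a unit so that `α` is a chosen representative; then `β*` is
arbitrary and unique, because a unit fixing `α ≠ 0` is trivial. -/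
lemma pairs_equiv {a b : FractionalIdeal (𝓞 F)⁰ F} {Ra : Set F} (hRa : IsIdealRepr F a Ra)
    {P : Set (F × F)} (hP : IsPairRepr F a b P) :
    ∃ e : (Ra × dual0 F b) ≃ P, ∀ i, ∃ ε : (𝓞 F)ˣ,
      ((e i : P) : F × F).1 = (i.1 : F) * ((ε : 𝓞 F) : F) ∧
      ((e i : P) : F × F).2 = (i.2 : F) * (((ε⁻¹ : (𝓞 F)ˣ) : 𝓞 F) : F) := by
  have hRa0 : ∀ r : Ra, (r : F) ≠ 0 := fun r h => hRa.2.1 (h ▸ r.2)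
  refine exists_equiv_repr _ (equivalence_pairs F)
    {p | p.1 ∈ a ∧ p.1 ≠ 0 ∧ p.2 ∈ dualIdealSet F b ∧ p.2 ≠ 0} P
    (fun i : Ra × dual0 F b => ((i.1 : F), (i.2 : F))) hP.1
    (fun i => ⟨hRa.1 _ i.1.2, hRa0 i.1, i.2.2.1, i.2.2.2⟩)
    (fun l hl => hP.2 l.1 hl.1 hl.2.1 l.2 hl.2.2.1 hl.2.2.2) ?_ ?_
  · rintro ⟨α, β⟩ ⟨h1, h2, h3, h4⟩
    obtain ⟨r, ⟨hr, ε, hε⟩, -⟩ := hRa.2.2 α h1 h2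
    refine ⟨(⟨r, hr⟩, ⟨β * ((ε : 𝓞 F) : F), unit_mul_mem_dual F ε h3,
      mul_ne_zero h4 (unit_ne_zero F ε)⟩), ε, ?_, ?_⟩
    · simp only; rw [← hε, mul_comm]
    · simp only; rw [mul_assoc, unit_mul_inv, mul_one]
  · rintro ⟨r, β⟩ ⟨r', β'⟩ ⟨ε, h1, h2⟩
    simp only at h1 h2
    obtain ⟨q, -, hq⟩ := hRa.2.2 r' (hRa.1 _ r'.2) (hRa0 r')
    have e1 := hq r ⟨r.2, ε, by rw [h1, mul_comm]⟩
    have e2 := hq r' ⟨r'.2, 1, by simp⟩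
    have e3 : (r : F) = r' := e1.trans e2.symm
    have e4 : ((ε : 𝓞 F) : F) = 1 := by
      have h5 : (r : F) * ((ε : 𝓞 F) : F) = r * 1 := by rw [← h1, mul_one, e3]
      exact mul_left_cancel₀ (hRa0 r) h5
    have e5 : ε = 1 := by
      ext
      simpa using e4
    refine Prod.ext (Subtype.ext e3) (Subtype.ext ?_)
    rw [h2, e5]; simp

/-- The sum `𝔞z + 𝔟` is direct. -/
lemma latt_inj {x y : RS F} (hy : IsUnit y) {z : DS F}
    (hz : z = structureMap F x + structureMap F y * jF F) {α β α' β' : F}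
    (h : FtoD F α * z + FtoD F β = FtoD F α' * z + FtoD F β') : α = α' ∧ β = β' := by
  have h1 : ((shear F x hy).trans (Psi F)) (mixedEmbedding F α, mixedEmbedding F β) =
      ((shear F x hy).trans (Psi F)) (mixedEmbedding F α', mixedEmbedding F β') := by
    rw [LinearEquiv.trans_apply, LinearEquiv.trans_apply, Psi_shear F x hy hz, Psi_shear F x hy hz]
    exact h
  have h2 := ((shear F x hy).trans (Psi F)).injective h1
  rw [Prod.mk.injEq] at h2
  exact ⟨mixedEmbedding_injective F h2.1, mixedEmbedding_injective F h2.2⟩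

/-- Representatives of the nonzero unit orbits in `𝔞z + 𝔟`: the orbits with trivial
`𝔞`-component, and those whose `𝔞`-component is a chosen representative. -/
def gLat (b : FractionalIdeal (𝓞 F)⁰ F) (z : DS F) (Ra Rb : Set F) :
    Rb ⊕ (Ra × {x // x ∈ b}) → DS F :=
  Sum.elim (fun β => FtoD F β) (fun i => FtoD F i.1 * z + FtoD F i.2)

/-- Any set of representatives of the nonzero unit orbits in `𝔞z + 𝔟` corresponds, up to units, to
the representatives `gLat`. -/
lemma lattice_equiv {a b : FractionalIdeal (𝓞 F)⁰ F} {x y : RS F} (hy : IsUnit y) {z : DS F}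
    (hz : z = structureMap F x + structureMap F y * jF F)
    {R : Set (DS F)} (hR : IsRepr F (latAB F a b z) R)
    {Ra Rb : Set F} (hRa : IsIdealRepr F a Ra) (hRb : IsIdealRepr F b Rb) :
    ∃ e : (Rb ⊕ (Ra × {x // x ∈ b})) ≃ R, ∀ i, ∃ ε : (𝓞 F)ˣ,
      FtoD F ((ε : 𝓞 F) : F) * gLat F b z Ra Rb i = (e i : DS F) := by
  have hRa0 : ∀ r : Ra, (r : F) ≠ 0 := fun r h => hRa.2.1 (h ▸ r.2)
  have hRb0 : ∀ r : Rb, (r : F) ≠ 0 := fun r h => hRb.2.1 (h ▸ r.2)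
  have hinj := fun α β α' β' => @latt_inj F _ _ x y hy z hz α β α' β'
  have hmul : ∀ (ε : (𝓞 F)ˣ) (α β : F), FtoD F ((ε : 𝓞 F) : F) * (FtoD F α * z + FtoD F β) =
      FtoD F (((ε : 𝓞 F) : F) * α) * z + FtoD F (((ε : 𝓞 F) : F) * β) := by
    intro ε α β
    rw [map_mul, map_mul, mul_add, mul_assoc]
  have hl : ∀ β : F, FtoD F β = FtoD F 0 * z + FtoD F β := by
    intro β; rw [map_zero, zero_mul, zero_add]
  refine exists_equiv_repr _ (equivalence_units F) {l | l ∈ latAB F a b z ∧ l ≠ 0} R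
    (gLat F b z Ra Rb) (fun r hr => ⟨hR.1 r hr, fun h => hR.2.1 (h ▸ hr)⟩) ?_
    (fun l hl => hR.2.2 l hl.1 hl.2) ?_ ?_
  · rintro (β | ⟨α, β⟩)
    · refine ⟨⟨0, Submodule.zero_mem _, β, hRb.1 _ β.2, hl _⟩, fun h => hRb0 β ?_⟩
      exact FtoD_injective F (h.trans (map_zero _).symm)
    · refine ⟨⟨α, hRa.1 _ α.2, β, β.2, rfl⟩, fun h => hRa0 α ?_⟩
      exact (hinj α β 0 0 (by simpa [gLat] using h)).1
  · rintro l ⟨⟨α, hα, β, hβ, rfl⟩, hl0⟩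
    by_cases hα0 : α = 0
    · have hβ0 : β ≠ 0 := by
        rintro rfl
        exact hl0 (by simp [hα0])
      obtain ⟨r, ⟨hr, ε, hε⟩, -⟩ := hRb.2.2 β hβ hβ0
      refine ⟨Sum.inl ⟨r, hr⟩, ε, ?_⟩
      simp [gLat, hα0, ← hε]
    · obtain ⟨r, ⟨hr, ε, hε⟩, -⟩ := hRa.2.2 α hα hα0
      refine ⟨Sum.inr (⟨r, hr⟩, ⟨(((ε⁻¹ : (𝓞 F)ˣ) : 𝓞 F) : F) * β, unit_mul_mem F _ hβ⟩), ε, ?_⟩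
      simp only [gLat, Sum.elim_inr]
      rw [hmul, hε, ← mul_assoc, unit_mul_inv, one_mul]
  · rintro (β | ⟨α, β⟩) (β' | ⟨α', β'⟩) ⟨ε, h⟩
    · simp only [gLat, Sum.elim_inl] at h
      rw [← map_mul] at h
      have h1 := FtoD_injective F h
      obtain ⟨q, -, hq⟩ := hRb.2.2 β' (hRb.1 _ β'.2) (hRb0 β')
      have e1 := hq β ⟨β.2, ε, h1⟩
      have e2 := hq β' ⟨β'.2, 1, by simp⟩
      rw [Subtype.ext (e1.trans e2.symm)]
    · simp only [gLat, Sum.elim_inl, Sum.elim_inr] at h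
      rw [← map_mul, hl] at h
      exact absurd (hinj _ _ _ _ h).1.symm (hRa0 α')
    · simp only [gLat, Sum.elim_inl, Sum.elim_inr] at h
      rw [hmul, hl β'] at h
      exact absurd (hinj _ _ _ _ h).1 (mul_ne_zero (unit_ne_zero F ε) (hRa0 α))
    · simp only [gLat, Sum.elim_inr] at h
      rw [hmul] at h
      obtain ⟨h1, h2⟩ := hinj _ _ _ _ h
      obtain ⟨q, -, hq⟩ := hRa.2.2 α' (hRa.1 _ α'.2) (hRa0 α')
      have e1 := hq α ⟨α.2, ε, h1⟩
      have e2 := hq α' ⟨α'.2, 1, by simp⟩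
      have e3 : (α : F) = α' := e1.trans e2.symm
      -- A unit fixing a nonzero `α` is `1`.
      have e4 : ((ε : 𝓞 F) : F) = 1 := by
        have h5 : ((ε : 𝓞 F) : F) * α = 1 * α := by rw [h1, one_mul, e3]
        exact mul_right_cancel₀ (hRa0 α) h5
      have e5 : (β : F) = β' := by rw [← h2, e4, one_mul]
      rw [Subtype.ext e3, Subtype.ext e5]

/-! ### Norms and Gaussians along lattice vectors -/

/-- The vector of local absolute values of an element of `D_F`, as an element of `F_ℝ`. -/
def absD (l : DS F) : RS F := (fun v => ‖l.1 v‖, fun v => (‖l.2 v‖ : ℂ))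

lemma normR_absD (l : DS F) : normR F (absD F l) = normD F l := by
  simp [normR, normD, absD]

lemma norm_structureMap_snd (t : RS F) (v) : ‖(structureMap F t).2 v‖ = ‖t.2 v‖ := by
  rw [structureMap_snd, norm_ofComplex]

lemma norm_structureMap_fst (t : RS F) (v) : ‖(structureMap F t).1 v‖ = |t.1 v| := by
  rw [structureMap_fst, Complex.norm_real, Real.norm_eq_abs]

/-- The Gaussian of `D_F` along an orbit of `T_F` depends only on the local absolute values. -/
lemma fD_structureMap_mul (t : RS F) (l : DS F) :
    fD F (structureMap F t * l) = fR F (t * absD F l) := by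
  rw [fR_eq, fD]
  congr 1
  · refine Finset.prod_congr rfl fun v _ => ?_
    rw [Prod.fst_mul, Pi.mul_apply, norm_mul, norm_structureMap_fst, ← sq_abs ((t * absD F l).1 v)]
    simp [absD, abs_mul]
  · refine Finset.prod_congr rfl fun v _ => ?_
    rw [Prod.snd_mul, Pi.mul_apply, norm_mul, norm_structureMap_snd]
    simp [absD]

lemma normD_structureMap_mul (t : RS F) (l : DS F) :
    normD F (structureMap F t * l) = normR F t * normD F l := by
  simp only [normR, normD, Prod.fst_mul, Prod.snd_mul, Pi.mul_apply, norm_mul,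
    norm_structureMap_fst, norm_structureMap_snd, mul_pow, Finset.prod_mul_distrib]
  ring

/-- Mellin transform of the Gaussian on `D_F` along an orbit of `T_F`. -/
lemma gamma_orbit {l : DS F} (hl : normD F l ≠ 0) (s : ℂ) :
    ∫ t, (fD F (structureMap F t * l) : ℂ) * (normR F t : ℂ) ^ s ∂(muT F) =
      GammaF F s * (normD F l : ℂ) ^ (-s) := by
  have hu : IsUnit (absD F l) := by rwa [isUnit_iff_normR, normR_absD]
  simp only [fD_structureMap_mul]
  rw [gamma_dilate F hu, normR_absD]

lemma normD_one : normD F 1 = 1 := by simp [normD]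

lemma normD_unit_mul (ε : (𝓞 F)ˣ) (l : DS F) : normD F (FtoD F ((ε : 𝓞 F) : F) * l) = normD F l := by
  rw [FtoD_apply, normD_structureMap_mul, normR_unit, one_mul]

lemma normD_FtoD (β : F) : normD F (FtoD F β) = normR F (mixedEmbedding F β) := by
  rw [← mul_one (FtoD F β), FtoD_apply, normD_structureMap_mul, normD_one, mul_one]

/-- The element `w + u j_F` of `D_F` with `u` invertible has nonzero norm. -/
lemma normD_Psi_ne_zero {u : RS F} (hu : IsUnit u) (w : RS F) : normD F (Psi F (u, w)) ≠ 0 := by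
  obtain ⟨h1, h2⟩ := (isUnit_iff_comp F u).1 hu
  rw [normD, mul_ne_zero_iff, Finset.prod_ne_zero_iff, Finset.prod_ne_zero_iff]
  refine ⟨fun v _ h => h1 v ?_, fun v _ h => h2 v ?_⟩
  · have h3 := norm_eq_zero.1 h
    exact congrArg Complex.im h3
  · have h3 := norm_eq_zero.1 (pow_eq_zero_iff (two_ne_zero)|>.1 h)
    exact Complex.ext (congrArg (fun q : Quaternion ℝ => q.imJ) h3)
      (congrArg (fun q : Quaternion ℝ => q.imK) h3)

lemma FtoD_mul_add {x y : RS F} (hy : IsUnit y) {z : DS F}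
    (hz : z = structureMap F x + structureMap F y * jF F) (α β : F) :
    FtoD F α * z + FtoD F β =
      Psi F (mixedEmbedding F α * y, mixedEmbedding F α * x + mixedEmbedding F β) := by
  rw [← shear_apply F x hy, Psi_shear F x hy hz]; rfl

lemma normD_gLat_ne_zero {b : FractionalIdeal (𝓞 F)⁰ F} {x y : RS F} (hy : IsUnit y) {z : DS F}
    (hz : z = structureMap F x + structureMap F y * jF F) {Ra Rb : Set F} (hRa : (0 : F) ∉ Ra)
    (hRb : (0 : F) ∉ Rb) (i) : normD F (gLat F b z Ra Rb i) ≠ 0 := by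
  rcases i with β | ⟨α, β⟩
  · have : (β : F) ≠ 0 := fun h => hRb (h ▸ β.2)
    rw [gLat, Sum.elim_inl, normD_FtoD, ← isUnit_iff_normR]
    exact isUnit_mixedEmbedding F this
  · have : (α : F) ≠ 0 := fun h => hRa (h ▸ α.2)
    rw [gLat, Sum.elim_inr, FtoD_mul_add F hy hz]
    exact normD_Psi_ne_zero F ((isUnit_mixedEmbedding F this).mul hy) _

/-- Separation of variables for the Gaussian along `t (𝔞z + 𝔟)`. -/
lemma fD_orbit {x y : RS F} (hy : IsUnit y) {z : DS F}
    (hz : z = structureMap F x + structureMap F y * jF F) (t : RS F) (α β : F) :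
    fD F (structureMap F t * (FtoD F α * z + FtoD F β)) =
      fR F (t * (y * mixedEmbedding F α)) *
        fR F (t * (x * mixedEmbedding F α + mixedEmbedding F β)) := by
  have h : structureMap F t * (FtoD F α * z + FtoD F β) =
      Psi F (t * (y * mixedEmbedding F α), t * (x * mixedEmbedding F α + mixedEmbedding F β)) := by
    rw [FtoD_mul_add F hy hz, Psi_apply, Psi_apply, mul_add (structureMap F t),
      ← mul_assoc (structureMap F t), ← map_mul, ← map_mul, mul_comm y, mul_comm x]
  rw [h, fD_Psi]

/-! ### Absolute convergence -/

instance countable_F : Countable F :=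
  (Module.finBasis ℚ F).equivFun.injective.countable

lemma aemeasurable_inverse : AEMeasurable (fun t : RS F => Ring.inverse t) (muT F) := by
  refine ⟨fun t => (fun v => (t.1 v)⁻¹, fun v => (t.2 v)⁻¹), ?_, ae_muT F fun t ht => ?_⟩
  · refine Measurable.prodMk (measurable_pi_lambda _ fun v => ?_) (measurable_pi_lambda _ fun v => ?_)
    · exact ((measurable_pi_apply v).comp measurable_fst).inv
    · exact ((measurable_pi_apply v).comp measurable_snd).inv
  · exact Prod.ext (funext fun v => inverse_fst F ht v) (funext fun v => inverse_snd F ht v)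

lemma aemeasurable_fR_inv (c : RS F) :
    AEMeasurable (fun t => fR F (Ring.inverse t * c)) (muT F) :=
  ((continuous_fR F).measurable.comp (measurable_mul_right F c)).comp_aemeasurable
    (aemeasurable_inverse F)

lemma measurable_fR_mul (c : RS F) : Measurable (fun t => fR F (t * c)) :=
  (continuous_fR F).measurable.comp (measurable_mul_right F c)

lemma isUnit_half : IsUnit ((1 / 2 : ℝ) • (1 : RS F)) := by
  rw [isUnit_iff_comp]
  simp

/-- The product `f(t) f(t⁻¹c)` decays exponentially in `c`, locally uniformly in `t`. -/
lemma fR_mul_fR_inv_le {t : RS F} (ht : IsUnit t) (c : RS F) :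
    fR F t * fR F (Ring.inverse t * c) ≤
      fR F (t * ((1 / 2 : ℝ) • (1 : RS F))) * Real.exp (-(Real.pi * oneN F c)) := by
  obtain ⟨w, hw⟩ : ∃ w, w = Ring.inverse t * c := ⟨_, rfl⟩
  have hc : c = t * w := by rw [hw, ← mul_assoc, Ring.mul_inverse_cancel t ht, one_mul]
  rw [← hw, hc, fR_eq_exp, fR_eq_exp, fR_eq_exp, ← Real.exp_add, ← Real.exp_add, Real.exp_le_exp,
    oneN]
  -- Componentwise `t² + w² ≥ t²/4 + |tw|`.
  have h1 : (∑ v, (t * ((1 / 2 : ℝ) • (1 : RS F))).1 v ^ 2) + (∑ v, |(t * w).1 v|) ≤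
      (∑ v, t.1 v ^ 2) + ∑ v, w.1 v ^ 2 := by
    rw [← Finset.sum_add_distrib, ← Finset.sum_add_distrib]
    refine Finset.sum_le_sum fun v _ => ?_
    simp only [Prod.fst_mul, Pi.mul_apply, Prod.smul_fst, Pi.smul_apply, Prod.fst_one, Pi.one_apply,
      smul_eq_mul, abs_mul]
    rw [← sq_abs (t.1 v), ← sq_abs (w.1 v), mul_pow, ← sq_abs (t.1 v)]
    nlinarith [sq_nonneg (|t.1 v| - |w.1 v|), sq_nonneg (|t.1 v|), sq_nonneg (|w.1 v|)]
  have h2 : (∑ v, 2 * ‖(t * ((1 / 2 : ℝ) • (1 : RS F))).2 v‖ ^ 2) + (∑ v, 2 * ‖(t * w).2 v‖) ≤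
      (∑ v, 2 * ‖t.2 v‖ ^ 2) + ∑ v, 2 * ‖w.2 v‖ ^ 2 := by
    rw [← Finset.sum_add_distrib, ← Finset.sum_add_distrib]
    refine Finset.sum_le_sum fun v _ => ?_
    simp only [Prod.snd_mul, Pi.mul_apply, Prod.smul_snd, Pi.smul_apply, Prod.snd_one, Pi.one_apply,
      norm_mul, norm_smul, norm_one]
    rw [show ‖(1 / 2 : ℝ)‖ = 1 / 2 by norm_num]
    nlinarith [sq_nonneg (‖t.2 v‖ - ‖w.2 v‖), sq_nonneg (‖t.2 v‖), sq_nonneg (‖w.2 v‖)]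
  nlinarith [Real.pi_pos]

/-- The absolute integrals defining `B_F(1, c, ρ/2)` decay exponentially in `c`. -/
lemma lintegral_kernel_le {ρ : ℝ} (hρ : 0 < ρ) : ∃ C : ENNReal, C < ⊤ ∧ ∀ c : RS F,
    ∫⁻ t, ENNReal.ofReal (fR F t * fR F (Ring.inverse t * c) * normR F t ^ ρ) ∂(muT F) ≤
      C * ENNReal.ofReal (Real.exp (-(Real.pi * oneN F c))) := by
  set h : RS F := (1 / 2 : ℝ) • (1 : RS F) with hh
  have hu : IsUnit h := isUnit_half F
  have hN := normR_pos F hu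
  refine ⟨(∫⁻ t, ENNReal.ofReal (fR F t * normR F t ^ ρ) ∂(muT F)) *
    ENNReal.ofReal (normR F h ^ (-ρ)), ENNReal.mul_lt_top (gamma_finite F hρ) ENNReal.ofReal_lt_top,
    fun c => ?_⟩
  rw [← lintegral_mul_right F hu (fun t => ENNReal.ofReal (fR F t * normR F t ^ ρ)),
    ← lintegral_mul_const' _ _ ENNReal.ofReal_ne_top,
    ← lintegral_mul_const' _ _ ENNReal.ofReal_ne_top]
  refine lintegral_mono_ae (ae_muT F fun t ht => ?_)
  have hf := (fR_pos F (t * h)).le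
  rw [← ENNReal.ofReal_mul (mul_nonneg hf (Real.rpow_nonneg (normR_nonneg F _) _)),
    ← ENNReal.ofReal_mul (mul_nonneg (mul_nonneg hf (Real.rpow_nonneg (normR_nonneg F _) _))
      (Real.rpow_nonneg (normR_nonneg F _) _))]
  refine ENNReal.ofReal_le_ofReal ?_
  calc _ ≤ (fR F (t * h) * Real.exp (-(Real.pi * oneN F c))) * normR F t ^ ρ :=
        mul_le_mul_of_nonneg_right (fR_mul_fR_inv_le F ht c) (Real.rpow_nonneg (normR_nonneg F _) _)
    _ = _ := by
        rw [normR_mul, Real.mul_rpow (normR_nonneg F _) hN.le, Real.rpow_neg hN.le]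
        have := (Real.rpow_pos_of_pos hN ρ).ne'
        field_simp

/-- The substitution `t ↦ t u⁻¹`, which moves `u` from the first Gaussian to the second. -/
lemma lintegral_kernel_scale {u : RS F} (hu : IsUnit u) (c : RS F) (ρ : ℝ) :
    ∫⁻ t, ENNReal.ofReal (fR F (t * u) * fR F (Ring.inverse t * c) * normR F t ^ ρ) ∂(muT F) =
      (∫⁻ t, ENNReal.ofReal (fR F t * fR F (Ring.inverse t * (u * c)) * normR F t ^ ρ) ∂(muT F)) *
        ENNReal.ofReal (normR F u ^ (-ρ)) := by
  have hN := normR_pos F hu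
  rw [← lintegral_mul_right F hu (fun t =>
      ENNReal.ofReal (fR F t * fR F (Ring.inverse t * (u * c)) * normR F t ^ ρ)),
    ← lintegral_mul_const' _ _ ENNReal.ofReal_ne_top]
  refine lintegral_congr_ae (ae_muT F fun t ht => ?_)
  simp only
  have e2 : Ring.inverse (t * u) * (u * c) = Ring.inverse t * c := by
    rw [Ring.mul_inverse_rev t u, mul_comm (Ring.inverse u), mul_assoc, ← mul_assoc (Ring.inverse u),
      Ring.inverse_mul_cancel u hu, one_mul]
  rw [e2, ← ENNReal.ofReal_mul (mul_nonneg (mul_nonneg (fR_pos F _).le (fR_pos F _).le)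
    (Real.rpow_nonneg (normR_nonneg F _) _)), normR_mul,
    Real.mul_rpow (normR_nonneg F _) hN.le, Real.rpow_neg hN.le]
  have := (Real.rpow_pos_of_pos hN ρ).ne'
  congr 1
  field_simp

/-- The integrand of `B_F(yα, β, ρ/2)` in absolute value, integrated over `T_F`. -/
def Ker (y : RS F) (ρ : ℝ) (α β : F) : ENNReal :=
  ∫⁻ t, ENNReal.ofReal (fR F (t * (y * mixedEmbedding F α)) *
    fR F (Ring.inverse t * mixedEmbedding F β) * normR F t ^ ρ) ∂(muT F)

/-- Absolute convergence of the whole dual expansion. -/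
lemma tsum_Ker_lt_top {a b : FractionalIdeal (𝓞 F)⁰ F} (ha : a ≠ 0) (hb : b ≠ 0) {Ra : Set F}
    (hRa : IsIdealRepr F a Ra) {y : RS F} (hy : IsUnit y) {ρ : ℝ} (hρ : 1 < ρ) :
    ∑' (α : Ra) (β : dualIdealSet F b), Ker F y ρ α β < ⊤ := by
  obtain ⟨b', hb', hb''⟩ := exists_dual F b hb
  obtain ⟨C, hC, hC'⟩ := lintegral_kernel_le F (ρ := ρ) (by linarith)
  have hRa0 : ∀ r : Ra, (r : F) ≠ 0 := fun r h => hRa.2.1 (h ▸ r.2)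
  set S : ENNReal := ∑' γ : {x : F // x ∈ a * b'},
    ENNReal.ofReal (Real.exp (-(Real.pi * oneN F (y * mixedEmbedding F (γ : F))))) with hS
  have hS' : S < ⊤ := by
    rw [hS, ← ENNReal.ofReal_tsum_of_nonneg (fun _ => (Real.exp_pos _).le)
      (summable_oneN F (a * b') (mul_ne_zero ha hb') hy Real.pi_pos)]
    exact ENNReal.ofReal_lt_top
  have hT : ∑' α : Ra, ENNReal.ofReal (normR F (mixedEmbedding F (α : F)) ^ (-ρ)) < ⊤ := by
    rw [← ENNReal.ofReal_tsum_of_nonneg (fun _ => Real.rpow_nonneg (normR_nonneg F _) _)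
      (summable_norm F ha hRa hρ)]
    exact ENNReal.ofReal_lt_top
  -- The products `αβ*` lie in the lattice `𝔞𝔟*`, so the sum over `β*` is bounded by `S` independently
  -- of `α`; what remains is the partial zeta function of `𝔞` at `ρ`.
  have key : ∀ α : Ra, ∑' β : dualIdealSet F b, Ker F y ρ α β ≤
      C * S * ENNReal.ofReal (normR F y ^ (-ρ)) *
        ENNReal.ofReal (normR F (mixedEmbedding F (α : F)) ^ (-ρ)) := by
    intro α
    have hα := isUnit_mixedEmbedding F (hRa0 α)
    have h1 : ∀ β : dualIdealSet F b, Ker F y ρ α β ≤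
        ENNReal.ofReal (Real.exp (-(Real.pi * oneN F (y * mixedEmbedding F ((α : F) * β))))) *
          (C * ENNReal.ofReal (normR F (y * mixedEmbedding F (α : F)) ^ (-ρ))) := by
      intro β
      rw [Ker, lintegral_kernel_scale F (hy.mul hα)]
      refine (mul_le_mul_left (hC' _) _).trans (le_of_eq ?_)
      rw [map_mul, mul_assoc y]
      ring
    have h2 : ∑' β : dualIdealSet F b, ENNReal.ofReal
        (Real.exp (-(Real.pi * oneN F (y * mixedEmbedding F ((α : F) * β))))) ≤ S := by
      refine ENNReal.tsum_comp_le_tsum_of_injective (f := fun β : dualIdealSet F b =>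
        (⟨(α : F) * β, FractionalIdeal.mul_mem_mul (hRa.1 _ α.2) ((hb'' _).2 β.2)⟩ :
          {x : F // x ∈ a * b'})) (fun β β' h => ?_)
        (fun γ : {x : F // x ∈ a * b'} =>
          ENNReal.ofReal (Real.exp (-(Real.pi * oneN F (y * mixedEmbedding F (γ : F))))))
      exact Subtype.ext (mul_left_cancel₀ (hRa0 α) (congrArg Subtype.val h))
    refine (ENNReal.tsum_le_tsum h1).trans ?_
    rw [ENNReal.tsum_mul_right]
    refine (mul_le_mul_left h2 _).trans (le_of_eq ?_)
    rw [normR_mul, Real.mul_rpow (normR_nonneg F _) (normR_nonneg F _),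
      ENNReal.ofReal_mul (Real.rpow_nonneg (normR_nonneg F _) _)]
    ring
  refine (ENNReal.tsum_le_tsum key).trans_lt ?_
  rw [ENNReal.tsum_mul_left]
  exact ENNReal.mul_lt_top (ENNReal.mul_lt_top (ENNReal.mul_lt_top hC hS') ENNReal.ofReal_lt_top) hT

lemma oneN_add_le (u w : RS F) : oneN F w ≤ oneN F u + oneN F (u + w) := by
  have h1 : (∑ v, |w.1 v|) ≤ (∑ v, |u.1 v|) + ∑ v, |(u + w).1 v| := by
    rw [← Finset.sum_add_distrib]
    refine Finset.sum_le_sum fun v _ => ?_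
    have := abs_sub ((u + w).1 v) (u.1 v)
    simp only [Prod.fst_add, Pi.add_apply, add_sub_cancel_left] at this ⊢
    linarith
  have h2 : (∑ v, 2 * ‖w.2 v‖) ≤ (∑ v, 2 * ‖u.2 v‖) + ∑ v, 2 * ‖(u + w).2 v‖ := by
    rw [← Finset.sum_add_distrib]
    refine Finset.sum_le_sum fun v _ => ?_
    have := norm_sub_le ((u + w).2 v) (u.2 v)
    simp only [Prod.snd_add, Pi.add_apply, add_sub_cancel_left] at this ⊢
    linarith
  unfold oneN
  linarith

/-- The Gaussian is summable over translates of ideal lattices. -/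
lemma summable_translate (b : FractionalIdeal (𝓞 F)⁰ F) (hb : b ≠ 0) {t : RS F} (ht : IsUnit t)
    (c : RS F) : Summable fun β : {x : F // x ∈ b} => fR F (t * (c + mixedEmbedding F (β : F))) := by
  obtain ⟨C, hC0, hC⟩ := fR_le_oneN F
  refine Summable.of_nonneg_of_le (fun _ => (fR_pos F _).le) (fun n => ?_)
    ((summable_oneN F b hb ht Real.pi_pos).mul_left (C * Real.exp (Real.pi * oneN F (t * c))))
  refine (hC _).trans ?_
  rw [mul_assoc, ← Real.exp_add, mul_add]
  refine mul_le_mul_of_nonneg_left (Real.exp_le_exp.2 ?_) hC0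
  nlinarith [oneN_add_le F (t * c) (t * mixedEmbedding F (n : F)), Real.pi_pos]

/-- Poisson summation as an inequality between sums of nonnegative terms. -/
lemma poisson_le (b : FractionalIdeal (𝓞 F)⁰ F) (hb : b ≠ 0) {t : RS F} (ht : IsUnit t) (c : RS F) :
    ∑' β : {x : F // x ∈ b}, ENNReal.ofReal (fR F (t * (c + mixedEmbedding F (β : F)))) ≤
      ENNReal.ofReal ((VI F b)⁻¹ * (normR F t)⁻¹) *
        ∑' β : dualIdealSet F b, ENNReal.ofReal (fR F (Ring.inverse t * mixedEmbedding F (β : F))) := by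
  have ht' : IsUnit (Ring.inverse t) := isUnit_ringInverse.2 ht
  have h0 : 0 ≤ (VI F b)⁻¹ * (normR F t)⁻¹ :=
    mul_nonneg (inv_nonneg.2 (VI_pos F hb).le) (inv_nonneg.2 (normR_nonneg F t))
  rw [← ENNReal.ofReal_tsum_of_nonneg (fun _ => (fR_pos F _).le) (summable_translate F b hb ht c),
    ← ENNReal.ofReal_tsum_of_nonneg (fun _ => (fR_pos F _).le) (summable_dual F b hb ht'),
    ← ENNReal.ofReal_mul h0]
  refine ENNReal.ofReal_le_ofReal ?_
  have h := congrArg norm (ideal_poisson F b hb ht c)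
  rw [← Complex.ofReal_tsum, norm_mul, Complex.norm_real, Complex.norm_real, Real.norm_eq_abs,
    Real.norm_eq_abs, abs_of_nonneg h0, abs_of_nonneg (tsum_nonneg fun _ => (fR_pos F _).le)] at h
  rw [h]
  refine mul_le_mul_of_nonneg_left ?_ h0
  have hn : ∀ β : dualIdealSet F b, ‖Complex.exp (2 * Real.pi * Complex.I *
      (TrR F (c * mixedEmbedding F (β : F)) : ℝ)) *
      (fR F (Ring.inverse t * mixedEmbedding F (β : F)) : ℂ)‖ =
      fR F (Ring.inverse t * mixedEmbedding F (β : F)) := by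
    intro β
    rw [norm_mul, Complex.norm_real, Real.norm_eq_abs, abs_of_nonneg (fR_pos F _).le,
      Complex.norm_exp]
    simp
  have h2 := norm_tsum_le_tsum_norm (((summable_dual F b hb ht').congr fun β => (hn β).symm))
  simp only [hn] at h2
  exact h2

/-! ### Termwise integration of the Poisson formula -/

/-- The integrand of `∫ f(tλ) |N(t)|^{2s} d^×t` at the lattice point `λ = αz + β`. -/
def latTerm (x y : RS F) (s : ℂ) (α β : F) (t : RS F) : ℂ :=
  ((fR F (t * (y * mixedEmbedding F α)) *
    fR F (t * (x * mixedEmbedding F α + mixedEmbedding F β)) : ℝ) : ℂ) * (normR F t : ℂ) ^ (2 * s)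

/-- The integrand of the term of the Fourier expansion indexed by `(α, β*)`. -/
def dualTerm (x y : RS F) (s : ℂ) (α β : F) (t : RS F) : ℂ :=
  Complex.exp (2 * Real.pi * Complex.I * (TrR F (x * mixedEmbedding F α * mixedEmbedding F β))) *
    (((fR F (t * (y * mixedEmbedding F α)) * fR F (Ring.inverse t * mixedEmbedding F β) : ℝ) : ℂ) *
      (normR F t : ℂ) ^ (2 * (s - 1 / 2)))

lemma enorm_term {t : RS F} (ht : IsUnit t) {r : ℝ} (hr : 0 ≤ r) (s : ℂ) :
    ‖(r : ℂ) * (normR F t : ℂ) ^ s‖ₑ = ENNReal.ofReal (r * normR F t ^ s.re) := by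
  rw [← ofReal_norm, norm_mul, Complex.norm_real, Real.norm_eq_abs, abs_of_nonneg hr,
    Complex.norm_cpow_eq_rpow_re_of_pos (normR_pos F ht)]

lemma aesm_cpow (s : ℂ) : AEStronglyMeasurable (fun t => (normR F t : ℂ) ^ s) (muT F) :=
  ((Complex.measurable_ofReal.comp (continuous_normR F).measurable).pow_const s).aestronglyMeasurable

lemma aesm_latTerm (x y : RS F) (s : ℂ) (α β : F) :
    AEStronglyMeasurable (latTerm F x y s α β) (muT F) :=
  ((Complex.measurable_ofReal.comp ((measurable_fR_mul F _).mul
    (measurable_fR_mul F _))).aestronglyMeasurable).mul (aesm_cpow F _)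

lemma aesm_dualTerm (x y : RS F) (s : ℂ) (α β : F) :
    AEStronglyMeasurable (dualTerm F x y s α β) (muT F) :=
  (((Complex.measurable_ofReal.comp_aemeasurable ((measurable_fR_mul F _).aemeasurable.mul
    (aemeasurable_fR_inv F _))).aestronglyMeasurable).mul (aesm_cpow F _)).const_mul _

/-- The absolute value of a dual term integrates to `Ker`, since the character has modulus one. -/
lemma lintegral_dualTerm (x y : RS F) (s : ℂ) (α β : F) :
    ∫⁻ t, ‖dualTerm F x y s α β t‖ₑ ∂(muT F) = Ker F y (2 * s.re - 1) α β := by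
  refine lintegral_congr_ae (ae_muT F fun t ht => ?_)
  simp only [dualTerm]
  rw [enorm_mul, enorm_term F ht (mul_nonneg (fR_pos F _).le (fR_pos F _).le)]
  have h1 : ‖Complex.exp (2 * Real.pi * Complex.I *
      (TrR F (x * mixedEmbedding F α * mixedEmbedding F β)))‖ₑ = 1 := by
    rw [← ofReal_norm, Complex.norm_exp]
    simp
  have h2 : (2 * (s - 1 / 2)).re = 2 * s.re - 1 := by simp; ring
  rw [h1, h2, one_mul]

lemma lintegral_latTerm (x y : RS F) (s : ℂ) (α β : F) :
    ∫⁻ t, ‖latTerm F x y s α β t‖ₑ ∂(muT F) =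
      ∫⁻ t, ENNReal.ofReal (fR F (t * (y * mixedEmbedding F α)) * normR F t ^ (2 * s.re)) *
        ENNReal.ofReal (fR F (t * (x * mixedEmbedding F α + mixedEmbedding F β))) ∂(muT F) := by
  refine lintegral_congr_ae (ae_muT F fun t ht => ?_)
  simp only [latTerm]
  rw [enorm_term F ht (mul_nonneg (fR_pos F _).le (fR_pos F _).le),
    ← ENNReal.ofReal_mul (mul_nonneg (fR_pos F _).le (Real.rpow_nonneg (normR_nonneg F _) _))]
  have h2 : (2 * s).re = 2 * s.re := by simp
  rw [h2, mul_right_comm]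

lemma measurable_aux (u : RS F) (ρ : ℝ) :
    Measurable fun t => ENNReal.ofReal (fR F (t * u) * normR F t ^ ρ) :=
  ENNReal.measurable_ofReal.comp ((measurable_fR_mul F _).mul
    ((continuous_normR F).measurable.pow_const ρ))

/-- The sum over the lattice is dominated by the sum over the dual lattice. -/
lemma tsum_latTerm_le (x y : RS F) (s : ℂ) {b : FractionalIdeal (𝓞 F)⁰ F} (hb : b ≠ 0) (α : F) :
    ∑' β : {x : F // x ∈ b}, ∫⁻ t, ‖latTerm F x y s α β t‖ₑ ∂(muT F) ≤
      ENNReal.ofReal (VI F b)⁻¹ * ∑' β : dualIdealSet F b, Ker F y (2 * s.re - 1) α β := by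
  simp only [lintegral_latTerm]
  rw [← lintegral_tsum fun β => ?_]
  rotate_left
  · exact ((measurable_aux F _ _).mul
      (ENNReal.measurable_ofReal.comp (measurable_fR_mul F _))).aemeasurable
  simp only [Ker]
  rw [← lintegral_tsum fun β => ?_, ← lintegral_const_mul' _ _ ENNReal.ofReal_ne_top]
  · refine lintegral_mono_ae (ae_muT F fun t ht => ?_)
    rw [ENNReal.tsum_mul_left]
    refine (mul_le_mul_right (poisson_le F b hb ht _) _).trans (le_of_eq ?_)
    rw [← mul_assoc, ← ENNReal.tsum_mul_left, ← ENNReal.tsum_mul_left]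
    refine tsum_congr fun β => ?_
    have hN := normR_pos F ht
    have hV := inv_nonneg.2 (VI_pos F hb).le
    have hf := fun u => (fR_pos F u).le
    rw [← ENNReal.ofReal_mul (mul_nonneg (hf _) (Real.rpow_nonneg hN.le _)),
      ← ENNReal.ofReal_mul (mul_nonneg (mul_nonneg (hf _) (Real.rpow_nonneg hN.le _))
        (mul_nonneg hV (inv_nonneg.2 hN.le))), ← ENNReal.ofReal_mul hV, Real.rpow_sub_one hN.ne']
    congr 1
    field_simp
  · exact ENNReal.measurable_ofReal.comp_aemeasurable (((measurable_fR_mul F _).aemeasurable.mul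
      (aemeasurable_fR_inv F _)).mul ((continuous_normR F).measurable.pow_const _).aemeasurable)

/-- Poisson summation in `β` for fixed `α`, integrated over `T_F`. -/
lemma tsum_integral_latTerm (x y : RS F) (s : ℂ) {b : FractionalIdeal (𝓞 F)⁰ F} (hb : b ≠ 0) (α : F)
    (hfin : ∑' β : dualIdealSet F b, Ker F y (2 * s.re - 1) α β < ⊤) :
    ∑' β : {x : F // x ∈ b}, ∫ t, latTerm F x y s α β t ∂(muT F) =
      ((VI F b : ℝ) : ℂ)⁻¹ * ∑' β : dualIdealSet F b, ∫ t, dualTerm F x y s α β t ∂(muT F) := by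
  rw [← integral_tsum (fun β : {x : F // x ∈ b} => aesm_latTerm F x y s α β)
      ((tsum_latTerm_le F x y s hb α).trans_lt (ENNReal.mul_lt_top ENNReal.ofReal_lt_top hfin)).ne,
    ← integral_tsum (fun β : dualIdealSet F b => aesm_dualTerm F x y s α β) (by
      simp only [lintegral_dualTerm]; exact hfin.ne), ← integral_const_mul]
  refine integral_congr_ae (ae_muT F fun t ht => ?_)
  simp only [latTerm, dualTerm, Complex.ofReal_mul]
  have hN : (normR F t : ℂ) ≠ 0 := by exact_mod_cast (normR_pos F ht).ne'
  have hV : (VI F b : ℂ) ≠ 0 := by exact_mod_cast (VI_pos F hb).ne'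
  rw [tsum_mul_right, tsum_mul_left, ideal_poisson F b hb ht, ← tsum_mul_left, ← tsum_mul_left,
    ← tsum_mul_right, ← tsum_mul_left]
  refine tsum_congr fun β => ?_
  rw [show 2 * (s - 1 / 2) = 2 * s - 1 by ring, Complex.cpow_sub _ _ hN, Complex.cpow_one]
  push_cast
  field_simp

/-- The dual terms integrate to the terms of the Fourier expansion. -/
lemma integral_dualTerm (x y : RS F) (s : ℂ) (α β : F) :
    ∫ t, dualTerm F x y s α β t ∂(muT F) =
      Complex.exp (2 * Real.pi * Complex.I *
        (TrR F (x * mixedEmbedding F α * mixedEmbedding F β))) *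
        BF F (y * mixedEmbedding F α) (mixedEmbedding F β) (s - 1 / 2) := by
  rw [BF_eq, ← integral_const_mul]; rfl

/-- The lattice terms integrate to the terms of the completed Eisenstein series. -/
lemma integral_latTerm {x y : RS F} (hy : IsUnit y) {z : DS F}
    (hz : z = structureMap F x + structureMap F y * jF F) (s : ℂ) {α β : F}
    (h : normD F (FtoD F α * z + FtoD F β) ≠ 0) :
    ∫ t, latTerm F x y s α β t ∂(muT F) =
      GammaF F (2 * s) * (normD F (FtoD F α * z + FtoD F β) : ℂ) ^ (-(2 * s)) := by
  rw [← gamma_orbit F h]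
  simp only [fD_orbit F hy hz]
  rfl

/-- The integrals of a family of functions are summable when the integrals of the absolute values are. -/
lemma summable_of_lintegral {ι : Type*} {f : ι → RS F → ℂ}
    (h : ∑' i, ∫⁻ t, ‖f i t‖ₑ ∂(muT F) < ⊤) : Summable fun i => ‖∫ t, f i t ∂(muT F)‖ :=
  tsum_enorm_ne_top_iff_summable_norm.1 ((ENNReal.tsum_le_tsum fun i =>
    enorm_integral_le_lintegral_enorm (f i)).trans_lt h).ne

/-! ### Assembling the Fourier expansion -/

lemma cpow_eq_exp {r : ℝ} (hr : 0 < r) (s : ℂ) :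
    (r : ℂ) ^ s = Complex.exp ((Real.log r : ℝ) * s) := by
  rw [Complex.cpow_def_of_ne_zero (by exact_mod_cast hr.ne'), Complex.ofReal_log hr.le]

/-- The constant in front of the lattice points of `𝔟`: with `V = V(𝔞) V(𝔟) |N(y)|`, `V^s` equals
`((N𝔞/N𝔟)|N(y)|)^s d_F^s (N𝔟)^{2s}`. Here `A`, `B`, `Y`, `d` are `N𝔞`, `N𝔟`, `|N(y)|`, `d_F`. -/
lemma const_one {A B Y d : ℝ} (hA : 0 < A) (hB : 0 < B) (hY : 0 < Y) (hd : 0 < d) (s : ℂ) :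
    ((Real.sqrt d * A * (Real.sqrt d * B) * Y : ℝ) : ℂ) ^ s =
      ((A / B * Y : ℝ) : ℂ) ^ s * ((d : ℂ) ^ (2 * s / 2) * (B : ℂ) ^ (2 * s)) := by
  have hs := Real.sqrt_pos.2 hd
  rw [cpow_eq_exp (by positivity), cpow_eq_exp (by positivity), cpow_eq_exp hd, cpow_eq_exp hB,
    ← Complex.exp_add, ← Complex.exp_add, Real.log_mul (by positivity) (by positivity),
    Real.log_mul (by positivity) (by positivity), Real.log_mul (by positivity) (by positivity),
    Real.log_mul (by positivity) (by positivity), Real.log_mul (by positivity) (by positivity),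
    Real.log_div (by positivity) (by positivity), Real.log_sqrt hd.le]
  congr 1
  push_cast
  ring

/-- The constant in front of the terms with `β* = 0`, with the same letters. -/
lemma const_two {A B Y d : ℝ} (hA : 0 < A) (hB : 0 < B) (hY : 0 < Y) (hd : 0 < d) (s : ℂ) :
    ((Real.sqrt d * A * (Real.sqrt d * B) * Y : ℝ) : ℂ) ^ s * ((Real.sqrt d * B : ℝ) : ℂ)⁻¹ *
        (Y : ℂ) ^ (-(2 * (s - 1 / 2))) =
      ((A / B * Y : ℝ) : ℂ) ^ (1 - s) * ((d : ℂ) ^ ((2 * s - 1) / 2) * (A : ℂ) ^ (2 * s - 1)) := by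
  have hs := Real.sqrt_pos.2 hd
  rw [← Complex.cpow_neg_one, cpow_eq_exp (by positivity), cpow_eq_exp (by positivity),
    cpow_eq_exp hY, cpow_eq_exp hd, cpow_eq_exp hA, cpow_eq_exp (r := A / B * Y) (by positivity),
    ← Complex.exp_add, ← Complex.exp_add, ← Complex.exp_add, ← Complex.exp_add,
    Real.log_mul (by positivity) (by positivity),
    Real.log_mul (by positivity) (by positivity), Real.log_mul (by positivity) (by positivity),
    Real.log_mul (by positivity) (by positivity), Real.log_mul (by positivity) (by positivity),
    Real.log_div (by positivity) (by positivity), Real.log_sqrt hd.le]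
  congr 1
  push_cast
  ring

/-- The constant in front of the terms with `β* ≠ 0`; here `P`, `Q`, `Y` are `V(𝔞)`, `V(𝔟)`, `|N(y)|`. -/
lemma const_three {P Q Y : ℝ} (hP : 0 < P) (hQ : 0 < Q) (hY : 0 < Y) (s : ℂ) :
    ((P * Q * Y : ℝ) : ℂ) ^ s * (Q : ℂ)⁻¹ = (P : ℂ) ^ s * (Q : ℂ) ^ (s - 1) * (Y : ℂ) ^ s := by
  rw [← Complex.cpow_neg_one, cpow_eq_exp (by positivity), cpow_eq_exp hQ, cpow_eq_exp hP,
    cpow_eq_exp hQ, cpow_eq_exp hY, ← Complex.exp_add, ← Complex.exp_add, ← Complex.exp_add,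
    Real.log_mul (by positivity) (by positivity), Real.log_mul (by positivity) (by positivity)]
  congr 1
  push_cast
  ring

/-- The completed zeta function with the Gamma factor moved inside the sum. -/
lemma xiF_eq (s : ℂ) (a : FractionalIdeal (𝓞 F)⁰ F) (R : Set F) :
    xiF F s a R = (((dF F : ℝ) : ℂ) ^ (s / 2) *
        (((FractionalIdeal.absNorm a : ℚ) : ℝ) : ℂ) ^ s) *
      ∑' r : R, GammaF F s * (normR F (mixedEmbedding F (r : F)) : ℂ) ^ (-s) := by
  have h : ∀ r : R, ((|Algebra.norm ℚ (r : F)| : ℚ) : ℂ) = (normR F (mixedEmbedding F (r : F)) : ℂ) :=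
    fun r => by rw [normR_mixedEmbedding, Complex.ofReal_ratCast]
  rw [xiF, tsum_mul_left]
  simp only [h, Complex.ofReal_natCast, Complex.ofReal_ratCast]
  ring

/-- The term of the Fourier expansion indexed by the pair `(α, β*)`. -/
def fourierTerm (x y : RS F) (s : ℂ) (p : F × F) : ℂ :=
  Complex.exp (2 * Real.pi * Complex.I *
      (TrR F (x * mixedEmbedding F p.1 * mixedEmbedding F p.2))) *
    BF F (y * mixedEmbedding F p.1) (mixedEmbedding F p.2) (s - 1 / 2)

/-- Fourier terms depend only on the class of `(α, β*)` under `(α, β*) ~ (αε, β*ε⁻¹)`. -/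
lemma fourierTerm_unit (x y : RS F) (s : ℂ) (p q : F × F) (ε : (𝓞 F)ˣ)
    (h1 : q.1 = p.1 * ((ε : 𝓞 F) : F)) (h2 : q.2 = p.2 * (((ε⁻¹ : (𝓞 F)ˣ) : 𝓞 F) : F)) :
    fourierTerm F x y s q = fourierTerm F x y s p := by
  set u := mixedEmbedding F ((ε : 𝓞 F) : F) with hu
  have huu : IsUnit u := isUnit_mixedEmbedding F (unit_ne_zero F ε)
  have hinv : mixedEmbedding F (((ε⁻¹ : (𝓞 F)ˣ) : 𝓞 F) : F) = Ring.inverse u := by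
    have h : u * mixedEmbedding F (((ε⁻¹ : (𝓞 F)ˣ) : 𝓞 F) : F) = 1 := by
      rw [hu, ← map_mul, unit_mul_inv, map_one]
    calc _ = Ring.inverse u * u * mixedEmbedding F (((ε⁻¹ : (𝓞 F)ˣ) : 𝓞 F) : F) := by
          rw [Ring.inverse_mul_cancel u huu, one_mul]
      _ = Ring.inverse u := by rw [mul_assoc, h, mul_one]
  have e1 : mixedEmbedding F q.1 * mixedEmbedding F q.2 =
      mixedEmbedding F p.1 * mixedEmbedding F p.2 := by
    rw [← map_mul, ← map_mul, h1, h2]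
    congr 1
    calc _ = p.1 * p.2 * (((ε : 𝓞 F) : F) * (((ε⁻¹ : (𝓞 F)ˣ) : 𝓞 F) : F)) := by ring
      _ = _ := by rw [unit_mul_inv, mul_one]
  rw [fourierTerm, fourierTerm, mul_assoc x, e1, ← mul_assoc, h1, h2, map_mul, map_mul, hinv,
    ← BF_unit F huu (normR_unit F ε) (y * mixedEmbedding F p.1), mul_left_comm u, mul_comm u,
    mul_comm (Ring.inverse u)]

/-- The Fourier terms are summable over all pairs `(α, β*)`, `β* = 0` included. -/
lemma summable_fourierTerm {a b : FractionalIdeal (𝓞 F)⁰ F} (ha : a ≠ 0) (hb : b ≠ 0) {Ra : Set F}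
    (hRa : IsIdealRepr F a Ra) (x : RS F) {y : RS F} (hy : IsUnit y) {s : ℂ} (hs : 1 < s.re) :
    Summable fun i : Ra × dualIdealSet F b => ‖fourierTerm F x y s (i.1, i.2)‖ := by
  have h := summable_of_lintegral F
    (f := fun (i : Ra × dualIdealSet F b) => dualTerm F x y s i.1 i.2) (by
      simp only [lintegral_dualTerm]
      rw [ENNReal.tsum_prod']
      exact tsum_Ker_lt_top F ha hb hRa hy (by linarith))
  simp only [integral_dualTerm] at h
  exact h

lemma zero_mem_dual (b : FractionalIdeal (𝓞 F)⁰ F) : (0 : F) ∈ dualIdealSet F b :=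
  fun _ _ => ⟨0, by simp⟩

/-- Separating the pairs with `β* = 0` from the others. -/
def splitDual (b : FractionalIdeal (𝓞 F)⁰ F) (Ra : Set F) :
    Ra ⊕ (Ra × dual0 F b) → Ra × dualIdealSet F b :=
  Sum.elim (fun α => (α, ⟨0, zero_mem_dual F b⟩)) (fun i => (i.1, ⟨i.2, i.2.2.1⟩))

lemma splitDual_bijective (b : FractionalIdeal (𝓞 F)⁰ F) (Ra : Set F) :
    Function.Bijective (splitDual F b Ra) := by
  constructor
  · rintro (α | ⟨α, β⟩) (α' | ⟨α', β'⟩) h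
    · have h1 : α = α' := (Prod.ext_iff.1 h).1
      rw [h1]
    · exact absurd (congrArg Subtype.val (Prod.ext_iff.1 h).2).symm β'.2.2
    · exact absurd (congrArg Subtype.val (Prod.ext_iff.1 h).2) β.2.2
    · have h1 : α = α' := (Prod.ext_iff.1 h).1
      have h2 := congrArg Subtype.val (Prod.ext_iff.1 h).2
      have h3 : (β : F) = β' := h2
      rw [h1, Subtype.ext h3]
  · rintro ⟨α, β⟩
    by_cases h : (β : F) = 0
    · exact ⟨Sum.inl α, Prod.ext rfl (Subtype.ext h.symm)⟩
    · exact ⟨Sum.inr (α, ⟨β, β.2, h⟩), rfl⟩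

/-- The terms with `β* = 0` are multiples of the terms of `ξ_F(2s - 1, 𝔞)`. -/
lemma fourierTerm_zero (x : RS F) {y : RS F} (hy : IsUnit y) (s : ℂ) {α : F} (hα : α ≠ 0) :
    fourierTerm F x y s (α, 0) = (normR F y : ℂ) ^ (-(2 * (s - 1 / 2))) *
      (GammaF F (2 * s - 1) * (normR F (mixedEmbedding F α) : ℂ) ^ (-(2 * s - 1))) := by
  rw [fourierTerm]
  simp only [map_zero, mul_zero]
  rw [BF_zero F (hy.mul (isUnit_mixedEmbedding F hα)), cpow_mul_normR,
    show 2 * (s - 1 / 2) = 2 * s - 1 by ring]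
  simp [TrR]
  ring

/-- The sum of all Fourier terms in terms of the zeta function of `𝔞` and of the sum over pairs of
nonzero elements. -/
lemma tsum_fourierTerm {a b : FractionalIdeal (𝓞 F)⁰ F} (ha : a ≠ 0) (hb : b ≠ 0) {Ra : Set F}
    (hRa : IsIdealRepr F a Ra) (x : RS F) {y : RS F} (hy : IsUnit y) {s : ℂ} (hs : 1 < s.re)
    {P : Set (F × F)} (hP : IsPairRepr F a b P) :
    (Summable fun p : P => ‖fourierTerm F x y s p‖) ∧
    ∑' i : Ra × dualIdealSet F b, fourierTerm F x y s (i.1, i.2) =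
      (normR F y : ℂ) ^ (-(2 * (s - 1 / 2))) *
        (∑' α : Ra, GammaF F (2 * s - 1) *
          (normR F (mixedEmbedding F (α : F)) : ℂ) ^ (-(2 * s - 1))) +
        ∑' p : P, fourierTerm F x y s p := by
  have hsum := summable_fourierTerm F ha hb hRa x hy hs
  obtain ⟨e, he⟩ := pairs_equiv F hRa hP
  have hRa0 : ∀ r : Ra, (r : F) ≠ 0 := fun r h => hRa.2.1 (h ▸ r.2)
  have he' : ∀ i, fourierTerm F x y s (e i) = fourierTerm F x y s (i.1, i.2) := by
    intro i
    obtain ⟨ε, h1, h2⟩ := he i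
    exact fourierTerm_unit F x y s (i.1, i.2) _ ε h1 h2
  obtain ⟨E, hE⟩ : ∃ E : Ra ⊕ (Ra × dual0 F b) ≃ Ra × dualIdealSet F b,
      ∀ i, E i = splitDual F b Ra i :=
    ⟨Equiv.ofBijective _ (splitDual_bijective F b Ra), fun _ => rfl⟩
  have hsum' := E.summable_iff.2 hsum
  have hinl : ∀ α : Ra, fourierTerm F x y s ((E (Sum.inl α)).1, (E (Sum.inl α)).2) =
      fourierTerm F x y s (α, 0) := fun α => by rw [hE]; rfl
  have hinr : ∀ i : Ra × dual0 F b,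
      fourierTerm F x y s ((E (Sum.inr i)).1, (E (Sum.inr i)).2) =
        fourierTerm F x y s (e i) := fun i => by
    rw [hE]
    exact (he' i).symm
  have hl : Summable fun α : Ra => ‖fourierTerm F x y s (α, 0)‖ :=
    (hsum'.comp_injective Sum.inl_injective).congr fun α => by
      simp only [Function.comp_apply, hinl]
  have hr : Summable fun i : Ra × dual0 F b => ‖fourierTerm F x y s (e i)‖ :=
    (hsum'.comp_injective Sum.inr_injective).congr fun i => by
      simp only [Function.comp_apply, hinr]
  have hP' : Summable fun p : P => ‖fourierTerm F x y s p‖ :=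
    (e.summable_iff (f := fun p : P => ‖fourierTerm F x y s p‖)).1 hr
  refine ⟨hP', ?_⟩
  have key : ∑' i : Ra × dualIdealSet F b, fourierTerm F x y s (i.1, i.2) =
      ∑' i : Ra ⊕ (Ra × dual0 F b), Sum.elim (fun α : Ra => fourierTerm F x y s (α, 0))
        (fun i => fourierTerm F x y s (e i)) i := by
    refine (E.tsum_eq fun i : Ra × dualIdealSet F b => fourierTerm F x y s (i.1, i.2)).symm.trans
      (tsum_congr ?_)
    rintro (α | i)
    · exact hinl α
    · exact hinr i
  have h0 : ∑' α : Ra, fourierTerm F x y s (α, 0) =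
      (normR F y : ℂ) ^ (-(2 * (s - 1 / 2))) *
        (∑' α : Ra, GammaF F (2 * s - 1) *
          (normR F (mixedEmbedding F (α : F)) : ℂ) ^ (-(2 * s - 1))) := by
    rw [← tsum_mul_left]
    exact tsum_congr fun α => fourierTerm_zero F x hy s (hRa0 α)
  have h1 : ∑' i : Ra × dual0 F b, fourierTerm F x y s (e i) =
      ∑' p : P, fourierTerm F x y s p := e.tsum_eq fun p : P => fourierTerm F x y s p
  have h2 := Summable.tsum_sum (f := Sum.elim (fun α : Ra => fourierTerm F x y s (α, 0))
    (fun i : Ra × dual0 F b => fourierTerm F x y s (e i))) hl.of_norm hr.of_norm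
  exact key.trans (h2.trans (congrArg₂ (· + ·) h0 h1))

/-- The completed Eisenstein series as a sum of Mellin transforms over the chosen orbits. -/
lemma Ehat_eq {a b : FractionalIdeal (𝓞 F)⁰ F} {x y : RS F} (hy : IsUnit y) {z : DS F}
    (hz : z = structureMap F x + structureMap F y * jF F) (V : ℝ)
    {R : Set (DS F)} (hR : IsRepr F (latAB F a b z) R)
    {Ra Rb : Set F} (hRa : IsIdealRepr F a Ra) (hRb : IsIdealRepr F b Rb) (s : ℂ) :
    Ehat F V R s = (V : ℂ) ^ s * ∑' i : Rb ⊕ (Ra × {x : F // x ∈ b}),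
      GammaF F (2 * s) * (normD F (gLat F b z Ra Rb i) : ℂ) ^ (-(2 * s)) := by
  obtain ⟨e, he⟩ := lattice_equiv F hy hz hR hRa hRb
  rw [Ehat, Eis, ← e.tsum_eq, ← tsum_mul_left, ← tsum_mul_left]
  refine tsum_congr fun i => ?_
  obtain ⟨ε, hε⟩ := he i
  rw [← hε, normD_unit_mul, Complex.cpow_neg]
  ring

/-- Absolute convergence of the partial zeta function at complex arguments. -/
lemma summable_zeta {b : FractionalIdeal (𝓞 F)⁰ F} (hb : b ≠ 0) {Rb : Set F}
    (hRb : IsIdealRepr F b Rb) (c : ℂ) {s : ℂ} (hs : 1 < s.re) :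
    Summable fun r : Rb => c * (normR F (mixedEmbedding F (r : F)) : ℂ) ^ (-s) := by
  refine Summable.mul_left _ (Summable.of_norm ?_)
  refine (summable_norm F hb hRb hs).congr fun r => ?_
  have hr : (r : F) ≠ 0 := fun h => hRb.2.1 (h ▸ r.2)
  rw [Complex.norm_cpow_eq_rpow_re_of_pos (normR_pos F (isUnit_mixedEmbedding F hr)), Complex.neg_re]

/-- The contribution of the lattice points `αz + β` with `α ≠ 0`. -/
lemma tsum_lattice {a b : FractionalIdeal (𝓞 F)⁰ F} (ha : a ≠ 0) (hb : b ≠ 0)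
    {x y : RS F} (hy : IsUnit y) {z : DS F}
    (hz : z = structureMap F x + structureMap F y * jF F)
    {Ra : Set F} (hRa : IsIdealRepr F a Ra) {s : ℂ} (hs : 1 < s.re) :
    (Summable fun i : Ra × {x : F // x ∈ b} =>
      GammaF F (2 * s) * (normD F (FtoD F i.1 * z + FtoD F i.2) : ℂ) ^ (-(2 * s))) ∧
    ∑' i : Ra × {x : F // x ∈ b},
      GammaF F (2 * s) * (normD F (FtoD F i.1 * z + FtoD F i.2) : ℂ) ^ (-(2 * s)) =
      ((VI F b : ℝ) : ℂ)⁻¹ * ∑' i : Ra × dualIdealSet F b, fourierTerm F x y s (i.1, i.2) := by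
  have hK := tsum_Ker_lt_top F ha hb hRa hy (ρ := 2 * s.re - 1) (by linarith)
  have hI : ∀ i : Ra × {x : F // x ∈ b}, ∫ t, latTerm F x y s i.1 i.2 t ∂(muT F) =
      GammaF F (2 * s) * (normD F (FtoD F i.1 * z + FtoD F i.2) : ℂ) ^ (-(2 * s)) := fun i =>
    integral_latTerm F hy hz s
      (normD_gLat_ne_zero F (Rb := ∅) hy hz hRa.2.1 (Set.notMem_empty _) (Sum.inr i))
  have hS : Summable fun i : Ra × {x : F // x ∈ b} =>
      ∫ t, latTerm F x y s i.1 i.2 t ∂(muT F) := by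
    refine (summable_of_lintegral F
      (f := fun i : Ra × {x : F // x ∈ b} => latTerm F x y s i.1 i.2) ?_).of_norm
    rw [ENNReal.tsum_prod']
    refine (ENNReal.tsum_le_tsum fun α : Ra => tsum_latTerm_le F x y s hb α).trans_lt ?_
    rw [ENNReal.tsum_mul_left]
    exact ENNReal.mul_lt_top ENNReal.ofReal_lt_top hK
  simp only [← hI]
  refine ⟨hS, ?_⟩
  rw [hS.tsum_prod, (summable_fourierTerm F ha hb hRa x hy hs).of_norm.tsum_prod, ← tsum_mul_left]
  refine tsum_congr fun α => ?_
  rw [tsum_integral_latTerm F x y s hb α ((ENNReal.le_tsum α).trans_lt hK)]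
  simp only [integral_dualTerm]
  rfl


/-- The Fourier expansion of the Eisenstein series of `Λ = 𝔞z + 𝔟`. -/
theorem statement9 (a b : FractionalIdeal (𝓞 F)⁰ F) (ha : a ≠ 0) (hb : b ≠ 0)
    (x y : RS F) (hy : IsUnit y) (z : DS F)
    (hz : z = structureMap F x + structureMap F y * jF F)
    (V : ℝ) (hV0 : 0 ≤ V) (hV : HasVol F (latAB F a b z) V)
    (R : Set (DS F)) (hR : IsRepr F (latAB F a b z) R)
    (Ra Rb : Set F) (hRa : IsIdealRepr F a Ra) (hRb : IsIdealRepr F b Rb)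
    (P : Set (F × F)) (hP : IsPairRepr F a b P) (s : ℂ) (hs : 1 < s.re) :
    Summable (fun p : P =>
      ‖Complex.exp (2 * Real.pi * Complex.I *
          (TrR F (x * NumberField.mixedEmbedding F (p : F × F).1 *
            NumberField.mixedEmbedding F (p : F × F).2))) *
        BF F (y * NumberField.mixedEmbedding F (p : F × F).1)
          (NumberField.mixedEmbedding F (p : F × F).2) (s - 1 / 2)‖) ∧
    Ehat F V R s =
      ((((FractionalIdeal.absNorm a / FractionalIdeal.absNorm b : ℚ) : ℝ) * normR F y : ℝ) : ℂ) ^ s *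
          xiF F (2 * s) b Rb +
        ((((FractionalIdeal.absNorm a / FractionalIdeal.absNorm b : ℚ) : ℝ) * normR F y : ℝ) : ℂ) ^ (1 - s) *
          xiF F (2 * s - 1) a Ra +
        ((Real.sqrt (dF F) * ((FractionalIdeal.absNorm a : ℚ) : ℝ) : ℝ) : ℂ) ^ s *
          ((Real.sqrt (dF F) * ((FractionalIdeal.absNorm b : ℚ) : ℝ) : ℝ) : ℂ) ^ (s - 1) *
          ((normR F y : ℝ) : ℂ) ^ s *
          ∑' p : P,
            Complex.exp (2 * Real.pi * Complex.I *
                (TrR F (x * NumberField.mixedEmbedding F (p : F × F).1 *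
                  NumberField.mixedEmbedding F (p : F × F).2))) *
              BF F (y * NumberField.mixedEmbedding F (p : F × F).1)
                (NumberField.mixedEmbedding F (p : F × F).2) (s - 1 / 2) := by
  have hsum2 := tsum_fourierTerm F ha hb hRa x hy hs hP
  refine ⟨hsum2.1, ?_⟩
  have hlat := tsum_lattice F ha hb hy hz hRa hs
  have hA := absNorm_pos F ha
  have hB := absNorm_pos F hb
  have hY := normR_pos F hy
  have hd : (0 : ℝ) < dF F := by
    exact_mod_cast Nat.pos_of_ne_zero (Int.natAbs_ne_zero.2 (NumberField.discr_ne_zero F))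
  have hzeta : Summable fun β : Rb =>
      GammaF F (2 * s) * (normD F (FtoD F (β : F)) : ℂ) ^ (-(2 * s)) := by
    simp only [normD_FtoD]
    exact summable_zeta F hb hRb _ (by simp; linarith)
  have hsplit := Summable.tsum_sum (f := fun i : Rb ⊕ (Ra × {x : F // x ∈ b}) =>
    GammaF F (2 * s) * (normD F (gLat F b z Ra Rb i) : ℂ) ^ (-(2 * s))) hzeta hlat.1
  simp only [gLat, Sum.elim_inl, Sum.elim_inr, normD_FtoD, hlat.2, hsum2.2] at hsplit
  have hE := Ehat_eq F hy hz V hR hRa hRb s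
  simp only [gLat] at hE
  rw [hE, hsplit, xiF_eq, xiF_eq, Rat.cast_div, covolume F ha hb hy hz hV0 hV]
  have c1 := const_one hA hB hY hd s
  have c2 := const_two hA hB hY hd s
  have c3 := const_three (P := VI F a) (Q := VI F b) (VI_pos F ha) (VI_pos F hb) hY s
  change _ = _ + _ + (VI F a : ℂ) ^ s * (VI F b : ℂ) ^ (s - 1) * (normR F y : ℂ) ^ s *
    ∑' p : P, fourierTerm F x y s p
  change ((VI F a * VI F b * normR F y : ℝ) : ℂ) ^ s = _ at c1
  change ((VI F a * VI F b * normR F y : ℝ) : ℂ) ^ s * (VI F b : ℂ)⁻¹ * _ = _ at c2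
  -- The three groups of terms match with the constants `c1`, `c2`, `c3`.
  linear_combination (∑' r : Rb, GammaF F (2 * s) * (normR F (mixedEmbedding F (r : F)) : ℂ) ^ (-(2 * s))) * c1 + (∑' α : Ra, GammaF F (2 * s - 1) * (normR F (mixedEmbedding F (α : F)) : ℂ) ^ (-(2 * s - 1))) * c2 + (∑' p : P, fourierTerm F x y s p) * c3

end Hecke
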